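/- arXiv:2509.02300 — 3 statements merged into one kernel-verified Lean document; each statement's English description precedes it below -/
import Mathlib

section
/- Let Y be a finite group, X₁ ⊴ Y a normal subgroup and X₂ ≤ Y a subgroup with Y = X₁X₂. Assume θ₁ ∈ Irr(X₁) is Y-invariant (i.e. fixed by the conjugation action of Y on Irr(X₁)), and θ₂ ∈ Irr(X₂) is such that the restriction of θ₂ to X₁ ∩ X₂ is irreducible and coincides with the restriction of θ₁ to X₁ ∩ X₂. Then there exists a unique character θ ∈ Irr(Y) which extends both θ₁ and θ₂. -/
open scoped Pointwise

noncomputable section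

/-- The field `ℚ^ab`, the maximal abelian extension of `ℚ`, realized inside `ℂ`
as the subfield generated by all roots of unity. -/
def Qab : IntermediateField ℚ ℂ :=
  IntermediateField.adjoin ℚ {x : ℂ | ∃ n : ℕ, 0 < n ∧ x ^ n = 1}

/-- `χ : G → ℚ^ab` is an irreducible character of `G`, i.e. the character of a
simple (finite-dimensional) representation of `G` over `ℚ^ab`; by Brauer's theorem
`ℚ^ab` is a splitting field for every finite group, so this set is `Irr(G)`. -/
def IsIrrChar (G : Type) [Group G] (χ : G → ↥Qab) : Prop :=
  ∃ V : FDRep (↥Qab) G, CategoryTheory.Simple V ∧ FDRep.character V = χ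

/-- `χ ∈ Irr_{ℓ'}(G)`: an irreducible character whose degree `χ(1)` is coprime to `ℓ`. -/
def IsIrrCharL' (ℓ : ℕ) (G : Type) [Group G] (χ : G → ↥Qab) : Prop :=
  ∃ V : FDRep (↥Qab) G, CategoryTheory.Simple V ∧ FDRep.character V = χ ∧
    Nat.Coprime (Module.finrank (↥Qab) V) ℓ

namespace GluingAux


/-- Elementary form of irreducibility. -/
def Irr {K G V : Type*} [Field K] [Group G] [AddCommGroup V] [Module K V]
    (ρ : Representation K G V) : Prop :=
  (∃ v : V, v ≠ 0) ∧ ∀ W : Submodule K V, (∀ g, ∀ w ∈ W, ρ g w ∈ W) → W = ⊥ ∨ W = ⊤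

/-- All self-intertwining maps are scalars. -/
def Spl {K G V : Type*} [Field K] [Group G] [AddCommGroup V] [Module K V]
    (ρ : Representation K G V) : Prop :=
  ∀ f : V →ₗ[K] V, (∀ g v, f (ρ g v) = ρ g (f v)) → ∃ c : K, ∀ v, f v = c • v

/-- Quasi-elementary groups. -/
def QE (G : Type*) [Group G] : Prop :=
  ∃ p : ℕ, p.Prime ∧ ∃ C : Subgroup G, C.Normal ∧ IsCyclic C ∧ ∀ g : G, ∃ n : ℕ, g ^ (p ^ n) ∈ C

theorem QE.of_injective {G T : Type*} [Group G] [Group T] (f : T →* G)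
    (hf : Function.Injective f) (h : QE G) : QE T := by
  obtain ⟨p, hp, C, hC, hcyc, hpow⟩ := h
  refine ⟨p, hp, C.comap f, inferInstance, ?_, ?_⟩
  · let φ : C.comap f →* C := f.subgroupComap C
    refine isCyclic_of_injective φ ?_
    intro a b hab
    apply Subtype.ext
    apply hf
    exact congrArg Subtype.val hab
  · intro g
    obtain ⟨n, hn⟩ := hpow (f g)
    exact ⟨n, by simpa [Subgroup.mem_comap] using hn⟩

section
variable {K : Type*} [Field K]

theorem exists_eigenvector (hK : ∀ n : ℕ, 0 < n → ∃ ζ : K, IsPrimitiveRoot ζ n)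
    {V : Type*} [AddCommGroup V] [Module K V] [FiniteDimensional K V]
    (hV : ∃ v : V, v ≠ 0) (f : Module.End K V) (n : ℕ) (hn : 0 < n) (hf : f ^ n = 1) :
    ∃ μ : K, ∃ v : V, v ≠ 0 ∧ f v = μ • v := by
  have : Nontrivial V := let ⟨v, hv⟩ := hV; ⟨v, 0, hv⟩
  obtain ⟨ζ, hζ⟩ := hK n hn
  have hs := Polynomial.X_pow_sub_one_splits hζ
  have hdvd : minpoly K f ∣ Polynomial.X ^ n - 1 := by
    apply minpoly.dvd
    simp [hf]
  have hne : (Polynomial.X ^ n - 1 : Polynomial K) ≠ 0 := Polynomial.X_pow_sub_C_ne_zero hn 1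
  have hs' : (minpoly K f).Splits := hs.of_dvd hne hdvd
  obtain ⟨μ, hμ⟩ := hs'.exists_eval_eq_zero
    (minpoly.degree_pos (Algebra.IsIntegral.isIntegral f)).ne'
  have := Module.End.hasEigenvalue_of_isRoot hμ
  obtain ⟨v, hv⟩ := this.exists_hasEigenvector
  exact ⟨μ, v, hv.2, hv.apply_eq_smul⟩

theorem clifford {G V : Type*} [Group G] [AddCommGroup V] [Module K V] [FiniteDimensional K V]
    (ρ : Representation K G V) (hρ : Irr ρ) (a : G)
    (ha : ∀ g, ∃ (k : ℕ) (z : K), ρ (g⁻¹ * a * g) = z • ρ a ^ k)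
    (hns : ¬ ∃ c : K, ∀ v, ρ a v = c • v)
    (μ : K) (v₀ : V) (hv₀ : v₀ ≠ 0) (hμ : ρ a v₀ = μ • v₀)
    (ih : ∀ (T : Subgroup G) (W : Submodule K V)
      (hW : ∀ g : T, ∀ w ∈ W, ρ g w ∈ W),
      Module.finrank K W < Module.finrank K V →
      Irr (Subrepresentation.toRepresentation (ρ := ρ.comp T.subtype) ⟨W, fun g w hw => hW g w hw⟩) →
      Spl (Subrepresentation.toRepresentation (ρ := ρ.comp T.subtype) ⟨W, fun g w hw => hW g w hw⟩)) :
    Spl ρ := by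
  -- eigenspaces are permuted
  have hperm : ∀ g, ∀ ν : K, ∃ ν' : K, ∀ v ∈ Module.End.eigenspace (ρ a) ν,
      ρ g v ∈ Module.End.eigenspace (ρ a) ν' := by
    intro g ν
    obtain ⟨k, z, hk⟩ := ha g
    refine ⟨z * ν ^ k, fun v hv => ?_⟩
    rw [Module.End.mem_eigenspace_iff] at hv ⊢
    have h1 : ρ a (ρ g v) = ρ g (ρ (g⁻¹ * a * g) v) := by
      rw [← Module.End.mul_apply, ← Module.End.mul_apply, ← map_mul, ← map_mul]
      congr 2; group
    have h2 : ∀ k : ℕ, (ρ a ^ k) v = ν ^ k • v := by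
      intro k
      induction k with
      | zero => simp
      | succ k ih => rw [pow_succ, Module.End.mul_apply, hv, map_smul, ih, smul_smul, pow_succ, mul_comm]
    rw [h1, hk, LinearMap.smul_apply, h2, map_smul, map_smul, smul_smul]
  set E := Module.End.eigenspace (ρ a) μ with hE
  have hEv₀ : v₀ ∈ E := Module.End.mem_eigenspace_iff.2 hμ
  have hinv : ∀ g v, ρ g⁻¹ (ρ g v) = v := by
    intro g v; rw [← Module.End.mul_apply, ← map_mul]; simp
  have hinv' : ∀ g v, ρ g (ρ g⁻¹ v) = v := by
    intro g v; rw [← Module.End.mul_apply, ← map_mul]; simp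
  have hstab : ∀ g : G, ∀ v ∈ E, v ≠ 0 → ρ g v ∈ E → ∀ w ∈ E, ρ g w ∈ E := by
    intro g v hv hv0 hgv w hw
    obtain ⟨ν, hν⟩ := hperm g μ
    have h1 := hν v hv
    rw [Module.End.mem_eigenspace_iff] at h1
    rw [hE, Module.End.mem_eigenspace_iff] at hgv
    have hne : ρ g v ≠ 0 := fun h => hv0 (by rw [← hinv g v, h, map_zero])
    have : ν = μ := smul_left_injective K hne (h1.symm.trans hgv)
    rw [hE, ← this]; exact hν w hw
  let T : Subgroup G :=
    { carrier := {g | ∀ v ∈ E, ρ g v ∈ E}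
      one_mem' := by intro v hv; simpa using hv
      mul_mem' := by
        intro g h hg hh v hv
        rw [map_mul, Module.End.mul_apply]; exact hg _ (hh _ hv)
      inv_mem' := by
        intro g hg
        obtain ⟨ν, hν⟩ := hperm g⁻¹ μ
        -- surjectivity by finite dimension
        have hmap : E.map (ρ g) = E := by
          apply Submodule.eq_of_le_of_finrank_eq
          · rintro _ ⟨v, hv, rfl⟩; exact hg v hv
          · have hinj : Function.Injective (ρ g) := fun x y hxy => by
              rw [← hinv g x, ← hinv g y, hxy]
            exact (Submodule.equivMapOfInjective (ρ g) hinj E).finrank_eq.symm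
        intro v hv
        rw [← hmap] at hv
        obtain ⟨w, hw, rfl⟩ := hv
        rw [hinv]; exact hw }
  have hET : ∀ g : T, ∀ w ∈ E, ρ g w ∈ E := fun g w hw => g.2 w hw
  have hEtop : E ≠ ⊤ := by
    intro h
    apply hns
    refine ⟨μ, fun v => ?_⟩
    have : v ∈ E := by rw [h]; trivial
    exact Module.End.mem_eigenspace_iff.1 this
  have hlt : Module.finrank K E < Module.finrank K V := Submodule.finrank_lt hEtop
  have hirr : Irr (Subrepresentation.toRepresentation (ρ := ρ.comp T.subtype)
      ⟨E, fun g w hw => hET g w hw⟩) := by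
    refine ⟨⟨⟨v₀, hEv₀⟩, fun h => hv₀ (congrArg Subtype.val h)⟩, ?_⟩
    intro W hW
    by_cases hb : W = ⊥
    · exact Or.inl hb
    right
    obtain ⟨w₁, hw₁, hw₁0⟩ := Submodule.exists_mem_ne_zero_of_ne_bot hb
    let W' : Submodule K V := W.map E.subtype
    let U : Submodule K V := ⨆ g : G, W'.map (ρ g)
    have hU : U = ⊤ := by
      refine (hρ.2 U ?_).resolve_left ?_
      · intro g w hw
        have : U ≤ U.comap (ρ g) := by
          refine iSup_le fun h => ?_
          rintro _ ⟨x, hx, rfl⟩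
          refine Submodule.mem_iSup_of_mem (g * h) ?_
          exact ⟨x, hx, by rw [map_mul]; rfl⟩
        exact this hw
      · intro h
        have : (w₁ : V) ∈ U := Submodule.mem_iSup_of_mem 1 ⟨w₁, ⟨w₁, hw₁, rfl⟩, by simp⟩
        rw [h, Submodule.mem_bot] at this
        exact hw₁0 (Subtype.ext this)
    let R : Submodule K V := ⨆ ν : K, ⨆ _ : ν ≠ μ, Module.End.eigenspace (ρ a) ν
    have hdis : Disjoint E R := (Module.End.eigenspaces_iSupIndep (ρ a)) μ
    have hle : U ≤ W' ⊔ R := by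
      refine iSup_le fun g => ?_
      rintro _ ⟨_, ⟨x, hx, rfl⟩, rfl⟩
      by_cases hg : g ∈ T
      · exact Submodule.mem_sup_left ⟨⟨ρ g x, hg x x.2⟩, hW ⟨g, hg⟩ x hx, rfl⟩
      · obtain ⟨ν, hν⟩ := hperm g μ
        have hne : ν ≠ μ := by rintro rfl; exact hg hν
        exact Submodule.mem_sup_right
          (Submodule.mem_iSup_of_mem ν (Submodule.mem_iSup_of_mem hne (hν x x.2)))
    rw [eq_top_iff]
    rintro ⟨x, hx⟩ -
    have hx' : x ∈ W' ⊔ R := hle (by rw [hU]; trivial)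
    obtain ⟨y, hy, r, hr, hyr⟩ := Submodule.mem_sup.1 hx'
    obtain ⟨y', hy', rfl⟩ := hy
    have hrE : r ∈ E := by
      have : r = x - y' := by rw [← hyr]; simp
      rw [this]; exact E.sub_mem hx y'.2
    have hr0 : r = 0 := Submodule.disjoint_def.1 hdis r hrE hr
    have : (⟨x, hx⟩ : E) = y' := Subtype.ext (by
      have h1 := hyr
      rw [hr0, add_zero] at h1
      exact h1.symm)
    rw [this]; exact hy'
  have hspl := ih T E hET hlt hirr
  intro f hf
  have hfE : ∀ v ∈ E, f v ∈ E := by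
    intro v hv
    rw [hE, Module.End.mem_eigenspace_iff] at hv ⊢
    rw [← hf, hv, map_smul]
  obtain ⟨c, hc⟩ := hspl (f.restrict hfE) (by
    rintro g ⟨v, hv⟩
    exact Subtype.ext (hf g v))
  refine ⟨c, ?_⟩
  have hk : LinearMap.ker (f - c • LinearMap.id) = ⊤ := by
    refine (hρ.2 _ ?_).resolve_left ?_
    · intro g w hw
      simp only [LinearMap.mem_ker, LinearMap.sub_apply, LinearMap.smul_apply,
        LinearMap.id_apply, sub_eq_zero] at hw ⊢
      rw [hf, hw, map_smul]
    · intro h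
      have : v₀ ∈ LinearMap.ker (f - c • LinearMap.id) := by
        have := congrArg Subtype.val (hc ⟨v₀, hEv₀⟩)
        simp only [LinearMap.mem_ker, LinearMap.sub_apply, LinearMap.smul_apply,
          LinearMap.id_apply, sub_eq_zero]
        exact this
      rw [h] at this
      exact hv₀ this
  intro v
  have : v ∈ LinearMap.ker (f - c • LinearMap.id) := by rw [hk]; trivial
  simpa [sub_eq_zero] using this

theorem QE.spl (hK : ∀ n : ℕ, 0 < n → ∃ ζ : K, IsPrimitiveRoot ζ n) (n : ℕ) :
    ∀ (G V : Type) [Group G] [Finite G] [AddCommGroup V] [Module K V] [FiniteDimensional K V]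
      (ρ : Representation K G V), QE G → Irr ρ → Module.finrank K V = n → Spl ρ := by
  induction n using Nat.strong_induction_on with
  | _ n ih =>
  intro G V _ _ _ _ _ ρ hG hρ hn
  have key : ∀ a : G, (∀ g, ∃ (k : ℕ) (z : K), ρ (g⁻¹ * a * g) = z • ρ a ^ k) →
      (¬ ∃ c : K, ∀ v, ρ a v = c • v) → Spl ρ := by
    intro a ha hns
    obtain ⟨μ, v, hv, hμ⟩ := exists_eigenvector hK hρ.1 (ρ a) (orderOf a) (orderOf_pos a)
      (by rw [← map_pow, pow_orderOf_eq_one, map_one])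
    refine clifford ρ hρ a ha hns μ v hv hμ ?_
    intro T W hW hlt hirr
    exact ih _ (hn ▸ hlt) T W _ (hG.of_injective T.subtype T.subtype_injective) hirr rfl
  by_contra hspl
  obtain ⟨p, hp, C, hC, hcyc, hpow⟩ := hG
  -- the scalar subgroup
  let Z : Subgroup G :=
    { carrier := {g | ∃ c : K, ∀ v, ρ g v = c • v}
      one_mem' := ⟨1, by simp⟩
      mul_mem' := by
        rintro g h ⟨c, hc⟩ ⟨d, hd⟩
        exact ⟨c * d, fun v => by
          rw [map_mul, Module.End.mul_apply, hd, hc, smul_smul]⟩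
      inv_mem' := by
        rintro g ⟨c, hc⟩
        refine ⟨c⁻¹, fun v => ?_⟩
        have h1 : ρ g (ρ g⁻¹ v) = v := by rw [← Module.End.mul_apply, ← map_mul]; simp
        rw [hc] at h1
        have hc0 : c ≠ 0 := by
          rintro rfl
          obtain ⟨v, hv⟩ := hρ.1
          apply hv
          have h1 : ρ g⁻¹ (ρ g v) = v := by rw [← Module.End.mul_apply, ← map_mul]; simp
          rw [← h1, hc]; simp
        conv_rhs => rw [← h1]
        rw [smul_smul, inv_mul_cancel₀ hc0, one_smul] }
  have hZn : Z.Normal := by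
    constructor
    rintro z ⟨c, hc⟩ g
    refine ⟨c, fun v => ?_⟩
    rw [map_mul, map_mul, Module.End.mul_apply, Module.End.mul_apply, hc, map_smul,
      ← Module.End.mul_apply, ← map_mul]
    simp
  have hCZ : C ≤ Z := by
    obtain ⟨⟨c, hcC⟩, hgen⟩ := hcyc.exists_generator
    have hcZ : c ∈ Z := by
      by_contra hcZ
      refine hspl (key c ?_ hcZ)
      intro g
      have hmem : g⁻¹ * c * g ∈ C := by simpa using hC.conj_mem c hcC g⁻¹
      obtain ⟨k, hk⟩ := mem_powers_iff_mem_zpowers.2 (hgen ⟨_, hmem⟩)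
      refine ⟨k, 1, ?_⟩
      have : c ^ k = g⁻¹ * c * g := by simpa using congrArg Subtype.val hk
      rw [← this, map_pow, one_smul]
    intro x hx
    obtain ⟨k, hk⟩ := hgen ⟨x, hx⟩
    have : c ^ k = x := by simpa using congrArg Subtype.val hk
    rw [← this]; exact Z.zpow_mem hcZ k
  have hZtop : Z = ⊤ := by
    by_contra hne
    have := Fact.mk hp
    have hpg : IsPGroup p (G ⧸ Z) := by
      intro x
      induction x using QuotientGroup.induction_on with
      | H g =>
        obtain ⟨n, hn⟩ := hpow g
        refine ⟨n, ?_⟩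
        rw [← QuotientGroup.mk_pow, QuotientGroup.eq_one_iff]
        exact hCZ hn
    have : Nontrivial (G ⧸ Z) := QuotientGroup.nontrivial_iff.2 hne
    have := hpg.center_nontrivial
    obtain ⟨⟨x, hx⟩, hx1⟩ := exists_ne (1 : Subgroup.center (G ⧸ Z))
    obtain ⟨a, rfl⟩ := QuotientGroup.mk_surjective x
    have haZ : a ∉ Z := fun h => hx1 (Subtype.ext ((QuotientGroup.eq_one_iff a).2 h))
    refine hspl (key a ?_ haZ)
    intro g
    have hcomm := (Subgroup.mem_center_iff.1 hx) (g : G ⧸ Z)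
    rw [← QuotientGroup.mk_mul, ← QuotientGroup.mk_mul, eq_comm, QuotientGroup.eq] at hcomm
    obtain ⟨c, hc⟩ := Z.inv_mem hcomm
    have hc' : ρ (g⁻¹ * a * g) = c • ρ a ^ 1 := by
      have hh : g⁻¹ * a * g = a * (((a * g)⁻¹ * (g * a))⁻¹) := by group
      ext v
      rw [hh, map_mul, Module.End.mul_apply, hc]
      simp
    exact ⟨1, c, hc'⟩
  apply hspl
  intro f _
  obtain ⟨v, hv⟩ := hρ.1
  have hspan : (K ∙ v) = ⊤ := by
    refine (hρ.2 _ ?_).resolve_left (by simpa using hv)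
    intro g w hw
    have : g ∈ Z := by rw [hZtop]; trivial
    obtain ⟨c, hc⟩ := this
    rw [hc]; exact Submodule.smul_mem _ _ hw
  have hall : ∀ w, ∃ c : K, c • v = w := fun w =>
    Submodule.mem_span_singleton.1 (by rw [hspan]; trivial)
  obtain ⟨c, hc⟩ := hall (f v)
  refine ⟨c, fun w => ?_⟩
  obtain ⟨d, rfl⟩ := hall w
  rw [map_smul, ← hc, smul_comm]
end

open Subgroup in
theorem exists_QE {G : Type*} [Group G] [Finite G] (g : G) (p : ℕ) (hp : p.Prime) :
    ∃ H : Subgroup G, QE H ∧ ¬ p ∣ Nat.card {x : G ⧸ H // g • x = x} := by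
  classical
  have := Fact.mk hp
  obtain ⟨a, m, hm, ho⟩ := Nat.exists_eq_pow_mul_and_not_dvd (orderOf_pos g).ne' p hp.ne_one
  set c := g ^ (p ^ a) with hc
  have hcm : c ^ m = 1 := by rw [hc, ← pow_mul, ← ho, pow_orderOf_eq_one]
  let C : Subgroup G := zpowers c
  have hcC : c ∈ C := mem_zpowers c
  let N : Subgroup G := normalizer (C : Set G)
  have hCN : C ≤ N := le_normalizer
  have hNC : ∀ n ∈ N, ∀ x ∈ C, n * x * n⁻¹ ∈ C := fun n hn x hx => (mem_normalizer_iff.1 hn x).1 hx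
  have hNC' : ∀ n ∈ N, ∀ x ∈ C, n⁻¹ * x * n ∈ C := fun n hn x hx => by
    simpa using hNC n⁻¹ (N.inv_mem hn) x hx
  have hgN : g ∈ N := by
    rw [mem_normalizer_iff]
    have : ∀ x ∈ C, g * x * g⁻¹ = x := by
      rintro _ ⟨k, rfl⟩
      have : Commute g (c ^ k) := (Commute.refl g).pow_right _ |>.zpow_right _
      simp only
      rw [this.eq, mul_inv_cancel_right]
    intro x
    refine ⟨fun h => by rw [this x h]; exact h, fun h => ?_⟩
    have h2 : g * (g * x * g⁻¹) * g⁻¹ = g * x * g⁻¹ := this _ h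
    have h3 : g * x * g⁻¹ = x := by
      have := congrArg (fun y => g⁻¹ * y * g) h2
      simpa [mul_assoc] using this
    rwa [h3] at h
  let C' : Subgroup N := C.subgroupOf N
  have : C'.Normal := by
    constructor
    intro x hx n
    exact hNC n n.2 x hx
  let P : Sylow p (N ⧸ C') := default
  let H' : Subgroup N := (P : Subgroup (N ⧸ C')).comap (QuotientGroup.mk' C')
  let H : Subgroup G := H'.map N.subtype
  have hHN : H ≤ N := by rintro _ ⟨n, _, rfl⟩; exact n.2
  have hCsubH : C' ≤ H' := by
    intro x hx
    change QuotientGroup.mk' C' x ∈ P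
    have : QuotientGroup.mk' C' x = 1 := (QuotientGroup.eq_one_iff x).2 hx
    rw [this]; exact one_mem _
  have hmemH : ∀ n : N, (n : G) ∈ H ↔ n ∈ H' := by
    intro n
    constructor
    · rintro ⟨n', hn', h⟩
      have : n' = n := Subtype.ext h
      rwa [← this]
    · intro h; exact ⟨n, h, rfl⟩
  have hpow : ∀ h ∈ H, ∃ k : ℕ, h ^ (p ^ k) ∈ C := by
    rintro _ ⟨n, hn, rfl⟩
    obtain ⟨k, hk⟩ := P.isPGroup' ⟨QuotientGroup.mk' C' n, hn⟩
    refine ⟨k, ?_⟩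
    have h1 : (QuotientGroup.mk' C' n) ^ (p ^ k) = 1 := congrArg Subtype.val hk
    rw [← map_pow] at h1
    exact (QuotientGroup.eq_one_iff (n ^ (p ^ k))).1 h1
  have hxN : ∀ x : G, x⁻¹ * g * x ∈ H → x ∈ N := by
    intro x hx
    set y := x⁻¹ * c * x with hy
    have hyp : ∀ k : ℕ, (x⁻¹ * g * x) ^ k = x⁻¹ * g ^ k * x := by
      intro k
      have := conj_pow (i := k) (a := x⁻¹) (b := g)
      simpa using this
    have hyH : y ∈ H := by
      rw [hy, hc, ← hyp]; exact H.pow_mem hx _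
    have hym : y ^ m = 1 := by
      have := conj_pow (i := m) (a := x⁻¹) (b := c)
      rw [inv_inv, hcm] at this
      rw [hy, this]; simp
    obtain ⟨k, hk⟩ := hpow y hyH
    have hyC : y ∈ C := by
      have hcop : Nat.Coprime (p ^ k) m := Nat.Coprime.pow_left _ ((Nat.Prime.coprime_iff_not_dvd hp).2 hm)
      have hb := Nat.gcd_eq_gcd_ab (p ^ k) m
      rw [hcop.gcd_eq_one] at hb
      have : y = (y ^ (p ^ k)) ^ (Nat.gcdA (p ^ k) m) * (y ^ m) ^ (Nat.gcdB (p ^ k) m) := by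
        rw [← zpow_natCast, ← zpow_natCast, ← zpow_mul, ← zpow_mul, ← zpow_add, ← hb]; simp
      rw [this, hym, one_zpow, mul_one]
      exact C.zpow_mem hk _
    have : x⁻¹ ∈ N := by
      apply mem_normalizer_fintype
      rintro _ ⟨j, rfl⟩
      have h1 : x⁻¹ * c ^ j * x⁻¹⁻¹ = y ^ j := by
        rw [hy]
        have := conj_zpow (i := j) (a := x⁻¹) (b := c)
        rw [← this, inv_inv]
      change x⁻¹ * c ^ j * x⁻¹⁻¹ ∈ C
      rw [h1]; exact C.zpow_mem hyC j
    simpa using N.inv_mem this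
  refine ⟨H, ⟨p, hp, C.subgroupOf H, ?_, ?_, ?_⟩, ?_⟩
  · constructor
    intro x hx n
    exact hNC n (hHN n.2) x hx
  · let φ : C.subgroupOf H →* C := H.subtype.subgroupComap C
    refine isCyclic_of_injective φ ?_
    intro a b hab
    apply Subtype.ext
    apply Subtype.ext
    exact congrArg (fun t : C => (t : G)) hab
  · intro h
    obtain ⟨k, hk⟩ := hpow h h.2
    exact ⟨k, hk⟩
  · let gN : N := ⟨g, hgN⟩
    have hact : ∀ q : N ⧸ H', gN ^ (p ^ a) • q = q := by
      intro q
      obtain ⟨n, rfl⟩ := QuotientGroup.mk_surjective q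
      rw [MulAction.Quotient.smul_mk, eq_comm, QuotientGroup.eq]
      apply hCsubH
      have := hNC' n n.2 c hcC
      simpa [C', mem_subgroupOf, smul_eq_mul, mul_assoc, gN] using this
    let f : Function.End (N ⧸ H') := fun q => gN • q
    have := Fintype.ofFinite (N ⧸ H')
    have hcong := Equiv.Perm.card_fixedPoints_modEq (α := N ⧸ H') (f := f) (p := p) (n := a) (by
        have : ∀ k : ℕ, f ^ k
            = (fun q => gN ^ k • q : Function.End (N ⧸ H')) := by
          intro k
          induction k with
          | zero => funext q; simp; rfl
          | succ k ih =>
            rw [pow_succ, ih]; funext q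
            change gN ^ k • gN • q = _
            rw [smul_smul, pow_succ]
        rw [this]
        funext q
        exact hact q)
    have hbij : Nat.card {q : N ⧸ H' // gN • q = q} = Nat.card {x : G ⧸ H // g • x = x} := by
      let F : N ⧸ H' → G ⧸ H := Quotient.lift (fun n : N => ((n : G) : G ⧸ H)) (by
        intro n n' h
        have h1 : n⁻¹ * n' ∈ H' := QuotientGroup.leftRel_apply.1 h
        rw [QuotientGroup.eq]
        exact (hmemH (n⁻¹ * n')).2 h1)
      have hF : ∀ n : N, F (n : N ⧸ H') = ((n : G) : G ⧸ H) := fun n => rfl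
      have hFinj : Function.Injective F := by
        intro q q'
        obtain ⟨n, rfl⟩ := QuotientGroup.mk_surjective q
        obtain ⟨n', rfl⟩ := QuotientGroup.mk_surjective q'
        rw [hF, hF, QuotientGroup.eq, QuotientGroup.eq]
        exact (hmemH (n⁻¹ * n')).1
      have hFg : ∀ q, F (gN • q) = g • F q := by
        intro q
        obtain ⟨n, rfl⟩ := QuotientGroup.mk_surjective q
        rfl
      refine Nat.card_congr (Equiv.ofBijective
        (fun q => ⟨F q.1, by rw [← hFg, q.2]⟩) ⟨?_, ?_⟩)
      · intro q q' h
        exact Subtype.ext (hFinj (congrArg Subtype.val h))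
      · rintro ⟨x, hx⟩
        obtain ⟨x, rfl⟩ := QuotientGroup.mk_surjective x
        have hxn : x ∈ N := by
          apply hxN
          rw [MulAction.Quotient.smul_mk, eq_comm, QuotientGroup.eq] at hx
          simpa [mul_assoc] using hx
        have h2 : F ((⟨x, hxn⟩ : N) : N ⧸ H') = (x : G ⧸ H) := rfl
        refine ⟨⟨((⟨x, hxn⟩ : N) : N ⧸ H'), hFinj ?_⟩, Subtype.ext h2⟩
        rw [hFg, h2, hx]
    rw [← hbij]
    intro hdvd
    have hidx : ¬ p ∣ Nat.card (N ⧸ H') := by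
      have h1 : H'.index = (P : Subgroup (N ⧸ C')).index :=
        index_comap_of_surjective _ (QuotientGroup.mk'_surjective C')
      change ¬ p ∣ H'.index
      rw [h1]; exact P.not_dvd_index
    apply hidx
    rw [← Nat.card_eq_fintype_card, ← Nat.card_eq_fintype_card] at hcong
    exact (hcong.dvd_iff dvd_rfl).2 hdvd

/-- Fixed point count of `g` on `S`. -/
noncomputable def fx (G S : Type) [Group G] [MulAction G S] (g : G) : ℤ := (Nat.card {s : S // g • s = s} : ℤ)

/-- Virtual permutation characters with quasi-elementary stabilizers. -/
def permRing (G : Type) [Group G] : AddSubgroup (G → ℤ) :=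
  AddSubgroup.closure {f | ∃ (S : Type) (_ : MulAction G S) (_ : Finite S),
    (∀ s : S, QE (MulAction.stabilizer G s)) ∧ f = fx G S}

theorem permRing_mul (G : Type) [Group G] {f h : G → ℤ} (hf : f ∈ permRing G)
    (hh : h ∈ permRing G) : f * h ∈ permRing G := by
  induction hf using AddSubgroup.closure_induction with
  | zero => rw [zero_mul]; exact zero_mem _
  | add a b _ _ ha hb => rw [add_mul]; exact add_mem ha hb
  | neg a _ ha => rw [neg_mul]; exact neg_mem ha
  | mem f hf =>
    induction hh using AddSubgroup.closure_induction with
    | zero => rw [mul_zero]; exact zero_mem _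
    | add a b _ _ ha hb => rw [mul_add]; exact add_mem ha hb
    | neg a _ ha => rw [mul_neg]; exact neg_mem ha
    | mem h hh =>
      obtain ⟨S, _, _, hS, rfl⟩ := hf
      obtain ⟨T, _, _, hT, rfl⟩ := hh
      apply AddSubgroup.subset_closure
      refine ⟨S × T, inferInstance, inferInstance, ?_, ?_⟩
      · rintro ⟨s, t⟩
        have hle : MulAction.stabilizer G (s, t) ≤ MulAction.stabilizer G s := by
          intro g hg
          rw [MulAction.mem_stabilizer_iff] at hg ⊢
          exact congrArg Prod.fst hg
        exact (hS s).of_injective (Subgroup.inclusion hle) (Subgroup.inclusion_injective hle)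
      · funext g
        simp only [Pi.mul_apply, fx]
        rw [← Nat.cast_mul, ← Nat.card_prod]
        congr 1
        refine Nat.card_congr ⟨fun x => ⟨(x.1.1, x.2.1), Prod.ext x.1.2 x.2.2⟩,
          fun x => (⟨x.1.1, congrArg Prod.fst x.2⟩, ⟨x.1.2, congrArg Prod.snd x.2⟩),
          fun x => rfl, fun x => rfl⟩

theorem permRing_eval (G : Type) [Group G] [Finite G] (g : G) :
    ∃ f ∈ permRing G, f g = 1 := by
  let A : AddSubgroup ℤ := (permRing G).map (Pi.evalAddMonoidHom (fun _ : G => ℤ) g)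
  obtain ⟨n, hn⟩ := Int.subgroup_cyclic A
  have hAn : ∀ f ∈ permRing G, n ∣ f g := by
    intro f hf
    have : f g ∈ A := ⟨f, hf, rfl⟩
    rw [hn, AddSubgroup.mem_closure_singleton] at this
    obtain ⟨k, hk⟩ := this
    exact ⟨k, by rw [← hk, smul_eq_mul, mul_comm]⟩
  have hn1 : n.natAbs = 1 := by
    by_contra hne
    obtain ⟨p, hp, hpn⟩ := Nat.exists_prime_and_dvd hne
    obtain ⟨H, hH, hpH⟩ := exists_QE g p hp
    apply hpH
    have hmem : fx G (G ⧸ H) ∈ permRing G := by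
      apply AddSubgroup.subset_closure
      refine ⟨G ⧸ H, inferInstance, inferInstance, ?_, rfl⟩
      intro s
      obtain ⟨x, rfl⟩ := QuotientGroup.mk_surjective s
      let c : G →* G := (MulAut.conj x⁻¹).toMonoidHom
      have hc : ∀ y ∈ MulAction.stabilizer G (x : G ⧸ H), c y ∈ H := by
        intro y hy
        rw [MulAction.mem_stabilizer_iff, MulAction.Quotient.smul_mk, eq_comm,
          QuotientGroup.eq] at hy
        simpa [c, mul_assoc] using hy
      refine hH.of_injective
        ((c.comp (MulAction.stabilizer G (x : G ⧸ H)).subtype).codRestrict H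
          (fun y => hc y y.2)) ?_
      intro a b hab
      have := congrArg Subtype.val hab
      exact Subtype.ext ((MulAut.conj x⁻¹).injective this)
    have h1 := hAn _ hmem
    have h2 : (p : ℤ) ∣ fx G (G ⧸ H) g := (Int.natCast_dvd.2 hpn).trans h1
    exact Int.natCast_dvd_natCast.1 h2
  have h1A : (1 : ℤ) ∈ A := by
    rw [hn, AddSubgroup.mem_closure_singleton]
    rcases Int.natAbs_eq n with h | h <;> rw [hn1] at h
    · exact ⟨1, by rw [h]; rfl⟩
    · exact ⟨-1, by rw [h]; rfl⟩
  obtain ⟨f, hf, hfg⟩ := h1A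
  exact ⟨f, hf, hfg⟩

theorem permRing_one (G : Type) [Group G] [Finite G] : (1 : G → ℤ) ∈ permRing G := by
  classical
  have := Fintype.ofFinite G
  choose f hf hfg using permRing_eval G
  have key : ∀ s : Finset G, 1 - ∏ g ∈ s, (1 - f g) ∈ permRing G := by
    intro s
    induction s using Finset.induction_on with
    | empty => simp
    | insert a s ha ih =>
      rw [Finset.prod_insert ha]
      have : (1 : G → ℤ) - (1 - f a) * ∏ g ∈ s, (1 - f g)
          = (1 - ∏ g ∈ s, (1 - f g)) + f a - f a * (1 - ∏ g ∈ s, (1 - f g)) := by ring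
      rw [this]
      exact sub_mem (add_mem ih (hf a)) (permRing_mul G (hf a) ih)
  have h0 : ∏ g : G, (1 - f g) = 0 := by
    funext x
    rw [Finset.prod_apply]
    exact Finset.prod_eq_zero (Finset.mem_univ x) (by simp [hfg])
  have := key Finset.univ
  rwa [h0, sub_zero] at this

theorem perm_functional {K : Type*} [Field K] (G : Type) [Group G] [Fintype G]
    (φ : G → K) (hφ : ∀ g h, φ (h * g * h⁻¹) = φ g) (e : ℤ)
    (hQ : ∀ (H : Subgroup G) [Fintype H], QE H → ∃ t : ℤ,
      (∑ h : H, φ h) = (Nat.card H : K) * e * t)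
    (f : G → ℤ) (hf : f ∈ permRing G) :
    ∃ t : ℤ, ∑ g, (f g : K) * φ g = (Nat.card G : K) * e * t := by
  classical
  induction hf using AddSubgroup.closure_induction with
  | zero => exact ⟨0, by simp⟩
  | add a b _ _ ha hb =>
    obtain ⟨s, hs⟩ := ha
    obtain ⟨t, ht⟩ := hb
    refine ⟨s + t, ?_⟩
    simp only [Pi.add_apply, Int.cast_add, add_mul, Finset.sum_add_distrib, hs, ht]
    ring
  | neg a _ ha =>
    obtain ⟨s, hs⟩ := ha
    refine ⟨-s, ?_⟩
    simp only [Pi.neg_apply, Int.cast_neg, neg_mul, Finset.sum_neg_distrib, hs]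
    ring
  | mem f hf =>
    obtain ⟨S, _, _, hS, rfl⟩ := hf
    have := Fintype.ofFinite S
    let ψ : S → K := fun s => ∑ g : G, if g • s = s then φ g else 0
    have hψ : ∀ (h : G) (s : S), ψ (h • s) = ψ s := by
      intro h s
      symm
      refine Fintype.sum_equiv (MulAut.conj h).toEquiv _ _ ?_
      intro g
      have h1 : (h * g * h⁻¹) • h • s = h • s ↔ g • s = s := by
        rw [smul_smul, inv_mul_cancel_right, mul_smul, smul_left_cancel_iff]
      simp only [MulEquiv.toEquiv_eq_coe, EquivLike.coe_coe, MulAut.conj_apply, h1, hφ]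
    have hsum : ∑ g, (fx G S g : K) * φ g = ∑ s, ψ s := by
      rw [Finset.sum_comm]
      refine Finset.sum_congr rfl fun g _ => ?_
      rw [← Finset.sum_filter, Finset.sum_const, nsmul_eq_mul]
      congr 1
      simp only [fx, Int.cast_natCast, Nat.card_eq_fintype_card, Fintype.card_subtype]
    have hψt : ∀ s, ∃ t : ℤ, ψ s = (Nat.card (MulAction.stabilizer G s) : K) * e * t := by
      intro s
      obtain ⟨t, ht⟩ := hQ _ (hS s)
      refine ⟨t, ?_⟩
      rw [← ht]
      change ∑ g : G, (if g • s = s then φ g else 0) = _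
      rw [← Finset.sum_filter]
      exact Finset.sum_subtype (p := fun x => x ∈ MulAction.stabilizer G s) _ (by simp) _
    choose t ht using hψt
    let Ω := MulAction.orbitRel.Quotient G S
    have : Fintype Ω := Fintype.ofFinite _
    let mk : S → Ω := fun s => Quotient.mk _ s
    have hmk : ∀ s s', mk s = mk s' ↔ s ∈ MulAction.orbit G s' := by
      intro s s'
      exact Quotient.eq''.trans MulAction.orbitRel_apply
    refine ⟨∑ ω : Ω, t ω.out, ?_⟩
    rw [hsum, ← Finset.sum_fiberwise (s := Finset.univ) (g := mk), Int.cast_sum, Finset.mul_sum]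
    refine Finset.sum_congr rfl fun ω _ => ?_
    have hω : mk ω.out = ω := Quotient.out_eq ω
    have hconst : ∀ s ∈ Finset.univ.filter (fun s => mk s = ω), ψ s = ψ ω.out := by
      intro s hs
      have hs' : mk s = mk ω.out := by rw [hω]; exact (Finset.mem_filter.1 hs).2
      obtain ⟨g, hg⟩ := (hmk _ _).1 hs'
      rw [← hg]; exact hψ g _
    rw [Finset.sum_congr rfl hconst, Finset.sum_const, nsmul_eq_mul, ht]
    have hcard : (Finset.univ.filter (fun s => mk s = ω)).card
        = Fintype.card (MulAction.orbit G ω.out) := by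
      rw [← Fintype.card_subtype]
      refine Fintype.card_congr (Equiv.subtypeEquivRight fun s => ?_)
      conv_lhs => rw [← hω]
      exact hmk _ _
    have hos := MulAction.card_orbit_mul_card_stabilizer_eq_card_group G ω.out
    rw [hcard, ← mul_assoc, ← mul_assoc, Nat.card_eq_fintype_card, Nat.card_eq_fintype_card,
      ← hos, Nat.cast_mul]

open scoped MonoidAlgebra

theorem finrank_dvd_of_action {K E M : Type*} [Field K] [DivisionRing E] [Algebra K E]
    [AddCommGroup M] [Module K M] (φ : E →ₐ[K] Module.End K M) :
    Module.finrank K E ∣ Module.finrank K M := by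
  let _ : Module E M := Module.compHom M φ.toRingHom
  have hs : ∀ (e : E) (m : M), e • m = φ e m := fun e m => rfl
  have : IsScalarTower K E M := ⟨fun k e m => by rw [hs, hs, map_smul]; rfl⟩
  exact ⟨_, (Module.finrank_mul_finrank K E M).symm⟩

theorem end_scalar {K : Type} [Field K] (hK : ∀ n : ℕ, 0 < n → ∃ ζ : K, IsPrimitiveRoot ζ n)
    {H : Type} [Group H] [Finite H] (hH : QE H) {M : Type} [AddCommGroup M] [Module K M]
    [Module K[H] M] [IsScalarTower K K[H] M] [IsSimpleModule K[H] M] [FiniteDimensional K M]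
    (f : Module.End K[H] M) : ∃ c : K, ∀ x, f x = c • x := by
  let ρ : Representation K H M :=
    ((Algebra.lsmul K K M : K[H] →ₐ[K] Module.End K M) : K[H] →* Module.End K M).comp
      (MonoidAlgebra.of K H)
  have hρ : ∀ g x, ρ g x = MonoidAlgebra.of K H g • x := fun g x => rfl
  have hirr : Irr ρ := by
    have := IsSimpleModule.nontrivial K[H] M
    refine ⟨exists_ne 0, fun W hW => ?_⟩
    let W' : Submodule K[H] M :=
      { W with
        smul_mem' := by
          intro r x hx
          change r • x ∈ W
          induction r using MonoidAlgebra.induction_on with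
          | of g => exact hW g x hx
          | add a b ha hb => rw [add_smul]; exact W.add_mem ha hb
          | smul k a ha => rw [smul_assoc]; exact W.smul_mem k ha }
    have hmem : ∀ x, x ∈ W' ↔ x ∈ W := fun x => Iff.rfl
    rcases eq_bot_or_eq_top W' with h | h
    · left; ext x; rw [← hmem, h]; simp
    · right; ext x; rw [← hmem, h]; simp
  obtain ⟨c, hc⟩ := QE.spl hK _ H M ρ hH hirr rfl (f.restrictScalars K) (by
    intro g x
    rw [hρ, hρ]
    exact map_smul f _ _)
  exact ⟨c, hc⟩

theorem sq_dvd {K : Type} [Field K] [CharZero K]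
    (hK : ∀ n : ℕ, 0 < n → ∃ ζ : K, IsPrimitiveRoot ζ n)
    {H : Type} [Group H] [Finite H] (hH : QE H) {M : Type} [AddCommGroup M] [Module K M]
    [Module K[H] M] [IsScalarTower K K[H] M] [FiniteDimensional K M]
    {E : Type} [DivisionRing E] [Algebra K E] (φ : E →ₐ[K] Module.End K[H] M) :
    Module.finrank K E ^ 2 ∣ Module.finrank K (Module.End K[H] M) := by
  have : NeZero (Nat.card H : K) := ⟨by exact_mod_cast Nat.card_pos.ne'⟩
  have : Module.Finite K[H] M := Module.Finite.of_restrictScalars_finite K K[H] M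
  obtain ⟨n, S, d, hS, hd, ⟨e⟩⟩ := IsSemisimpleModule.exists_end_algEquiv_pi_matrix_end K K[H] M
  have hfd : ∀ i, FiniteDimensional K (S i) := fun i =>
    FiniteDimensional.of_injective ((S i).subtype.restrictScalars K) Subtype.val_injective
  have hb : ∀ i, Function.Bijective (Algebra.ofId K (Module.End K[H] (S i))) := by
    intro i
    have := hS i
    have := IsSimpleModule.nontrivial K[H] (S i)
    refine ⟨(algebraMap K (Module.End K[H] (S i))).injective, fun f => ?_⟩
    obtain ⟨c, hc⟩ := end_scalar hK hH f
    exact ⟨c, by ext x; rw [hc]; rfl⟩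
  let ε : ∀ i, K ≃ₐ[K] Module.End K[H] (S i) := fun i => AlgEquiv.ofBijective _ (hb i)
  have hdd : ∀ i, Module.finrank K E ∣ d i := by
    intro i
    let ψ : E →ₐ[K] Module.End K (Fin (d i) → K) :=
      (Matrix.toLinAlgEquiv' : Matrix (Fin (d i)) (Fin (d i)) K ≃ₐ[K] _).toAlgHom.comp
        ((AlgEquiv.mapMatrix (ε i).symm).toAlgHom.comp
          ((Pi.evalAlgHom K _ i).comp (e.toAlgHom.comp φ)))
    simpa using finrank_dvd_of_action ψ
  have hfin : ∀ i, Module.finrank K (Matrix (Fin (d i)) (Fin (d i)) (Module.End K[H] (S i)))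
      = d i ^ 2 := by
    intro i
    rw [← (AlgEquiv.mapMatrix (m := Fin (d i)) (ε i)).toLinearEquiv.finrank_eq]
    simp [Module.finrank_matrix, sq]
  have hfr : ∀ i, Module.Finite K (Matrix (Fin (d i)) (Fin (d i)) (Module.End K[H] (S i))) :=
    fun i => Module.Finite.equiv (AlgEquiv.mapMatrix (m := Fin (d i)) (ε i)).toLinearEquiv
  rw [e.toLinearEquiv.finrank_eq, Module.finrank_pi_fintype]
  refine Finset.dvd_sum fun i _ => ?_
  rw [hfin]
  exact pow_dvd_pow_of_dvd (hdd i) 2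

theorem Irr.isIrreducible {K G V : Type*} [Field K] [Group G] [AddCommGroup V] [Module K V]
    {ρ : Representation K G V} (h : Irr ρ) : ρ.IsIrreducible := by
  obtain ⟨⟨v, hv⟩, h⟩ := h
  refine { exists_pair_ne := ⟨⊥, ⊤, fun he => hv ?_⟩, eq_bot_or_eq_top := fun W => ?_ }
  · have : v ∈ (⊥ : Subrepresentation ρ) := by rw [he]; trivial
    exact this
  · rcases h W.toSubmodule (fun g w hw => W.apply_mem_toSubmodule g hw) with h | h
    · left; exact Subrepresentation.toSubmodule_injective h
    · right; exact Subrepresentation.toSubmodule_injective h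

theorem spl_of_irr {K : Type} [Field K] [CharZero K]
    (hK : ∀ n : ℕ, 0 < n → ∃ ζ : K, IsPrimitiveRoot ζ n)
    {G V : Type} [Group G] [Finite G] [AddCommGroup V] [Module K V] [FiniteDimensional K V]
    (ρ : Representation K G V) (hρ : Irr ρ) : Spl ρ := by
  classical
  have := Fintype.ofFinite G
  have hirr := hρ.isIrreducible
  have hcard : ∀ (X : Type) [Group X] [Finite X], (Nat.card X : K) ≠ 0 := fun X _ _ => by
    exact_mod_cast Nat.card_pos.ne'
  let E := Module.End K[G] ρ.asModule
  let _ : DivisionRing E := Module.End.instDivisionRing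
  set d := Module.finrank K (Representation.IntertwiningMap ρ ρ) with hd
  have hdE : Module.finrank K E = d :=
    (Representation.IntertwiningMap.equivAlgEnd (ρ := ρ)).toLinearEquiv.finrank_eq.symm
  let φ : G → K := fun g => ρ.character g * ρ.character g⁻¹
  have hφ : ∀ g h, φ (h * g * h⁻¹) = φ g := by
    intro g h
    have : (h * g * h⁻¹)⁻¹ = h * g⁻¹ * h⁻¹ := by group
    simp only [φ, this, Representation.char_conj]
  have hQ : ∀ (H : Subgroup G) [Fintype H], QE H → ∃ t : ℤ,
      (∑ h : H, φ h) = (Nat.card H : K) * ((d ^ 2 : ℕ) : ℤ) * t := by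
    intro H _ hH
    let σ : Representation K H V := ρ.comp H.subtype
    have : Invertible (Nat.card H : K) := invertibleOfNonzero (hcard H)
    have h1 := Representation.card_inv_mul_sum_char_mul_char_eq_finrank σ σ
    have h2 : d ^ 2 ∣ Module.finrank K (Representation.IntertwiningMap σ σ) := by
      let r : Representation.IntertwiningMap ρ ρ →ₐ[K] Representation.IntertwiningMap σ σ :=
        { toFun := fun f => ⟨f.toLinearMap, fun g => f.isIntertwining' g⟩
          map_one' := rfl
          map_mul' := fun _ _ => rfl
          map_zero' := rfl
          map_add' := fun _ _ => rfl
          commutes' := fun _ => rfl }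
      let r' : E →ₐ[K] Module.End K[H] σ.asModule :=
        (Representation.IntertwiningMap.equivAlgEnd (ρ := σ)).toAlgHom.comp
          (r.comp (Representation.IntertwiningMap.equivAlgEnd (ρ := ρ)).symm.toAlgHom)
      have h3 := sq_dvd hK hH r'
      rw [hdE] at h3
      rwa [(Representation.IntertwiningMap.equivAlgEnd (ρ := σ)).toLinearEquiv.finrank_eq]
    obtain ⟨t, ht⟩ := h2
    refine ⟨t, ?_⟩
    rw [ht, inv_mul_eq_iff_eq_mul₀ (hcard H)] at h1
    have h4 : ∑ h : H, φ h = ∑ h : H, σ.character h * σ.character h⁻¹ := rfl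
    rw [h4, h1]
    push_cast
    ring
  obtain ⟨t, ht⟩ := perm_functional G φ hφ _ hQ 1 (permRing_one G)
  have : Invertible (Nat.card G : K) := invertibleOfNonzero (hcard G)
  have h1 := Representation.card_inv_mul_sum_char_mul_char_eq_finrank ρ ρ
  rw [inv_mul_eq_iff_eq_mul₀ (hcard G), ← hd] at h1
  have h2 : ∑ g : G, (((1 : G → ℤ) g : ℤ) : K) * φ g = ∑ g : G, ρ.character g * ρ.character g⁻¹ := by
    simp [φ]
  rw [h2, h1, mul_assoc] at ht
  have h3 := mul_left_cancel₀ (hcard G) ht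
  have h4 : (d : ℤ) = (d ^ 2 : ℕ) * t := by exact_mod_cast h3
  have hd0 : d ≠ 0 := by
    rw [← hdE]
    have : Module.Finite K E := Module.Finite.equiv
      (Representation.IntertwiningMap.equivAlgEnd (ρ := ρ)).toLinearEquiv
    exact Module.finrank_pos.ne'
  have h5 : (d : ℤ) * t = 1 := by
    have : (d : ℤ) ≠ 0 := by exact_mod_cast hd0
    apply mul_left_cancel₀ this
    push_cast at h4
    linarith
  have hd1 : d = 1 := by
    have := Int.isUnit_iff.1 (IsUnit.of_mul_eq_one _ h5)
    omega
  intro f hf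
  have hone : (1 : Representation.IntertwiningMap ρ ρ) ≠ 0 := by
    intro h
    obtain ⟨v, hv⟩ := hρ.1
    exact hv (congrArg (fun f : Representation.IntertwiningMap ρ ρ => f v) h)
  obtain ⟨c, hc⟩ := (finrank_eq_one_iff_of_nonzero' _ hone).1 (hd.symm.trans hd1)
    (⟨f, fun g => LinearMap.ext (hf g)⟩ : Representation.IntertwiningMap ρ ρ)
  refine ⟨c, fun v => ?_⟩
  exact (congrArg (fun f : Representation.IntertwiningMap ρ ρ => f v) hc).symm


section Bridge

open CategoryTheory

/-- Morphisms of `FDRep` from intertwining linear maps. -/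
noncomputable def mkHom {K G : Type} [Field K] [Group G] (X Y : FDRep K G) (f : X →ₗ[K] Y)
    (hf : ∀ g v, f (X.ρ g v) = Y.ρ g (f v)) : X ⟶ Y :=
  ⟨InducedCategory.homMk (ModuleCat.ofHom f), fun g => by
    ext1
    apply LinearMap.ext
    intro v
    exact hf g v⟩

/-- The linear map underlying a morphism of `FDRep`. -/
noncomputable def unHom {K G : Type} [Field K] [Group G] {X Y : FDRep K G} (f : X ⟶ Y) :
    X →ₗ[K] Y := f.hom.hom.hom

theorem unHom_comm {K G : Type} [Field K] [Group G] {X Y : FDRep K G} (f : X ⟶ Y) (g : G)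
    (v : X) : unHom f (X.ρ g v) = Y.ρ g (unHom f v) :=
  ConcreteCategory.congr_hom ((forget (FGModuleCat K)).congr_map (f.comm g)) v

theorem unHom_inj {K G : Type} [Field K] [Group G] {X Y : FDRep K G} {f f' : X ⟶ Y}
    (h : unHom f = unHom f') : f = f' := by
  apply Action.Hom.ext
  ext1
  exact h

theorem unHom_mkHom {K G : Type} [Field K] [Group G] (X Y : FDRep K G) (f : X →ₗ[K] Y)
    (hf : ∀ g v, f (X.ρ g v) = Y.ρ g (f v)) : unHom (mkHom X Y f hf) = f := rfl

theorem unHom_comp {K G : Type} [Field K] [Group G] {X Y Z : FDRep K G} (f : X ⟶ Y)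
    (f' : Y ⟶ Z) : unHom (f ≫ f') = unHom f' ∘ₗ unHom f := rfl

theorem unHom_id {K G : Type} [Field K] [Group G] (X : FDRep K G) :
    unHom (𝟙 X) = LinearMap.id := rfl

theorem unHom_zero {K G : Type} [Field K] [Group G] (X Y : FDRep K G) :
    unHom (0 : X ⟶ Y) = 0 := rfl

/-- Restriction to a stable subspace. -/
noncomputable def subRep {K G V : Type} [Field K] [Group G] [AddCommGroup V] [Module K V]
    (ρ : Representation K G V) (W : Submodule K V) (hW : ∀ g, ∀ w ∈ W, ρ g w ∈ W) :
    Representation K G W where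
  toFun g := (ρ g).restrict (hW g)
  map_one' := by ext; simp
  map_mul' a b := by ext; simp

theorem irr_of_simple {K G : Type} [Field K] [Group G] (V : FDRep K G) (hV : Simple V) :
    Irr (V := V) V.ρ := by
  constructor
  · by_contra h
    push Not at h
    apply id_nonzero V
    apply unHom_inj
    ext v
    rw [h v, map_zero, map_zero]
  · intro W hW
    let i : FDRep.of (subRep (V := V) V.ρ W hW) ⟶ V := mkHom _ _ W.subtype (fun g v => rfl)
    have hi : unHom i = W.subtype := rfl
    have hm : Mono i := by
      constructor
      intro Z a b hab
      apply unHom_inj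
      have := congrArg unHom hab
      rw [unHom_comp, unHom_comp, hi] at this
      ext v
      exact congrArg Subtype.val (Subtype.ext (LinearMap.congr_fun this v))
    by_cases h0 : i = 0
    · left
      rw [eq_bot_iff]
      intro w hw
      have : unHom i ⟨w, hw⟩ = 0 := by rw [h0]; rfl
      exact this
    · right
      have : IsIso i := isIso_of_mono_of_nonzero h0
      rw [eq_top_iff]
      intro w _
      have h1 : unHom (inv i ≫ i) = LinearMap.id := by rw [IsIso.inv_hom_id]; rfl
      have h2 := LinearMap.congr_fun h1 w
      rw [unHom_comp, hi] at h2
      have h3 : ((unHom (inv i) w : W) : V) = w := h2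
      rw [← h3]
      exact (unHom (inv i) w : W).2

theorem simple_of_irr {K G : Type} [Field K] [Group G] (V : FDRep K G)
    (hV : Irr (V := V) V.ρ) : Simple V := by
  constructor
  intro Y f hf
  constructor
  · intro hiso h0
    obtain ⟨v, hv⟩ := hV.1
    apply hv
    have h1 : unHom (inv f ≫ f) = LinearMap.id := by rw [IsIso.inv_hom_id]; rfl
    have h2 := LinearMap.congr_fun h1 v
    have h3 : ∀ w, unHom f w = 0 := fun w => by rw [h0]; rfl
    rw [unHom_comp, LinearMap.comp_apply, h3] at h2
    exact h2.symm
  · intro hne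
    have hker : LinearMap.ker (unHom f) = ⊥ := by
      have hst : ∀ g, ∀ w ∈ LinearMap.ker (unHom f), Y.ρ g w ∈ LinearMap.ker (unHom f) := by
        intro g w hw
        rw [LinearMap.mem_ker] at hw ⊢
        rw [unHom_comm, hw, map_zero]
      let i : FDRep.of (subRep (V := Y) Y.ρ _ hst) ⟶ Y :=
        mkHom _ _ (LinearMap.ker (unHom f)).subtype (fun g v => rfl)
      have hi0 : i = 0 := by
        rw [← cancel_mono f]
        apply unHom_inj
        rw [unHom_comp, unHom_comp]
        ext v
        have : unHom f (v : Y) = 0 := v.2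
        refine this.trans ?_
        symm
        exact map_zero (unHom f)
      rw [eq_bot_iff]
      intro w hw
      have : unHom i ⟨w, hw⟩ = 0 := by rw [hi0]; rfl
      exact this
    have hrange : LinearMap.range (unHom f) = ⊤ := by
      rcases hV.2 (LinearMap.range (unHom f)) (by
        rintro g _ ⟨v, rfl⟩
        exact ⟨Y.ρ g v, unHom_comm f g v⟩) with h | h
      · exfalso
        apply hne
        apply unHom_inj
        rw [LinearMap.range_eq_bot] at h
        rw [h, unHom_zero]
      · exact h
    let e : Y ≃ₗ[K] V := LinearEquiv.ofBijective (unHom f)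
      ⟨LinearMap.ker_eq_bot.mp hker, LinearMap.range_eq_top.mp hrange⟩
    have he : ∀ v, e v = unHom f v := fun v => rfl
    let j : V ⟶ Y := mkHom _ _ e.symm.toLinearMap (fun g v => by
      change e.symm (V.ρ g v) = Y.ρ g (e.symm v)
      rw [LinearEquiv.symm_apply_eq, he, unHom_comm, ← he, LinearEquiv.apply_symm_apply])
    refine ⟨⟨j, ?_, ?_⟩⟩
    · apply unHom_inj
      ext v
      exact e.symm_apply_apply v
    · apply unHom_inj
      ext v
      exact e.apply_symm_apply v

end Bridge

theorem exists_equiv_of_character_eq {K : Type} [Field K] [CharZero K]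
    {G V W : Type} [Group G] [Finite G] [AddCommGroup V] [Module K V] [FiniteDimensional K V]
    [AddCommGroup W] [Module K W] [FiniteDimensional K W]
    (ρ : Representation K G V) (σ : Representation K G W) (hρ : Irr ρ)
    (h : ∀ g, ρ.character g = σ.character g) :
    ∃ e : V ≃ₗ[K] W, ∀ g v, e (ρ g v) = σ g (e v) := by
  classical
  have := Fintype.ofFinite G
  have hc : (Nat.card G : K) ≠ 0 := by exact_mod_cast Nat.card_pos.ne'
  let _ := invertibleOfNonzero hc
  have h1 := Representation.card_inv_mul_sum_char_mul_char_eq_finrank ρ ρ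
  have h2 := Representation.card_inv_mul_sum_char_mul_char_eq_finrank ρ σ
  have h3 : Module.finrank K (Representation.IntertwiningMap ρ ρ) =
      Module.finrank K (Representation.IntertwiningMap ρ σ) := by
    have : (Module.finrank K (Representation.IntertwiningMap ρ ρ) : K) =
      Module.finrank K (Representation.IntertwiningMap ρ σ) := by
      rw [← h1, ← h2]
      simp only [h]
    exact_mod_cast this
  have hfd : FiniteDimensional K (Representation.IntertwiningMap ρ ρ) :=
    Module.Finite.equiv (Representation.invariantsEquivIntertwiningMap ρ ρ)
  obtain ⟨v, hv⟩ := hρ.1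
  have h4 : 0 < Module.finrank K (Representation.IntertwiningMap ρ ρ) := by
    rw [Module.finrank_pos_iff_exists_ne_zero]
    refine ⟨⟨LinearMap.id, fun g => rfl⟩, fun h0 => hv ?_⟩
    have := congrArg (fun f => f.toLinearMap v) h0
    exact this
  rw [h3] at h4
  obtain ⟨f, hf⟩ : ∃ f : Representation.IntertwiningMap ρ σ, f ≠ 0 := by
    by_contra hcon
    push Not at hcon
    have : Subsingleton (Representation.IntertwiningMap ρ σ) :=
      ⟨fun a b => by rw [hcon a, hcon b]⟩
    rw [Module.finrank_zero_of_subsingleton] at h4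
    exact lt_irrefl _ h4
  have hcomm : ∀ g v, f.toLinearMap (ρ g v) = σ g (f.toLinearMap v) := fun g v =>
    LinearMap.congr_fun (f.isIntertwining' g) v
  have hker : LinearMap.ker f.toLinearMap = ⊥ := by
    rcases hρ.2 (LinearMap.ker f.toLinearMap) (by
      intro g w hw
      rw [LinearMap.mem_ker] at hw ⊢
      rw [hcomm, hw, map_zero]) with h | h
    · exact h
    · exfalso
      apply hf
      rw [LinearMap.ker_eq_top] at h
      exact Representation.IntertwiningMap.toLinearMap_injective _ _ h
  have hdim : Module.finrank K V = Module.finrank K W := by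
    have := h 1
    rw [Representation.char_one, Representation.char_one] at this
    exact_mod_cast this
  refine ⟨LinearEquiv.ofInjectiveOfFinrankEq f.toLinearMap (LinearMap.ker_eq_bot.mp hker) hdim, ?_⟩
  intro g v
  exact hcomm g v

theorem Irr.of_equiv {K : Type} [Field K]
    {G V W : Type} [Group G] [AddCommGroup V] [Module K V]
    [AddCommGroup W] [Module K W]
    (ρ : Representation K G V) (σ : Representation K G W) (hρ : Irr ρ)
    (e : V ≃ₗ[K] W) (he : ∀ g v, e (ρ g v) = σ g (e v)) : Irr σ := by
  obtain ⟨⟨v, hv⟩, h⟩ := hρ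
  refine ⟨⟨e v, by simpa using hv⟩, fun U hU => ?_⟩
  have hc := h (U.comap e.toLinearMap) (by
    intro g w hw
    change e (ρ g w) ∈ U
    rw [he]
    exact hU g _ hw)
  rcases hc with hc | hc
  · left
    rw [eq_bot_iff]
    intro u hu
    have : e.symm u ∈ U.comap e.toLinearMap := by
      change e (e.symm u) ∈ U
      simpa using hu
    rw [hc] at this
    simpa using this
  · right
    rw [eq_top_iff]
    intro u _
    have : e.symm u ∈ U.comap e.toLinearMap := by rw [hc]; trivial
    have h2 : e (e.symm u) ∈ U := this
    simpa using h2

theorem Irr.of_comp {K : Type} [Field K] {G H V : Type} [Group G] [Group H] [AddCommGroup V]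
    [Module K V] (ρ : Representation K G V) (f : H →* G)
    (h : Irr (K := K) (V := V) (ρ.comp f)) : Irr ρ :=
  ⟨h.1, fun W hW => h.2 W fun g => hW (f g)⟩

theorem exists_glue {K : Type} [Field K] {Y V : Type} [Group Y] [AddCommGroup V] [Module K V]
    (X₁ X₂ : Subgroup Y) (hX₁ : X₁.Normal)
    (hprod : ∀ y : Y, ∃ n : X₁, ∃ x : X₂, (n : Y) * x = y)
    (ρ₁ : Representation K X₁ V) (ρ₂ : Representation K X₂ V)
    (hD : ∀ (y : Y) (h1 : y ∈ X₁) (h2 : y ∈ X₂), ρ₁ ⟨y, h1⟩ = ρ₂ ⟨y, h2⟩)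
    (hconj : ∀ (x : X₂) (n : X₁),
      ρ₂ x * ρ₁ n = ρ₁ ⟨x * n * (x : Y)⁻¹, hX₁.conj_mem _ n.2 _⟩ * ρ₂ x) :
    ∃ ρ : Representation K Y V, (∀ n : X₁, ρ n = ρ₁ n) ∧ ∀ x : X₂, ρ x = ρ₂ x := by
  choose a b hab using hprod
  have key : ∀ (n n' : X₁) (x x' : X₂), (n : Y) * x = n' * x' →
      ρ₁ n * ρ₂ x = ρ₁ n' * ρ₂ x' := by
    intro n n' x x' h
    have hd : ((n'⁻¹ * n : X₁) : Y) = ((x' * x⁻¹ : X₂) : Y) := by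
      push_cast
      rw [inv_mul_eq_iff_eq_mul, ← mul_assoc, ← h, mul_inv_cancel_right]
    have h1 : ρ₁ (n'⁻¹ * n) = ρ₂ (x' * x⁻¹) := by
      have := hD ((n'⁻¹ * n : X₁) : Y) (n'⁻¹ * n).2 (by rw [hd]; exact (x' * x⁻¹).2)
      rw [show (n'⁻¹ * n : X₁) = ⟨((n'⁻¹ * n : X₁) : Y), (n'⁻¹ * n).2⟩ from rfl, this]
      congr 1
      exact Subtype.ext hd
    calc ρ₁ n * ρ₂ x = ρ₁ (n' * (n'⁻¹ * n)) * ρ₂ x := by rw [mul_inv_cancel_left]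
      _ = ρ₁ n' * (ρ₂ (x' * x⁻¹) * ρ₂ x) := by rw [map_mul, h1, mul_assoc]
      _ = ρ₁ n' * ρ₂ x' := by rw [← map_mul, inv_mul_cancel_right]
  have hF : ∀ (n : X₁) (x : X₂) (y : Y), (n : Y) * x = y →
      ρ₁ (a y) * ρ₂ (b y) = ρ₁ n * ρ₂ x := fun n x y h => key _ _ _ _ (by rw [hab, h])
  refine ⟨{ toFun := fun y => ρ₁ (a y) * ρ₂ (b y), map_one' := ?_, map_mul' := ?_ }, ?_, ?_⟩
  · rw [hF 1 1 1 (by simp), map_one, map_one, mul_one]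
  · intro y z
    rw [hF (a y * ⟨b y * a z * (b y : Y)⁻¹, hX₁.conj_mem _ (a z).2 _⟩) (b y * b z) (y * z) (by
      push_cast
      conv_rhs => rw [← hab y, ← hab z]
      group)]
    rw [map_mul, map_mul]
    calc _ = ρ₁ (a y) * (ρ₁ ⟨b y * a z * (b y : Y)⁻¹, hX₁.conj_mem _ (a z).2 _⟩ * ρ₂ (b y))
          * ρ₂ (b z) := by simp only [mul_assoc]
      _ = _ := by rw [← hconj]; simp only [mul_assoc]
  · intro n
    change ρ₁ (a n) * ρ₂ (b n) = _
    rw [hF n 1 n (by simp), map_one, mul_one]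
  · intro x
    change ρ₁ (a x) * ρ₂ (b x) = _
    rw [hF 1 x x (by simp), map_one, one_mul]

theorem trace_eq_of_equiv {K V W : Type} [Field K] [AddCommGroup V] [Module K V]
    [AddCommGroup W] [Module K W] (f : V →ₗ[K] V) (g : W →ₗ[K] W) (e : V ≃ₗ[K] W)
    (h : ∀ v, e (f v) = g (e v)) : LinearMap.trace K V f = LinearMap.trace K W g := by
  rw [← LinearMap.trace_conj' f e]
  congr 1
  ext w
  rw [LinearEquiv.conj_apply_apply, h, LinearEquiv.apply_symm_apply]

/-- Transport of a representation along a linear equivalence. -/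
noncomputable def transport {K : Type} [Field K] {G V W : Type} [Group G] [AddCommGroup V]
    [Module K V] [AddCommGroup W] [Module K W] (ρ : Representation K G V) (e : V ≃ₗ[K] W) :
    Representation K G W where
  toFun g := e.conj (ρ g)
  map_one' := by ext; simp [LinearEquiv.conj_apply_apply]
  map_mul' a b := by ext; simp [LinearEquiv.conj_apply_apply]

theorem transport_apply {K : Type} [Field K] {G V W : Type} [Group G] [AddCommGroup V]
    [Module K V] [AddCommGroup W] [Module K W] (ρ : Representation K G V) (e : V ≃ₗ[K] W)
    (g : G) (w : W) : transport ρ e g w = e (ρ g (e.symm w)) := rfl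

theorem main_exists {K : Type} [Field K] [CharZero K]
    (hK : ∀ n : ℕ, 0 < n → ∃ ζ : K, IsPrimitiveRoot ζ n)
    {Y : Type} [Group Y] [Finite Y] {V₀ V₁ V₂ : Type}
    [AddCommGroup V₀] [Module K V₀] [FiniteDimensional K V₀]
    [AddCommGroup V₁] [Module K V₁] [FiniteDimensional K V₁]
    [AddCommGroup V₂] [Module K V₂] [FiniteDimensional K V₂]
    (X₁ X₂ : Subgroup Y) (hX₁ : X₁.Normal)
    (hprod : ∀ y : Y, ∃ n : X₁, ∃ x : X₂, (n : Y) * x = y)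
    (ρ₀ : Representation K ↥(X₁ ⊓ X₂) V₀)
    (ρ₁ : Representation K X₁ V₁) (ρ₂ : Representation K X₂ V₂)
    (h₀ : Irr ρ₀) (h₁ : Irr ρ₁)
    (hinv : ∀ (y : Y) (n : X₁),
      ρ₁.character ⟨y * n * y⁻¹, hX₁.conj_mem _ n.2 _⟩ = ρ₁.character n)
    (c₁ : ∀ d : ↥(X₁ ⊓ X₂), ρ₀.character d = ρ₁.character (Subgroup.inclusion inf_le_left d))
    (c₂ : ∀ d : ↥(X₁ ⊓ X₂), ρ₀.character d = ρ₂.character (Subgroup.inclusion inf_le_right d)) :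
    ∃ ρ : Representation K Y V₁, Irr ρ ∧ (∀ n : X₁, ρ.character n = ρ₁.character n) ∧
      ∀ x : X₂, ρ.character x = ρ₂.character x := by
  obtain ⟨e₁, he₁⟩ := exists_equiv_of_character_eq (W := V₁) ρ₀
    (ρ₁.comp (Subgroup.inclusion inf_le_left)) h₀ c₁
  obtain ⟨e₂, he₂⟩ := exists_equiv_of_character_eq (W := V₂) ρ₀
    (ρ₂.comp (Subgroup.inclusion inf_le_right)) h₀ c₂
  have hirr : Irr (V := V₁) (ρ₁.comp (Subgroup.inclusion (inf_le_left : X₁ ⊓ X₂ ≤ X₁))) :=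
    Irr.of_equiv _ _ h₀ e₁ he₁
  have hspl := spl_of_irr hK _ hirr
  let e : V₂ ≃ₗ[K] V₁ := e₂.symm.trans e₁
  let σ := transport ρ₂ e
  have hσ : ∀ x v, σ x v = e (ρ₂ x (e.symm v)) := fun x v => rfl
  have hD : ∀ (y : Y) (h1 : y ∈ X₁) (h2 : y ∈ X₂), ρ₁ ⟨y, h1⟩ = σ ⟨y, h2⟩ := by
    intro y h1 h2
    ext v
    have a1 := he₁ ⟨y, h1, h2⟩ (e₁.symm v)
    have a2 := he₂ ⟨y, h1, h2⟩ (e₁.symm v)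
    have a1' : e₁ (ρ₀ ⟨y, h1, h2⟩ (e₁.symm v)) = ρ₁ ⟨y, h1⟩ v := by
      rw [a1, LinearEquiv.apply_symm_apply]; rfl
    have a2' : e₂ (ρ₀ ⟨y, h1, h2⟩ (e₁.symm v)) = ρ₂ ⟨y, h2⟩ (e₂ (e₁.symm v)) := a2
    rw [hσ, ← a1']
    change _ = e₁ (e₂.symm (ρ₂ ⟨y, h2⟩ (e₂ (e₁.symm v))))
    rw [← a2', LinearEquiv.symm_apply_apply]
  have hconj : ∀ (x : X₂) (n : X₁),
      σ x * ρ₁ n = ρ₁ ⟨x * n * (x : Y)⁻¹, hX₁.conj_mem _ n.2 _⟩ * σ x := by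
    intro x
    let κ : X₁ →* X₁ :=
      { toFun := fun n => ⟨x * n * (x : Y)⁻¹, hX₁.conj_mem _ n.2 _⟩
        map_one' := by ext; simp
        map_mul' := fun a b => by ext; simp }
    obtain ⟨T, hT⟩ := exists_equiv_of_character_eq (W := V₁) ρ₁ (ρ₁.comp κ) h₁
      (fun n => (hinv x n).symm)
    have hT' : ∀ n v, T (ρ₁ n v) = ρ₁ (κ n) (T v) := hT
    obtain ⟨c, hc⟩ := hspl (T.symm.toLinearMap ∘ₗ σ x) (by
      intro d v
      change T.symm (σ x (ρ₁ ⟨d, d.2.1⟩ v)) = ρ₁ ⟨d, d.2.1⟩ (T.symm (σ x v))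
      rw [LinearEquiv.symm_apply_eq, hT', LinearEquiv.apply_symm_apply, hD _ d.2.1 d.2.2]
      have hk : ρ₁ (κ ⟨d, d.2.1⟩) = σ (x * ⟨d, d.2.2⟩ * x⁻¹) :=
        hD ((x : Y) * d * (x : Y)⁻¹) _ (x * ⟨d, d.2.2⟩ * x⁻¹).2
      rw [hk, ← Module.End.mul_apply, ← Module.End.mul_apply, ← map_mul, ← map_mul,
        inv_mul_cancel_right])
    have hc' : ∀ v, σ x v = c • T v := by
      intro v
      have := hc v
      change T.symm (σ x v) = c • v at this
      rw [LinearEquiv.symm_apply_eq] at this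
      rw [this, map_smul]
    intro n
    ext v
    change σ x (ρ₁ n v) = ρ₁ (κ n) (σ x v)
    rw [hc', hc', hT', map_smul]
  obtain ⟨ρ, hr1, hr2⟩ := exists_glue X₁ X₂ hX₁ hprod ρ₁ σ hD hconj
  refine ⟨ρ, ?_, ?_, ?_⟩
  · apply Irr.of_comp ρ X₁.subtype
    have : ρ.comp X₁.subtype = ρ₁ := MonoidHom.ext hr1
    rw [this]
    exact h₁
  · intro n
    unfold Representation.character
    rw [hr1]
  · intro x
    unfold Representation.character
    rw [hr2]
    symm
    apply trace_eq_of_equiv _ _ e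
    intro v
    rw [hσ, LinearEquiv.symm_apply_apply]

theorem main_unique {K : Type} [Field K] [CharZero K]
    (hK : ∀ n : ℕ, 0 < n → ∃ ζ : K, IsPrimitiveRoot ζ n)
    {Y : Type} [Group Y] [Finite Y] {V₀ V V' : Type}
    [AddCommGroup V₀] [Module K V₀] [FiniteDimensional K V₀]
    [AddCommGroup V] [Module K V] [FiniteDimensional K V]
    [AddCommGroup V'] [Module K V'] [FiniteDimensional K V']
    (X₁ X₂ : Subgroup Y)
    (hprod : ∀ y : Y, ∃ n : X₁, ∃ x : X₂, (n : Y) * x = y)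
    (ρ₀ : Representation K ↥(X₁ ⊓ X₂) V₀) (h₀ : Irr ρ₀)
    (ρ : Representation K Y V) (ρ' : Representation K Y V')
    (c₀ : ∀ d : ↥(X₁ ⊓ X₂), ρ₀.character d = ρ.character d)
    (c₁ : ∀ n : X₁, ρ.character n = ρ'.character n)
    (c₂ : ∀ x : X₂, ρ.character x = ρ'.character x) :
    ∀ y, ρ.character y = ρ'.character y := by
  obtain ⟨e₀, he₀⟩ := exists_equiv_of_character_eq (W := V) ρ₀
    (ρ.comp (X₁ ⊓ X₂).subtype) h₀ c₀
  have hirr : Irr (V := V) (ρ.comp (X₁ ⊓ X₂).subtype) := Irr.of_equiv _ _ h₀ e₀ he₀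
  have hspl := spl_of_irr hK _ hirr
  have hirr1 : Irr (V := V) (ρ.comp X₁.subtype) :=
    Irr.of_comp (ρ.comp X₁.subtype) (Subgroup.inclusion inf_le_left) hirr
  have hirr2 : Irr (V := V) (ρ.comp X₂.subtype) :=
    Irr.of_comp (ρ.comp X₂.subtype) (Subgroup.inclusion inf_le_right) hirr
  obtain ⟨α, hα⟩ := exists_equiv_of_character_eq (V := V) (W := V') (ρ.comp X₁.subtype)
    (ρ'.comp X₁.subtype) hirr1 c₁
  obtain ⟨β, hβ⟩ := exists_equiv_of_character_eq (V := V) (W := V') (ρ.comp X₂.subtype)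
    (ρ'.comp X₂.subtype) hirr2 c₂
  have hα' : ∀ y ∈ X₁, ∀ v, α (ρ y v) = ρ' y (α v) := fun y hy v => hα ⟨y, hy⟩ v
  have hβ' : ∀ y ∈ X₂, ∀ v, β (ρ y v) = ρ' y (β v) := fun y hy v => hβ ⟨y, hy⟩ v
  obtain ⟨c, hc⟩ := hspl (β.symm.toLinearMap ∘ₗ α.toLinearMap) (by
    intro d v
    change β.symm (α (ρ d v)) = ρ d (β.symm (α v))
    rw [LinearEquiv.symm_apply_eq, hα' _ d.2.1, hβ' _ d.2.2, LinearEquiv.apply_symm_apply])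
  have hc' : ∀ v, α v = c • β v := by
    intro v
    have := hc v
    change β.symm (α v) = c • v at this
    rw [LinearEquiv.symm_apply_eq] at this
    rw [this, map_smul]
  intro y
  apply trace_eq_of_equiv _ _ α
  intro v
  obtain ⟨n, x, rfl⟩ := hprod y
  rw [map_mul, map_mul, Module.End.mul_apply, Module.End.mul_apply, hα' _ n.2, hc' (ρ x v),
    hβ' _ x.2, hc' v, map_smul, map_smul, map_smul]

theorem qab_roots (n : ℕ) (hn : 0 < n) : ∃ ζ : ↥Qab, IsPrimitiveRoot ζ n := by
  have h := Complex.isPrimitiveRoot_exp n hn.ne'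
  refine ⟨⟨_, IntermediateField.subset_adjoin ℚ _ ⟨n, hn, h.pow_eq_one⟩⟩, ?_⟩
  exact IsPrimitiveRoot.of_map_of_injective (f := Qab.val) h Qab.val.injective

end GluingAux

/-- **Lemma 3.1** (gluing extensions). Let `X₁ ⊴ Y`, `X₂ ≤ Y` with `Y = X₁X₂`.
If `θ₁ ∈ Irr(X₁)` is `Y`-invariant and `θ₂ ∈ Irr(X₂)` restricts irreducibly to
`X₁ ∩ X₂`, where the restrictions of `θ₁` and `θ₂` to `X₁ ∩ X₂` coincide, then
there is a unique `θ ∈ Irr(Y)` extending both `θ₁` and `θ₂`. -/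
theorem gluing_extensions (Y : Type) [Group Y] [Fintype Y]
    (X₁ X₂ : Subgroup Y) (hX₁ : X₁.Normal)
    (hprod : (X₁ : Set Y) * (X₂ : Set Y) = Set.univ)
    (θ₁ : ↥X₁ → ↥Qab) (hθ₁ : IsIrrChar (↥X₁) θ₁)
    (hinv : ∀ (y : Y) (x : Y) (hx : x ∈ X₁),
      θ₁ ⟨y * x * y⁻¹, hX₁.conj_mem x hx y⟩ = θ₁ ⟨x, hx⟩)
    (θ₂ : ↥X₂ → ↥Qab) (hθ₂ : IsIrrChar (↥X₂) θ₂)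
    (hres : IsIrrChar (↥(X₁ ⊓ X₂))
      (fun x => θ₂ ⟨(x : Y), (Subgroup.mem_inf.mp x.2).2⟩))
    (heq : ∀ x : ↥(X₁ ⊓ X₂),
      θ₂ ⟨(x : Y), (Subgroup.mem_inf.mp x.2).2⟩ =
        θ₁ ⟨(x : Y), (Subgroup.mem_inf.mp x.2).1⟩) :
    ∃! θ : Y → ↥Qab, IsIrrChar Y θ ∧
      (∀ (x : Y) (hx : x ∈ X₁), θ x = θ₁ ⟨x, hx⟩) ∧
      (∀ (x : Y) (hx : x ∈ X₂), θ x = θ₂ ⟨x, hx⟩) := by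
  have hdec : ∀ y : Y, ∃ n : X₁, ∃ x : X₂, (n : Y) * x = y := by
    intro y
    have hy : y ∈ (X₁ : Set Y) * (X₂ : Set Y) := by rw [hprod]; trivial
    obtain ⟨n, hn, x, hx, h⟩ := hy
    exact ⟨⟨n, hn⟩, ⟨x, hx⟩, h⟩
  obtain ⟨V₁, s₁, k₁⟩ := hθ₁
  obtain ⟨V₂, s₂, k₂⟩ := hθ₂
  obtain ⟨V₀, s₀, k₀⟩ := hres
  have h₀ := GluingAux.irr_of_simple V₀ s₀
  have h₁ := GluingAux.irr_of_simple V₁ s₁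
  have e₁ : ∀ n, Representation.character (V := V₁) V₁.ρ n = θ₁ n := fun n => congrFun k₁ n
  have e₂ : ∀ n, Representation.character (V := V₂) V₂.ρ n = θ₂ n := fun n => congrFun k₂ n
  have e₀ : ∀ d : ↥(X₁ ⊓ X₂), Representation.character (V := V₀) V₀.ρ d =
      θ₂ ⟨(d : Y), (Subgroup.mem_inf.mp d.2).2⟩ := fun d => congrFun k₀ d
  obtain ⟨ρ, hirr, r₁, r₂⟩ := GluingAux.main_exists (V₀ := V₀) (V₁ := V₁) (V₂ := V₂)
    GluingAux.qab_roots X₁ X₂ hX₁ hdec V₀.ρ V₁.ρ V₂.ρ h₀ h₁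
    (fun y n => by rw [e₁, e₁]; exact hinv y n n.2)
    (fun d => by rw [e₀, e₁]; exact heq d)
    (fun d => by rw [e₀, e₂]; rfl)
  refine ⟨fun y => ρ.character y, ⟨?_, ?_, ?_⟩, ?_⟩
  · exact ⟨FDRep.of ρ, GluingAux.simple_of_irr _ hirr, rfl⟩
  · intro x hx
    exact (r₁ ⟨x, hx⟩).trans (e₁ _)
  · intro x hx
    exact (r₂ ⟨x, hx⟩).trans (e₂ _)
  · rintro θ' ⟨⟨V', s', k'⟩, t₁, t₂⟩
    have e' : ∀ y, Representation.character (V := V') V'.ρ y = θ' y := fun y => congrFun k' y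
    funext y
    rw [← e']
    refine (GluingAux.main_unique (V₀ := V₀) (V := V₁) (V' := V') GluingAux.qab_roots X₁ X₂ hdec
      V₀.ρ h₀ ρ V'.ρ ?_ ?_ ?_ y).symm
    · intro d
      rw [e₀, heq d]
      exact ((r₁ ⟨d, d.2.1⟩).trans (e₁ _)).symm
    · intro n
      rw [e', r₁, e₁, t₁ n n.2]
    · intro x
      rw [e', r₂, e₂, t₂ x x.2]
end
end

section
/- Let ℓ be a prime and X ⊴ Y ⊴ Ŷ finite groups with X ⊴ Ŷ, such that Y/X has a normal Sylow ℓ-subgroup and Ŷ/Y is a (possibly trivial) ℓ-group. Let ψ ∈ Irr_{ℓ'}(X) be a character that extends to its stabilizer Y_ψ. Suppose further that at least one of the following holds: (i) ℓ does not divide o(ψ), the order of the determinantal character of ψ; or (ii) there exists K̂ ≤ Ŷ with Ŷ = X K̂ and K̂ ∩ X an ℓ'-group. Then there exists an extension χ ∈ Irr(Y_ψ) of ψ such that for every y ∈ Ŷ and σ ∈ ℋ₀ with (ψ^y)^σ = ψ one has (χ^y)^σ = χ (note that such y normalize Y_ψ, so χ^y is defined); that is, the stabilizers (Ŷ × ℋ₀)_χ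 and (Ŷ × ℋ₀)_ψ coincide. -/
open scoped Pointwise

noncomputable section

/-- Membership in `ℋ₀ ≤ Gal(ℚ^ab/ℚ)`: `σ` has `ℓ`-power order and fixes every
root of unity of order coprime to `ℓ`. -/
def MemH0 (ℓ : ℕ) (σ : ↥Qab ≃ₐ[ℚ] ↥Qab) : Prop :=
  (∃ k : ℕ, orderOf σ = ℓ ^ k) ∧
    ∀ (ζ : ↥Qab) (n : ℕ), 0 < n → Nat.Coprime n ℓ → ζ ^ n = 1 → σ ζ = ζ

/-- The conjugate `ψ^y` of a character `ψ` of a normal subgroup `X ⊴ Γ` by `y : Γ`,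
given by `ψ^y(x) = ψ(y x y⁻¹)`. -/
def conjChar {Γ : Type} [Group Γ] {X : Subgroup Γ} (hX : X.Normal) (y : Γ)
    (ψ : ↥X → ↥Qab) : ↥X → ↥Qab :=
  fun x => ψ ⟨y * (x : Γ) * y⁻¹, hX.conj_mem _ x.2 y⟩

lemma conjChar_one {Γ : Type} [Group Γ] {X : Subgroup Γ} (hX : X.Normal)
    (ψ : ↥X → ↥Qab) : conjChar hX 1 ψ = ψ := by
  funext x
  simp only [conjChar]
  exact congrArg ψ (Subtype.ext (by group))

lemma conjChar_mul {Γ : Type} [Group Γ] {X : Subgroup Γ} (hX : X.Normal)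
    (a b : Γ) (ψ : ↥X → ↥Qab) :
    conjChar hX (a * b) ψ = conjChar hX b (conjChar hX a ψ) := by
  funext x
  simp only [conjChar]
  exact congrArg ψ (Subtype.ext (by group))

/-- The stabilizer `Γ_ψ ≤ Γ` of a character `ψ` of a normal subgroup `X ⊴ Γ`
under the conjugation action. -/
def charStab {Γ : Type} [Group Γ] {X : Subgroup Γ} (hX : X.Normal)
    (ψ : ↥X → ↥Qab) : Subgroup Γ where
  carrier := {y | conjChar hX y ψ = ψ}
  one_mem' := conjChar_one hX ψ
  mul_mem' := by
    intro a b ha hb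
    show conjChar hX (a * b) ψ = ψ
    rw [conjChar_mul, ha, hb]
  inv_mem' := by
    intro a ha
    show conjChar hX a⁻¹ ψ = ψ
    have h := conjChar_mul hX a a⁻¹ ψ
    rw [mul_inv_cancel, conjChar_one, ha] at h
    exact h.symm


namespace ExtSplit

/-- Elementary irreducibility. -/
def Irr {K G V : Type} [Field K] [Group G] [AddCommGroup V] [Module K V]
    (ρ : Representation K G V) : Prop :=
  Nontrivial V ∧ ∀ U : Submodule K V, (∀ g, ∀ u ∈ U, ρ g u ∈ U) → U = ⊥ ∨ U = ⊤

/-- All irreducible representations have scalar commutant. -/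
def Split (K G : Type) [Field K] [Group G] : Prop :=
  ∀ (V : Type) [AddCommGroup V] [Module K V] [FiniteDimensional K V]
    (ρ : Representation K G V), Irr ρ →
    ∀ f : V →ₗ[K] V, (∀ g v, f (ρ g v) = ρ g (f v)) → ∃ c : K, ∀ v, f v = c • v

/-- Normal abelian subgroup with `p`-power index quotient. -/
def PHyp (p : ℕ) (G : Type) [Group G] : Prop :=
  ∃ C : Subgroup G, C.Normal ∧ (∀ a ∈ C, ∀ b ∈ C, a * b = b * a) ∧ ∀ g : G, ∃ k : ℕ, g ^ (p ^ k) ∈ C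

lemma exists_eigen {K V : Type} [Field K] [AddCommGroup V] [Module K V]
    [FiniteDimensional K V] (hK : ∀ n : ℕ, 0 < n → ∃ ζ : K, IsPrimitiveRoot ζ n)
    (f : Module.End K V) (n : ℕ) (hn : 0 < n) (hf : f ^ n = 1)
    (U : Submodule K V) (hU : U ≠ ⊥) (hfU : ∀ u ∈ U, f u ∈ U) :
    ∃ c : K, ∃ u ∈ U, u ≠ 0 ∧ f u = c • u := by
  have : Nontrivial U := (Submodule.nontrivial_iff_ne_bot).2 hU
  set g : Module.End K U := f.restrict hfU with hg
  have hgn : g ^ n = 1 := by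
    rw [hg, Module.End.pow_restrict]
    ext x
    simp [LinearMap.restrict_apply, hf]
  obtain ⟨ζ, hζ⟩ := hK n hn
  have hs := Polynomial.X_pow_sub_one_splits hζ
  have hdvd : minpoly K g ∣ (Polynomial.X ^ n - 1 : Polynomial K) := by
    apply minpoly.dvd
    simp [hgn]
  have hs' : (minpoly K g).Splits := by
    refine Polynomial.Splits.of_dvd hs ?_ hdvd
    exact (Polynomial.monic_X_pow_sub_C (1:K) hn.ne').ne_zero
  have hdeg : (minpoly K g).degree ≠ 0 := by
    have := minpoly.degree_pos (A := K) (x := g) (Algebra.IsIntegral.isIntegral g)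
    exact this.ne'
  obtain ⟨c, hc⟩ := hs'.exists_eval_eq_zero hdeg
  have hev : Module.End.HasEigenvalue g c := Module.End.hasEigenvalue_of_isRoot hc
  obtain ⟨u, hu⟩ := hev.exists_hasEigenvector
  refine ⟨c, u, u.2, fun h => hu.2 (Subtype.ext h), ?_⟩
  have := hu.apply_eq_smul
  exact congrArg Subtype.val this

lemma exists_weight {K G V : Type} [Field K] [Group G] [Finite G] [AddCommGroup V] [Module K V]
    [FiniteDimensional K V] (hK : ∀ n : ℕ, 0 < n → ∃ ζ : K, IsPrimitiveRoot ζ n)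
    (ρ : Representation K G V) [Nontrivial V] (A : Subgroup G)
    (hA : ∀ a ∈ A, ∀ b ∈ A, a * b = b * a) :
    ∃ χ : A → K, ∃ v : V, v ≠ 0 ∧ ∀ a : A, ρ a v = χ a • v := by
  let S : Set (Submodule K V) := {U | U ≠ ⊥ ∧ ∀ a : A, ∀ u ∈ U, ρ a u ∈ U}
  have hS : S.Nonempty := ⟨⊤, top_ne_bot, by simp⟩
  obtain ⟨U, hU, hmin⟩ := (wellFounded_lt (α := Submodule K V)).has_min S hS
  have key : ∀ a : A, ∃ c : K, ∀ u ∈ U, ρ a u = c • u := by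
    intro a
    obtain ⟨c, u, hu, hu0, huc⟩ := exists_eigen hK (ρ a) (orderOf (a : G)) (orderOf_pos _)
      (by rw [← map_pow, pow_orderOf_eq_one, map_one]) U hU.1 (hU.2 a)
    refine ⟨c, ?_⟩
    let W : Submodule K V := U ⊓ LinearMap.ker (ρ a - c • LinearMap.id)
    have hW : W ∈ S := by
      refine ⟨?_, ?_⟩
      · intro h
        apply hu0
        have : u ∈ W := ⟨hu, by simp [huc]⟩
        simpa [h] using this
      · intro b w hw
        refine ⟨hU.2 b w hw.1, ?_⟩
        have h1 : ρ a w = c • w := by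
          have := hw.2
          simpa [sub_eq_zero] using this
        have h2 : ρ a (ρ b w) = ρ b (ρ a w) := by
          rw [← Module.End.mul_apply, ← Module.End.mul_apply, ← map_mul, ← map_mul,
            hA a a.2 b b.2]
        simp [h2, h1]
    have hWU : W = U := by
      by_contra hne
      exact hmin W hW (lt_of_le_of_ne inf_le_left hne)
    intro u hu
    rw [← hWU] at hu
    have := hu.2
    simpa [sub_eq_zero] using this
  choose χ hχ using key
  obtain ⟨v, hv, hv0⟩ := Submodule.exists_mem_ne_zero_of_ne_bot hU.1
  exact ⟨χ, v, hv0, fun a => hχ a v hv⟩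

lemma PHyp.of_injective {p : ℕ} {G H : Type} [Group G] [Group H] (f : H →* G)
    (hf : Function.Injective f) (h : PHyp p G) : PHyp p H := by
  obtain ⟨C, hC, hab, hp⟩ := h
  refine ⟨C.comap f, inferInstance, ?_, ?_⟩
  · intro a ha b hb
    apply hf
    simpa using hab _ ha _ hb
  · intro g
    obtain ⟨k, hk⟩ := hp (f g)
    exact ⟨k, by simpa using hk⟩

lemma PHyp.of_surjective {p : ℕ} {G H : Type} [Group G] [Group H] (f : G →* H)
    (hf : Function.Surjective f) (h : PHyp p G) : PHyp p H := by
  obtain ⟨C, hC, hab, hp⟩ := h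
  refine ⟨C.map f, hC.map f hf, ?_, ?_⟩
  · rintro _ ⟨a, ha, rfl⟩ _ ⟨b, hb, rfl⟩
    rw [← map_mul, ← map_mul, hab a ha b hb]
  · intro g
    obtain ⟨g, rfl⟩ := hf g
    obtain ⟨k, hk⟩ := hp g
    exact ⟨k, g ^ p ^ k, hk, by simp⟩

/-- In a nonabelian `PHyp` group there is a noncentral abelian normal subgroup. -/
lemma PHyp.exists_noncentral {p : ℕ} (hp : p.Prime) {G : Type} [Group G] [Finite G]
    (h : PHyp p G) (hG : ¬ ∀ a b : G, a * b = b * a) :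
    ∃ A : Subgroup G, A.Normal ∧ (∀ a ∈ A, ∀ b ∈ A, a * b = b * a) ∧
      ∃ a ∈ A, ∃ b, a * b ≠ b * a := by
  obtain ⟨C, hC, hab, hpc⟩ := h
  by_cases hc : ∃ a ∈ C, ∃ b, a * b ≠ b * a
  · exact ⟨C, hC, hab, hc⟩
  push Not at hc
  have hCZ : C ≤ Subgroup.center G := by
    intro c hcC
    rw [Subgroup.mem_center_iff]
    intro g
    exact (hc c hcC g).symm
  have hPG : IsPGroup p (G ⧸ Subgroup.center G) := by
    intro x
    obtain ⟨g, rfl⟩ := QuotientGroup.mk_surjective x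
    obtain ⟨k, hk⟩ := hpc g
    refine ⟨k, ?_⟩
    rw [← QuotientGroup.mk_pow, QuotientGroup.eq_one_iff]
    exact hCZ hk
  have : Fact p.Prime := ⟨hp⟩
  have hnt : Nontrivial (G ⧸ Subgroup.center G) := by
    by_contra hn
    rw [not_nontrivial_iff_subsingleton] at hn
    apply hG
    intro a b
    have : ((b : G) : G ⧸ Subgroup.center G) = 1 := Subsingleton.elim _ _
    rw [QuotientGroup.eq_one_iff, Subgroup.mem_center_iff] at this
    exact this a
  have := hPG.center_nontrivial
  obtain ⟨⟨z, hz⟩, hz1⟩ := exists_ne (1 : Subgroup.center (G ⧸ Subgroup.center G))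
  obtain ⟨a, rfl⟩ := QuotientGroup.mk_surjective z
  have ha : a ∉ Subgroup.center G := by
    intro h
    apply hz1
    ext
    simpa using (QuotientGroup.eq_one_iff a).2 h
  -- the subgroup generated by `a` and the center
  let A : Subgroup G := (Subgroup.zpowers (a : G ⧸ Subgroup.center G)).comap
    (QuotientGroup.mk' _)
  have hAmem : ∀ x ∈ A, ∃ n : ℤ, ∃ c ∈ Subgroup.center G, x = a ^ n * c := by
    intro x hx
    obtain ⟨n, hn⟩ := hx
    refine ⟨n, a ^ (-n) * x, ?_, by group⟩
    rw [← QuotientGroup.eq_one_iff]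
    have hn' : (a : G ⧸ Subgroup.center G) ^ n = (x : G ⧸ Subgroup.center G) := hn
    simp only [QuotientGroup.mk_mul, QuotientGroup.mk_zpow]
    rw [← hn']
    group
  refine ⟨A, ?_, ?_, a, ?_, ?_⟩
  · have : (Subgroup.zpowers (a : G ⧸ Subgroup.center G)).Normal := by
      constructor
      rintro _ ⟨n, rfl⟩ g
      refine ⟨n, ?_⟩
      have h1 : (a : G ⧸ Subgroup.center G) ^ n ∈ Subgroup.center (G ⧸ Subgroup.center G) :=
        Subgroup.zpow_mem _ hz n
      rw [Subgroup.mem_center_iff] at h1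
      have := h1 g
      simp only at *
      rw [this]; group
    exact Subgroup.Normal.comap this _
  · intro x hx y hy
    obtain ⟨n, c, hc, rfl⟩ := hAmem x hx
    obtain ⟨m, d, hd, rfl⟩ := hAmem y hy
    rw [Subgroup.mem_center_iff] at hc hd
    calc a ^ n * c * (a ^ m * d) = a ^ n * (c * a ^ m) * d := by group
      _ = a ^ n * a ^ m * (c * d) := by rw [← hc (a ^ m)]; group
      _ = a ^ m * a ^ n * (d * c) := by rw [← hd c]; group
      _ = a ^ m * (a ^ n * d) * c := by group
      _ = a ^ m * d * (a ^ n * c) := by rw [hd (a ^ n)]; group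
  · exact Subgroup.mem_zpowers _
  · by_contra hcon
    push Not at hcon
    exact ha (Subgroup.mem_center_iff.2 fun g => (hcon g).symm)

end ExtSplit

namespace ExtSplit

/-- If a commuting map has an eigenvector on an irreducible representation, it is scalar. -/
lemma Irr.scalar_of_eigen {K G V : Type} [Field K] [Group G] [AddCommGroup V] [Module K V]
    {ρ : Representation K G V} (hρ : Irr ρ) (f : V →ₗ[K] V)
    (hf : ∀ g v, f (ρ g v) = ρ g (f v)) (c : K) (v : V) (hv : v ≠ 0) (hc : f v = c • v) :
    ∀ w, f w = c • w := by
  have := hρ.2 (LinearMap.ker (f - c • LinearMap.id)) (by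
    intro g u hu
    have h1 : f u = c • u := by simpa [sub_eq_zero] using hu
    simp [hf, h1])
  rcases this with h | h
  · exfalso
    apply hv
    have : v ∈ LinearMap.ker (f - c • LinearMap.id) := by simp [hc]
    simpa [h] using this
  · intro w
    have : w ∈ LinearMap.ker (f - c • LinearMap.id) := by rw [h]; trivial
    simpa [sub_eq_zero] using this

/-- Weight spaces. -/
def wt {K G V : Type} [Field K] [Group G] [AddCommGroup V] [Module K V]
    (ρ : Representation K G V) (A : Subgroup G) (χ : A → K) : Submodule K V where
  carrier := {v | ∀ a : A, ρ a v = χ a • v}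
  zero_mem' := by simp
  add_mem' := by
    intro v w hv hw a
    rw [map_add, hv a, hw a, smul_add]
  smul_mem' := by
    intro c v hv a
    rw [map_smul, hv a, smul_comm]

/-- The stabilizer of a weight. -/
def wtStab {K G V : Type} [Field K] [Group G] [AddCommGroup V] [Module K V]
    (ρ : Representation K G V) (A : Subgroup G) (χ : A → K) : Subgroup G where
  carrier := {g | (∀ v ∈ wt ρ A χ, ρ g v ∈ wt ρ A χ) ∧ (∀ v ∈ wt ρ A χ, ρ g⁻¹ v ∈ wt ρ A χ)}
  one_mem' := by simp
  mul_mem' := by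
    rintro a b ⟨ha, ha'⟩ ⟨hb, hb'⟩
    refine ⟨fun v hv => ?_, fun v hv => ?_⟩
    · rw [map_mul]; exact ha _ (hb _ hv)
    · rw [mul_inv_rev, map_mul]; exact hb' _ (ha' _ hv)
  inv_mem' := by
    rintro a ⟨ha, ha'⟩
    exact ⟨ha', by simpa using ha⟩

lemma wt_mul {K G V : Type} [Field K] [Group G] [AddCommGroup V] [Module K V]
    {ρ : Representation K G V} {A : Subgroup G} {χ : A → K} {v : V} (hv0 : v ≠ 0)
    (hv : v ∈ wt ρ A χ) : χ 1 = 1 ∧ ∀ a b, χ (a * b) = χ a * χ b := by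
  have inj : ∀ c d : K, c • v = d • v → c = d := fun c d h => smul_left_injective K hv0 h
  constructor
  · apply inj
    rw [← hv 1]; simp
  · intro a b
    apply inj
    rw [← hv (a * b)]
    have := hv a
    have := hv b
    simp only [Subgroup.coe_mul, map_mul, Module.End.mul_apply]
    rw [hv b, map_smul, hv a, smul_smul, mul_comm]

lemma split_abelian {K G : Type} [Field K] [Group G] [Finite G]
    (hK : ∀ n : ℕ, 0 < n → ∃ ζ : K, IsPrimitiveRoot ζ n)
    (hG : ∀ a b : G, a * b = b * a) : Split K G := by
  intro V _ _ _ ρ hρ f hf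
  have := hρ.1
  obtain ⟨χ, v, hv0, hv⟩ := exists_weight hK ρ ⊤ (fun a _ b _ => hG a b)
  have hU := hρ.2 (Submodule.span K {v}) (by
    intro g u hu
    obtain ⟨c, rfl⟩ := Submodule.mem_span_singleton.1 hu
    rw [map_smul, show ρ g v = χ ⟨g, trivial⟩ • v from hv ⟨g, trivial⟩]
    exact Submodule.smul_mem _ _ (Submodule.smul_mem _ _ (Submodule.mem_span_singleton_self v)))
  rcases hU with h | h
  · exact absurd (Submodule.span_singleton_eq_bot.1 h) hv0
  · have : f v ∈ Submodule.span K {v} := by rw [h]; trivial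
    obtain ⟨c, hc⟩ := Submodule.mem_span_singleton.1 this
    exact ⟨c, hρ.scalar_of_eigen f hf c v hv0 hc.symm⟩

/-- The weight space as a representation of the stabilizer. -/
def wtRep {K G V : Type} [Field K] [Group G] [AddCommGroup V] [Module K V]
    (ρ : Representation K G V) (A : Subgroup G) (χ : A → K) :
    Representation K (wtStab ρ A χ) (wt ρ A χ) where
  toFun g := (ρ g).restrict (g.2.1)
  map_one' := by ext; simp
  map_mul' := by intro a b; ext; simp

lemma wt_irr {K G V : Type} [Field K] [CharZero K] [Group G] [Finite G] [AddCommGroup V]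
    [Module K V]
    {ρ : Representation K G V} (hρ : Irr ρ) (A : Subgroup G) (hA : A.Normal) (χ : A → K)
    (hne : ∃ v ≠ 0, v ∈ wt ρ A χ) : Irr (wtRep ρ A χ) := by
  classical
  have : Fintype A := Fintype.ofFinite _
  obtain ⟨v0, hv0, hv0w⟩ := hne
  obtain ⟨hχ1, hχm⟩ := wt_mul hv0 hv0w
  have hχinv : ∀ a, χ a⁻¹ * χ a = 1 := fun a => by rw [← hχm, inv_mul_cancel, hχ1]
  refine ⟨⟨⟨⟨v0, hv0w⟩, 0, fun h => hv0 (congrArg Subtype.val h)⟩⟩, ?_⟩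
  intro U hU
  by_cases hbot : U = ⊥
  · exact Or.inl hbot
  right
  obtain ⟨u0, hu0U, hu0⟩ := Submodule.exists_mem_ne_zero_of_ne_bot hbot
  let U' : Submodule K V := U.map (wt ρ A χ).subtype
  let S : Submodule K V := Submodule.span K {w | ∃ g : G, ∃ u ∈ U', w = ρ g u}
  have hS : S = ⊤ := by
    rcases hρ.2 S (by
      intro g s hs
      induction hs using Submodule.span_induction with
      | mem x hx =>
        obtain ⟨h, u, hu, rfl⟩ := hx
        exact Submodule.subset_span ⟨g * h, u, hu, by simp⟩
      | zero => simp
      | add x y _ _ hx hy => rw [map_add]; exact S.add_mem hx hy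
      | smul c x _ hx => rw [map_smul]; exact S.smul_mem c hx) with h | h
    · exfalso
      apply hu0
      have : (u0 : V) ∈ S := Submodule.subset_span ⟨1, u0, ⟨u0, hu0U, rfl⟩, by simp⟩
      rw [h] at this
      exact Subtype.ext (by simpa using this)
    · exact h
  let e : V →ₗ[K] V := ∑ a : A, χ a⁻¹ • ρ a
  have he : ∀ w ∈ wt ρ A χ, e w = (Fintype.card A : K) • w := by
    intro w hw
    simp only [e, LinearMap.sum_apply, LinearMap.smul_apply]
    rw [Finset.sum_congr rfl (g := fun _ => w)]
    · simp [← Nat.cast_smul_eq_nsmul K]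
    · intro a _
      rw [hw a, smul_smul, hχinv, one_smul]
  have hconj : ∀ (g : G) (u : V), u ∈ wt ρ A χ → ∀ a : A,
      ρ a (ρ g u) = χ ⟨g⁻¹ * a * g, by simpa using hA.conj_mem a a.2 g⁻¹⟩ • ρ g u := by
    intro g u hu a
    rw [← map_smul, ← hu, ← Module.End.mul_apply, ← Module.End.mul_apply, ← map_mul, ← map_mul]
    congr 2
    simp only
    group
  have heS : ∀ s ∈ S, e s ∈ U' := by
    intro s hs
    induction hs using Submodule.span_induction with
    | mem x hx =>
      obtain ⟨g, u, hu, rfl⟩ := hx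
      have huw : u ∈ wt ρ A χ := by
        obtain ⟨u, _, rfl⟩ := hu
        exact u.2
      by_cases hg : ∀ a : A, χ ⟨g⁻¹ * a * g, by simpa using hA.conj_mem a a.2 g⁻¹⟩ = χ a
      · have hgJ : g ∈ wtStab ρ A χ := by
          refine ⟨fun v hv a => by rw [hconj g v hv a, hg], fun v hv a => ?_⟩
          rw [hconj g⁻¹ v hv a]
          congr 1
          rw [← hg]
          congr 1
          ext
          simp only
          group
        obtain ⟨u, huU, rfl⟩ := hu
        have h1 := hU ⟨g, hgJ⟩ u huU
        have h2 : ρ g u ∈ wt ρ A χ := hgJ.1 _ u.2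
        change e (ρ g u) ∈ U'
        rw [he _ h2]
        exact U'.smul_mem _ ⟨_, h1, rfl⟩
      · have : e (ρ g u) = 0 := by
          let F : A →* K :=
            { toFun := fun a => χ a⁻¹ * χ ⟨g⁻¹ * a * g, by simpa using hA.conj_mem a a.2 g⁻¹⟩
              map_one' := by
                have h1 : (⟨g⁻¹ * (1 : A) * g, by simp⟩ : A) = 1 := by
                  ext
                  simp
                rw [h1, inv_one, hχ1, mul_one]
              map_mul' := by
                intro a b
                have : (⟨g⁻¹ * (a * b : A) * g, by simpa using hA.conj_mem _ (a * b).2 g⁻¹⟩ : A) =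
                  ⟨g⁻¹ * a * g, by simpa using hA.conj_mem a a.2 g⁻¹⟩ *
                  ⟨g⁻¹ * b * g, by simpa using hA.conj_mem b b.2 g⁻¹⟩ := by
                  ext
                  simp only [Subgroup.coe_mul]
                  group
                rw [this, hχm, mul_inv_rev, hχm]
                ring }
          have hF : F ≠ 1 := by
            intro h
            apply hg
            intro a
            have h1 : χ a⁻¹ * χ ⟨g⁻¹ * a * g, by simpa using hA.conj_mem a a.2 g⁻¹⟩ = 1 :=
              DFunLike.congr_fun h a
            have h2 := hχinv a
            have h3 : χ a⁻¹ ≠ 0 := left_ne_zero_of_mul_eq_one h2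
            exact mul_left_cancel₀ h3 (h1.trans h2.symm)
          have hsum := sum_hom_units_eq_zero F hF
          have : e (ρ g u) = (∑ a : A, F a) • ρ g u := by
            simp only [e, LinearMap.sum_apply, LinearMap.smul_apply, Finset.sum_smul]
            refine Finset.sum_congr rfl fun a _ => ?_
            rw [hconj g u huw a, smul_smul]
            rfl
          rw [this, hsum, zero_smul]
        rw [this]; exact U'.zero_mem
    | zero => simp
    | add x y _ _ hx hy => rw [map_add]; exact U'.add_mem hx hy
    | smul c x _ hx => rw [map_smul]; exact U'.smul_mem c hx
  rw [eq_top_iff]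
  rintro w -
  have h1 : e w ∈ U' := heS _ (by rw [hS]; trivial)
  rw [he _ w.2] at h1
  have hc : (Fintype.card A : K) ≠ 0 := by simp
  rw [Submodule.smul_mem_iff _ hc] at h1
  obtain ⟨u, hu, huw⟩ := h1
  have : u = w := Subtype.ext huw
  rwa [← this]

theorem split_of_pHyp {K : Type} [Field K] [CharZero K]
    (hK : ∀ n : ℕ, 0 < n → ∃ ζ : K, IsPrimitiveRoot ζ n) {p : ℕ} (hp : p.Prime) (n : ℕ) :
    ∀ (G : Type) [Group G] [Finite G], Nat.card G = n → PHyp p G → Split K G := by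
  induction n using Nat.strong_induction_on with
  | _ n ih =>
  intro G _ _ hn hG
  by_cases hab : ∀ a b : G, a * b = b * a
  · exact split_abelian hK hab
  intro V _ _ _ ρ hρ f hf
  by_cases hinj : Function.Injective ρ
  · obtain ⟨A, hA, hAab, a, haA, b, hb⟩ := hG.exists_noncentral hp hab
    have := hρ.1
    obtain ⟨χ, v, hv0, hv⟩ := exists_weight hK ρ A hAab
    have hvw : v ∈ wt ρ A χ := hv
    have hJ : wtStab ρ A χ ≠ ⊤ := by
      intro h
      have htop := hρ.2 (wt ρ A χ) (fun g u hu => by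
        have : g ∈ wtStab ρ A χ := by rw [h]; trivial
        exact this.1 u hu)
      rcases htop with h | h
      · exact hv0 (by simpa [h] using hvw)
      · apply hb
        apply hinj
        ext w
        have hw : ∀ w, ρ a w = χ ⟨a, haA⟩ • w := fun w => by
          have : w ∈ wt ρ A χ := by rw [h]; trivial
          exact this ⟨a, haA⟩
        simp [hw]
    have hcard : Nat.card (wtStab ρ A χ) < n := by
      rw [← hn]
      refine lt_of_le_of_ne (Subgroup.card_le_card_group _) fun h => hJ ?_
      exact Subgroup.eq_top_of_card_eq _ h
    have hsp := ih _ hcard (wtStab ρ A χ) rfl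
      (hG.of_injective (wtStab ρ A χ).subtype Subtype.val_injective)
    have hfw : ∀ w ∈ wt ρ A χ, f w ∈ wt ρ A χ := by
      intro w hw a
      rw [← hf, hw a, map_smul]
    obtain ⟨c, hc⟩ := hsp (wt ρ A χ) (wtRep ρ A χ) (wt_irr hρ A hA χ ⟨v, hv0, hvw⟩)
      (f.restrict hfw) (by
        intro g w
        ext
        exact hf g w)
    have := congrArg Subtype.val (hc ⟨v, hvw⟩)
    exact ⟨c, hρ.scalar_of_eigen f hf c v hv0 this⟩
  · let N := ρ.ker
    have hN : N ≠ ⊥ := fun h => hinj ((MonoidHom.ker_eq_bot_iff ρ).1 h)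
    have hcard : Nat.card (G ⧸ N) < n := by
      have h1 := Subgroup.card_eq_card_quotient_mul_card_subgroup N
      have h2 : 1 < Nat.card N := by
        by_contra hlt
        apply hN
        apply Subgroup.eq_bot_of_card_le
        omega
      have h3 : 0 < Nat.card (G ⧸ N) := Nat.card_pos
      rw [hn] at h1
      nlinarith
    have hsp := ih _ hcard (G ⧸ N) rfl
      (hG.of_surjective (QuotientGroup.mk' N) (QuotientGroup.mk'_surjective N))
    obtain ⟨ρ', hρ'⟩ : ∃ ρ' : Representation K (G ⧸ N) V,
        ∀ g : G, ρ' (QuotientGroup.mk g) = ρ g :=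
      ⟨QuotientGroup.lift N ρ (fun x hx => hx), fun g => QuotientGroup.lift_mk' N _ g⟩
    have hirr : Irr ρ' := by
      refine ⟨hρ.1, fun U hU => hρ.2 U fun g u hu => ?_⟩
      rw [← hρ' g]
      exact hU _ u hu
    apply hsp V ρ' hirr f
    intro g v
    obtain ⟨g, rfl⟩ := QuotientGroup.mk_surjective g
    rw [hρ' g]
    exact hf g v

end ExtSplit

namespace ExtSplit

lemma card_fixedBy_modEq {p : ℕ} [Fact p.Prime] {G S : Type} [Group G] [Finite G] [Finite S]
    [MulAction G S] (g : G) (a : ℕ) :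
    Nat.card (MulAction.fixedBy S g) ≡ Nat.card (MulAction.fixedBy S (g ^ p ^ a)) [MOD p] := by
  set h := g ^ p ^ a with hh
  let A : Subgroup G := Subgroup.zpowers g
  let F := MulAction.fixedBy S h
  have hstab : ∀ b : A, ∀ s ∈ F, (b : G) • s ∈ F := by
    rintro ⟨b, i, rfl⟩ s hs
    change h • s = s at hs
    change h • (g ^ i • s) = g ^ i • s
    rw [← mul_smul, hh, (((Commute.refl g).pow_left (p ^ a)).zpow_right i).eq, mul_smul, ← hh, hs]
  let e : Equiv.Perm F := ⟨fun s => ⟨g • s.1, hstab ⟨g, Subgroup.mem_zpowers g⟩ s.1 s.2⟩,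
      fun s => ⟨g⁻¹ • s.1, hstab ⟨g⁻¹, inv_mem (Subgroup.mem_zpowers g)⟩ s.1 s.2⟩,
      fun s => by simp, fun s => by simp⟩
  have hepow : ∀ (n : ℕ) (s : F), ((e ^ n) s).1 = g ^ n • s.1 := by
    intro n
    induction n with
    | zero => intro s; simp
    | succ n ih =>
      intro s
      rw [pow_succ', Equiv.Perm.mul_apply, pow_succ', mul_smul, ← ih]
      rfl
  have hep : e ^ p ^ a = 1 := by
    ext s
    rw [hepow]
    exact s.2
  have hP : IsPGroup p (Subgroup.zpowers e) := by
    rintro ⟨_, i, rfl⟩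
    refine ⟨a, ?_⟩
    ext s
    change (((e ^ i) ^ p ^ a) s).1 = s.1
    rw [← zpow_natCast, zpow_comm, zpow_natCast, hep, one_zpow]
    rfl
  have key := hP.card_modEq_card_fixedPoints F
  refine Nat.ModEq.trans ?_ key.symm
  have : Nat.card (MulAction.fixedBy S g) =
      Nat.card (MulAction.fixedPoints (Subgroup.zpowers e) F) := by
    have hgF : ∀ s ∈ MulAction.fixedBy S g, s ∈ F := by
      intro s hs
      have : g ∈ MulAction.stabilizer G s := hs
      exact pow_mem this (p ^ a)
    refine Nat.card_congr
      { toFun := fun s => ⟨⟨s.1, hgF _ s.2⟩, ?_⟩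
        invFun := fun s => ⟨s.1.1, ?_⟩
        left_inv := fun s => rfl
        right_inv := fun s => rfl }
    · rintro ⟨f, hf⟩
      change f ⟨s.1, hgF _ s.2⟩ = _
      have h1 : e ∈ MulAction.stabilizer (Equiv.Perm F) (⟨s.1, hgF _ s.2⟩ : F) := by
        change e ⟨s.1, _⟩ = _
        exact Subtype.ext s.2
      have h2 := (Subgroup.zpowers_le.2 h1) hf
      exact h2
    · have := s.2 ⟨e, Subgroup.mem_zpowers e⟩
      exact congrArg Subtype.val this
  rw [this]

lemma exists_coset_set {p : ℕ} (hp : p.Prime) {G : Type} [Group G] [Finite G] (g : G) :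
    ∃ H : Subgroup G, PHyp p H ∧ ¬ p ∣ Nat.card (MulAction.fixedBy (G ⧸ H) g) := by
  have : Fact p.Prime := ⟨hp⟩
  obtain ⟨a, m, hpm, hm⟩ : ∃ a m : ℕ, ¬ p ∣ m ∧ orderOf g = p ^ a * m :=
    Nat.exists_eq_pow_mul_and_not_dvd (orderOf_pos g).ne' p hp.ne_one
  set c := g ^ p ^ a with hc
  have hcord : orderOf c = m := by
    rw [hc, orderOf_pow_of_dvd (pow_ne_zero _ hp.pos.ne') (hm ▸ dvd_mul_right _ _), hm]
    exact Nat.mul_div_cancel_left _ (pow_pos hp.pos _)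
  let C := Subgroup.zpowers c
  let N := Subgroup.normalizer (C : Set G)
  let C' : Subgroup N := C.subgroupOf N
  have hC'n : C'.Normal := Subgroup.normal_in_normalizer
  have hCN : C ≤ N := Subgroup.le_normalizer
  obtain ⟨Q⟩ : Nonempty (Sylow p (N ⧸ C')) := inferInstance
  let H' : Subgroup N := (Q : Subgroup (N ⧸ C')).comap (QuotientGroup.mk' C')
  let H : Subgroup G := H'.map N.subtype
  have hCHle : C' ≤ H' := by
    intro x hx
    have : (QuotientGroup.mk' C') x = 1 := (QuotientGroup.eq_one_iff x).2 hx
    change (QuotientGroup.mk' C') x ∈ (Q : Subgroup (N ⧸ C'))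
    rw [this]; exact one_mem _
  have hpow : ∀ h ∈ H, h ∈ N ∧ ∃ k : ℕ, h ^ p ^ k ∈ C := by
    rintro _ ⟨x, hx, rfl⟩
    refine ⟨x.2, ?_⟩
    have hx' : (QuotientGroup.mk' C') x ∈ (Q : Subgroup (N ⧸ C')) := hx
    obtain ⟨k, hk⟩ := Q.isPGroup' ⟨_, hx'⟩
    refine ⟨k, ?_⟩
    have h2 : ((QuotientGroup.mk' C') x) ^ p ^ k = 1 := congrArg Subtype.val hk
    rw [← map_pow] at h2
    have h3 : x ^ p ^ k ∈ C' := (QuotientGroup.eq_one_iff _).1 h2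
    simpa [C', Subgroup.mem_subgroupOf] using h3
  have hCH : C ≤ H := by
    intro x hx
    exact ⟨⟨x, hCN hx⟩, hCHle hx, rfl⟩
  refine ⟨H, ?_, ?_⟩
  · refine ⟨C.subgroupOf H, ?_, ?_, ?_⟩
    · constructor
      intro n hn h
      have := (Subgroup.mem_normalizer_iff.1 (hpow h h.2).1 n).1 hn
      exact this
    · rintro a ⟨i, hi⟩ b ⟨j, hj⟩
      ext
      change c ^ i = (a : G) at hi
      change c ^ j = (b : G) at hj
      simp only [Subgroup.coe_mul, ← hi, ← hj, ← zpow_add, add_comm]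
    · intro h
      obtain ⟨k, hk⟩ := (hpow h h.2).2
      exact ⟨k, hk⟩
  · have hmod := card_fixedBy_modEq (p := p) (S := G ⧸ H) g a
    rw [← hc] at hmod
    rw [← Nat.modEq_zero_iff_dvd]
    intro h0
    have h1 := hmod.symm.trans h0
    rw [Nat.modEq_zero_iff_dvd] at h1
    have hfix : ∀ x : G, (x : G ⧸ H) ∈ MulAction.fixedBy (G ⧸ H) c ↔ x ∈ N := by
      intro x
      have e1 : (x : G ⧸ H) ∈ MulAction.fixedBy (G ⧸ H) c ↔ x⁻¹ * c * x ∈ H := by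
        rw [MulAction.mem_fixedBy, eq_comm]
        change ((x : G ⧸ H) = ((c * x : G) : G ⧸ H)) ↔ _
        rw [QuotientGroup.eq, mul_assoc]
      rw [e1]
      constructor
      · intro hx
        obtain ⟨k, hk⟩ := (hpow _ hx).2
        have hcop : Nat.Coprime (p ^ k) (orderOf (x⁻¹ * c * x)) := by
          have : orderOf (x⁻¹ * c * x) = m := by
            rw [← hcord]
            have := orderOf_injective (MulAut.conj x⁻¹).toMonoidHom (MulAut.conj x⁻¹).injective c
            simpa using this
          rw [this]
          exact Nat.Coprime.pow_left _ ((Nat.Prime.coprime_iff_not_dvd hp).2 hpm)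
        have hmem : x⁻¹ * c * x ∈ C := by
          obtain ⟨j, hj⟩ := exists_pow_eq_self_of_coprime hcop
          rw [← hj]
          exact Subgroup.pow_mem _ hk j
        have hxinv : x⁻¹ ∈ N := by
          have hle : C.map (MulAut.conj x⁻¹).toMonoidHom ≤ C := by
            rintro _ ⟨_, ⟨i, rfl⟩, rfl⟩
            simp only [map_zpow]
            exact Subgroup.zpow_mem _ (by simpa using hmem) i
          have hce : Nat.card (C.map (MulAut.conj x⁻¹).toMonoidHom) = Nat.card C :=
            (Nat.card_congr (C.equivMapOfInjective _ (MulAut.conj x⁻¹).injective).toEquiv).symm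
          have heq := Subgroup.eq_of_le_of_card_ge hle hce.ge
          rw [Subgroup.mem_normalizer_iff]
          intro h
          constructor
          · intro hh
            have : (MulAut.conj x⁻¹).toMonoidHom h ∈ C.map (MulAut.conj x⁻¹).toMonoidHom := ⟨h, hh, rfl⟩
            exact hle this
          · intro hh
            have hh' : x⁻¹ * h * x⁻¹⁻¹ ∈ C.map (MulAut.conj x⁻¹).toMonoidHom := by rw [heq]; exact hh
            obtain ⟨z, hz, hzz⟩ := hh'
            have : z = h := (MulAut.conj x⁻¹).injective hzz
            exact this ▸ hz
        simpa using N.inv_mem hxinv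
      · intro hx
        have hx' : x⁻¹ ∈ N := N.inv_mem hx
        have := (Subgroup.mem_normalizer_iff.1 hx' c).1 (Subgroup.mem_zpowers c)
        exact hCH (by simpa using this)
    have hcard : Nat.card (MulAction.fixedBy (G ⧸ H) c) = H'.index := by
      rw [Subgroup.index]
      symm
      refine Nat.card_congr (Equiv.ofBijective (fun q : N ⧸ H' => Quotient.liftOn' q
        (fun x : N => (⟨((x : G) : G ⧸ H), (hfix x).2 x.2⟩ : MulAction.fixedBy (G ⧸ H) c)) ?_) ⟨?_, ?_⟩)
      · intro x y hxy
        rw [QuotientGroup.leftRel_apply] at hxy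
        ext
        simp only
        rw [QuotientGroup.eq]
        exact ⟨_, hxy, by simp⟩
      · intro q r
        induction q using QuotientGroup.induction_on with | _ x =>
        induction r using QuotientGroup.induction_on with | _ y =>
        intro hxy
        have h2 : ((x : G) : G ⧸ H) = ((y : G) : G ⧸ H) := congrArg Subtype.val hxy
        rw [QuotientGroup.eq] at h2 ⊢
        obtain ⟨z, hz, hzz⟩ := h2
        have : z = x⁻¹ * y := Subtype.ext (by simpa using hzz)
        rwa [← this]
      · rintro ⟨q, hq⟩
        induction q using QuotientGroup.induction_on with | _ x =>
        exact ⟨((⟨x, (hfix x).1 hq⟩ : N) : N ⧸ H'), rfl⟩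
    rw [hcard, Subgroup.index_comap_of_surjective _ (QuotientGroup.mk'_surjective C')] at h1
    exact Q.not_dvd_index h1

/-- Functions mod `p` counting fixed points of good `G`-sets. -/
def Good (p : ℕ) (G : Type) [Group G] (f : G → ZMod p) : Prop :=
  ∃ (S : Type) (_ : Finite S) (_ : MulAction G S), (∀ s : S, PHyp p (MulAction.stabilizer G s)) ∧
    ∀ g, f g = (Nat.card (MulAction.fixedBy S g) : ZMod p)

lemma Good.add {p : ℕ} {G : Type} [Group G] {f f' : G → ZMod p} (h : Good p G f)
    (h' : Good p G f') : Good p G (f + f') := by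
  obtain ⟨S, _, _, hS, hf⟩ := h
  obtain ⟨S', _, _, hS', hf'⟩ := h'
  let _ : MulAction G (S ⊕ S') :=
    { smul := fun g => Sum.map (g • ·) (g • ·)
      one_smul := by rintro (s | s) <;> simp [HSMul.hSMul] <;> exact one_smul G s
      mul_smul := by rintro g h (s | s) <;> simp [HSMul.hSMul] <;> exact mul_smul g h s }
  have hl : ∀ (g : G) (s : S), g • (Sum.inl s : S ⊕ S') = Sum.inl (g • s) := fun _ _ => rfl
  have hr : ∀ (g : G) (s : S'), g • (Sum.inr s : S ⊕ S') = Sum.inr (g • s) := fun _ _ => rfl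
  refine ⟨S ⊕ S', inferInstance, inferInstance, ?_, ?_⟩
  · rintro (s | s)
    · have : MulAction.stabilizer G (Sum.inl s : S ⊕ S') = MulAction.stabilizer G s := by
        ext g; simp [MulAction.mem_stabilizer_iff, hl]
      rw [this]; exact hS s
    · have : MulAction.stabilizer G (Sum.inr s : S ⊕ S') = MulAction.stabilizer G s := by
        ext g; simp [MulAction.mem_stabilizer_iff, hr]
      rw [this]; exact hS' s
  · intro g
    rw [Pi.add_apply, hf, hf', ← Nat.cast_add, ← Nat.card_sum]
    congr 1
    refine Nat.card_congr (Equiv.trans ?_ (Equiv.subtypeSum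
      (p := fun x : S ⊕ S' => x ∈ MulAction.fixedBy (S ⊕ S') g)).symm)
    refine Equiv.sumCongr (Equiv.subtypeEquivRight ?_) (Equiv.subtypeEquivRight ?_)
    · intro s; simp [MulAction.mem_fixedBy, hl]
    · intro s; simp [MulAction.mem_fixedBy, hr]

lemma Good.mul {p : ℕ} {G : Type} [Group G] {f f' : G → ZMod p} (h : Good p G f)
    (h' : Good p G f') : Good p G (f * f') := by
  obtain ⟨S, _, _, hS, hf⟩ := h
  obtain ⟨S', _, _, hS', hf'⟩ := h'
  refine ⟨S × S', inferInstance, inferInstance, ?_, ?_⟩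
  · rintro ⟨s, s'⟩
    have hle : MulAction.stabilizer G (s, s') ≤ MulAction.stabilizer G s := by
      intro g hg
      rw [MulAction.mem_stabilizer_iff] at hg ⊢
      exact congrArg Prod.fst hg
    exact (hS s).of_injective (Subgroup.inclusion hle) (Subgroup.inclusion_injective hle)
  · intro g
    rw [Pi.mul_apply, hf, hf', ← Nat.cast_mul, ← Nat.card_prod]
    congr 1
    exact Nat.card_congr
      { toFun := fun s => ⟨(s.1.1, s.2.1), Prod.ext s.1.2 s.2.2⟩
        invFun := fun s => (⟨s.1.1, congrArg Prod.fst s.2⟩, ⟨s.1.2, congrArg Prod.snd s.2⟩)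
        left_inv := fun s => rfl
        right_inv := fun s => rfl }

lemma good_one {p : ℕ} (hp : p.Prime) (G : Type) [Group G] [Finite G] :
    Good p G 1 := by
  classical
  have : Fact p.Prime := ⟨hp⟩
  have : Fintype G := Fintype.ofFinite G
  have hz : Good p G 0 := ⟨Empty, inferInstance,
    { smul := fun _ => id, one_smul := fun x => x.elim, mul_smul := fun _ _ x => x.elim },
    fun s => s.elim, fun g => by simp⟩
  have hnsmul : ∀ (n : ℕ) (f : G → ZMod p), Good p G f → Good p G (n • f) := by
    intro n f hf
    induction n with
    | zero => simpa using hz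
    | succ n ih => rw [succ_nsmul]; exact ih.add hf
  have hneg : ∀ (f : G → ZMod p), Good p G f → Good p G (-f) := by
    intro f hf
    have : -f = (p - 1) • f := by
      ext g
      have hp1 : 1 ≤ p := hp.one_le
      simp [nsmul_eq_mul, Nat.cast_sub hp1]
    rw [this]; exact hnsmul _ f hf
  have hloc : ∀ g : G, ∃ f, Good p G f ∧ f g = 1 := by
    intro g
    obtain ⟨H, hH, hdvd⟩ := exists_coset_set hp g
    have hgood : Good p G (fun x => (Nat.card (MulAction.fixedBy (G ⧸ H) x) : ZMod p)) := by
      refine ⟨G ⧸ H, inferInstance, inferInstance, ?_, fun _ => rfl⟩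
      intro s
      induction s using QuotientGroup.induction_on with | _ x =>
      have hst : ∀ y ∈ MulAction.stabilizer G (x : G ⧸ H), x⁻¹ * y * x ∈ H := by
        intro y hy
        rw [MulAction.mem_stabilizer_iff, eq_comm] at hy
        change ((x : G ⧸ H) = ((y * x : G) : G ⧸ H)) at hy
        rwa [QuotientGroup.eq, ← mul_assoc] at hy
      let φ : MulAction.stabilizer G (x : G ⧸ H) →* H :=
        { toFun := fun y => ⟨x⁻¹ * y * x, hst y y.2⟩
          map_one' := by ext; simp
          map_mul' := by intro a b; ext; simp; group }
      refine hH.of_injective φ ?_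
      intro a b hab
      have : x⁻¹ * (a : G) * x = x⁻¹ * b * x := congrArg Subtype.val hab
      ext
      simpa using this
    have hpowg : ∀ n : ℕ, ∀ f, Good p G f → Good p G (f ^ (n + 1)) := by
      intro n f hf
      induction n with
      | zero => simpa using hf
      | succ n ih => rw [pow_succ]; exact ih.mul hf
    have h2 := hp.two_le
    refine ⟨_, hpowg (p - 2) _ hgood, ?_⟩
    have hne : (Nat.card (MulAction.fixedBy (G ⧸ H) g) : ZMod p) ≠ 0 := by
      rwa [Ne, ZMod.natCast_eq_zero_iff]
    have := ZMod.pow_card_sub_one_eq_one hne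
    rw [Pi.pow_apply]
    rwa [show p - 2 + 1 = p - 1 by omega]
  have hfin : ∀ F : Finset G, ∃ f, Good p G f ∧ ∀ g ∈ F, f g = 1 := by
    intro F
    induction F using Finset.induction_on with
    | empty => exact ⟨0, hz, by simp⟩
    | insert a F _ ih =>
      obtain ⟨f, hf, hf1⟩ := ih
      obtain ⟨f', hf', hf1'⟩ := hloc a
      refine ⟨f + f' + -(f * f'), (hf.add hf').add (hneg _ (hf.mul hf')), ?_⟩
      intro g hg
      rcases Finset.mem_insert.1 hg with rfl | hg
      · simp [hf1']
      · simp [hf1 g hg]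
  obtain ⟨f, hf, hf1⟩ := hfin Finset.univ
  have : f = 1 := funext fun g => hf1 g (Finset.mem_univ g)
  exact this ▸ hf

theorem exists_gset {p : ℕ} (hp : p.Prime) (G : Type) [Group G] [Finite G] (k : ℕ) :
    ∃ (S : Type) (_ : Finite S) (_ : MulAction G S),
      (∀ s : S, PHyp p (MulAction.stabilizer G s)) ∧
      ∀ g : G, Nat.card (MulAction.fixedBy S g) ≡ 1 [MOD p ^ k] := by
  have : Fact p.Prime := ⟨hp⟩
  obtain ⟨S, _, _, hS, hf⟩ := good_one hp G
  let M := Nat.totient (p ^ k)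
  have hM : 0 < M := Nat.totient_pos.2 (pow_pos hp.pos k)
  refine ⟨Fin M → S, inferInstance, inferInstance, ?_, ?_⟩
  · intro s
    have hle : MulAction.stabilizer G s ≤ MulAction.stabilizer G (s ⟨0, hM⟩) := by
      intro g hg
      rw [MulAction.mem_stabilizer_iff] at hg ⊢
      exact congrFun hg _
    exact (hS _).of_injective (Subgroup.inclusion hle) (Subgroup.inclusion_injective hle)
  · intro g
    have hc : Nat.card (MulAction.fixedBy (Fin M → S) g) =
        Nat.card (MulAction.fixedBy S g) ^ M := by
      have e : MulAction.fixedBy (Fin M → S) g ≃ (Fin M → MulAction.fixedBy S g) :=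
        { toFun := fun s i => ⟨s.1 i, congrFun s.2 i⟩
          invFun := fun s => ⟨fun i => (s i).1, funext fun i => (s i).2⟩
          left_inv := fun s => rfl
          right_inv := fun s => rfl }
      rw [Nat.card_congr e, Nat.card_fun]
      simp
    rw [hc]
    apply Nat.ModEq.pow_totient
    apply Nat.Coprime.pow_right
    rw [Nat.coprime_comm, Nat.Prime.coprime_iff_not_dvd hp, ← ZMod.natCast_eq_zero_iff, ← hf g]
    simp

end ExtSplit

namespace ExtSplit
open Representation

lemma split_end {K H S : Type} [Field K] [Group H] (hs : Split K H) [AddCommGroup S] [Module K S]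
    [Module (MonoidAlgebra K H) S] [IsScalarTower K (MonoidAlgebra K H) S] [FiniteDimensional K S]
    [IsSimpleModule (MonoidAlgebra K H) S] (f : Module.End (MonoidAlgebra K H) S) :
    ∃ c : K, f = algebraMap K _ c := by
  have hirr : Irr (Representation.ofModule' (k := K) (G := H) S) := by
    refine ⟨IsSimpleModule.nontrivial (MonoidAlgebra K H) S, ?_⟩
    intro U hU
    let U' : Submodule (MonoidAlgebra K H) S :=
      { U with
        smul_mem' := by
          intro c x hx
          induction c using MonoidAlgebra.induction_on with
          | of g => exact hU g x hx
          | add a b ha hb => rw [add_smul]; exact U.add_mem ha hb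
          | smul r a ha => rw [smul_assoc]; exact U.smul_mem r ha }
    rcases eq_bot_or_eq_top U' with h | h
    · left
      ext x
      exact (SetLike.ext_iff.1 h x)
    · right
      ext x
      exact (SetLike.ext_iff.1 h x)
  obtain ⟨c, hc⟩ := hs S _ hirr (f.restrictScalars K) (fun g v => by
    exact f.map_smul (MonoidAlgebra.of K H g) v)
  exact ⟨c, LinearMap.ext hc⟩

lemma sq_dvd_finrank {K H V D : Type} [Field K] [CharZero K] [Group H] [Finite H] (hs : Split K H)
    [AddCommGroup V] [Module K V] [FiniteDimensional K V] (ρ : Representation K H V)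
    [DivisionRing D] [Algebra K D] (φ : D →ₐ[K] IntertwiningMap ρ ρ) :
    Module.finrank K D ^ 2 ∣ Module.finrank K (IntertwiningMap ρ ρ) := by
  have : NeZero (Nat.card H : K) := ⟨by exact_mod_cast Nat.card_pos.ne'⟩
  have : IsSemisimpleModule (MonoidAlgebra K H) ρ.asModule := inferInstance
  have : Module.Finite (MonoidAlgebra K H) ρ.asModule := Module.Finite.of_restrictScalars_finite K _ _
  obtain ⟨n, S, d, hS, hd, ⟨e⟩⟩ :=
    IsSemisimpleModule.exists_end_algEquiv_pi_matrix_end K (MonoidAlgebra K H) ρ.asModule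
  have hfin : ∀ i, FiniteDimensional K (S i) := fun i =>
    FiniteDimensional.of_injective ((S i).subtype.restrictScalars K) Subtype.val_injective
  have hbij : ∀ i, Function.Bijective (Algebra.ofId K (Module.End (MonoidAlgebra K H) (S i))) := by
    intro i
    have := hS i
    have := hfin i
    have : Nontrivial (Module.End (MonoidAlgebra K H) (S i)) := by
      have := IsSimpleModule.nontrivial (MonoidAlgebra K H) (S i)
      infer_instance
    refine ⟨RingHom.injective _, fun f => ?_⟩
    obtain ⟨c, hc⟩ := split_end hs f
    exact ⟨c, hc.symm⟩
  let ei : ∀ i, K ≃ₐ[K] Module.End (MonoidAlgebra K H) (S i) := fun i => AlgEquiv.ofBijective _ (hbij i)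
  let e2 : IntertwiningMap ρ ρ ≃ₐ[K] Π i, Matrix (Fin (d i)) (Fin (d i)) K :=
    (IntertwiningMap.equivAlgEnd (ρ := ρ)).trans
      (e.trans (AlgEquiv.piCongrRight fun i => (ei i).symm.mapMatrix))
  rw [e2.toLinearEquiv.finrank_eq, Module.finrank_pi_fintype]
  apply Finset.dvd_sum
  intro i _
  have hdim : Module.finrank K (Matrix (Fin (d i)) (Fin (d i)) K) = d i ^ 2 := by
    simp [Module.finrank_matrix, sq]
  rw [hdim]
  apply pow_dvd_pow_of_dvd
  let θ : D →ₐ[K] Module.End K (Fin (d i) → K) :=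
    (Matrix.toLinAlgEquiv' (R := K) (n := Fin (d i))).toAlgHom.comp
      ((Pi.evalAlgHom K _ i).comp (e2.toAlgHom.comp φ))
  let _ : Module D (Fin (d i) → K) := Module.compHom _ θ.toRingHom
  have hsm : ∀ (a : D) (v : Fin (d i) → K), a • v = θ a v := fun _ _ => rfl
  have : IsScalarTower K D (Fin (d i) → K) := ⟨fun k a v => by
    rw [hsm, hsm, map_smul]; rfl⟩
  have := Module.finrank_mul_finrank K D (Fin (d i) → K)
  rw [Module.finrank_fin_fun] at this
  exact Dvd.intro _ this

/-- Traces of finite order endomorphisms are integral. -/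
lemma trace_integral {K V : Type} [Field K] [AddCommGroup V] [Module K V]
    [FiniteDimensional K V] (f : Module.End K V) (n : ℕ) (hn : 0 < n) (hf : f ^ n = 1) :
    IsIntegral ℤ (LinearMap.trace K V f) := by
  classical
  let b := Module.finBasis K V
  let A := LinearMap.toMatrix b b f
  have hA : A ^ n = 1 := by
    rw [LinearMap.toMatrix_pow, hf, LinearMap.toMatrix_one]
  rw [LinearMap.trace_eq_matrix_trace K b]
  change IsIntegral ℤ A.trace
  let L := AlgebraicClosure K
  let B : Matrix _ _ L := (algebraMap K L).mapMatrix A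
  have hB : B ^ n = 1 := by rw [← map_pow, hA, map_one]
  have htr : algebraMap K L A.trace = B.trace := by
    simp [B, Matrix.trace, map_sum]
  rw [← isIntegral_algebraMap_iff (B := L) (FaithfulSMul.algebraMap_injective K L), htr,
    Matrix.trace_eq_sum_roots_charpoly]
  apply IsIntegral.multiset_sum
  intro x hx
  have hx1 : B.charpoly.IsRoot x := Polynomial.isRoot_of_mem_roots hx
  have hx2 : Module.End.HasEigenvalue (Matrix.toLin' B) x := by
    rw [Module.End.hasEigenvalue_iff_isRoot_charpoly, Matrix.charpoly_toLin']
    exact hx1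
  obtain ⟨v, hv⟩ := hx2.exists_hasEigenvector
  have hpow := hv.pow_apply n
  rw [← Matrix.toLin'_pow, hB, Matrix.toLin'_one, LinearMap.id_apply] at hpow
  have h1 : x ^ n = 1 := by
    have : (x ^ n - 1) • v = 0 := by rw [sub_smul, ← hpow, one_smul, sub_self]
    rcases smul_eq_zero.1 this with h | h
    · exact sub_eq_zero.1 h
    · exact absurd h hv.2
  exact IsIntegral.of_pow hn (h1 ▸ isIntegral_one)

end ExtSplit

namespace ExtSplit
open Representation

lemma Irr.isSimpleModule {K G V : Type} [Field K] [Group G] [AddCommGroup V] [Module K V]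
    {ρ : Representation K G V} (h : Irr ρ) : IsSimpleModule (MonoidAlgebra K G) ρ.asModule := by
  rw [← irreducible_iff_isSimpleModule_asModule]
  have := h.1
  have : Nontrivial (Subrepresentation ρ) := by
    refine ⟨⊥, ⊤, fun hh => ?_⟩
    have h2 : (⊥ : Submodule K V) = ⊤ := congrArg Subrepresentation.toSubmodule hh
    exact bot_ne_top h2
  refine { eq_bot_or_eq_top := fun U => ?_ }
  rcases h.2 U.toSubmodule (fun g u hu => U.apply_mem_toSubmodule g hu) with h1 | h1
  · left; exact Subrepresentation.toSubmodule_injective h1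
  · right; exact Subrepresentation.toSubmodule_injective h1

lemma char_sum {K G V W : Type} [Field K] [CharZero K] [Group G] [Fintype G] [AddCommGroup V] [Module K V]
    [AddCommGroup W] [Module K W] [FiniteDimensional K V] [FiniteDimensional K W]
    (ρ : Representation K G V) (σ : Representation K G W) :
    ∑ g : G, σ.character g * ρ.character g⁻¹ =
      (Nat.card G * Module.finrank K (IntertwiningMap ρ σ) : ℕ) := by
  have h0 : (Nat.card G : K) ≠ 0 := by exact_mod_cast Nat.card_pos.ne'
  let _ : Invertible (Nat.card G : K) := invertibleOfNonzero h0
  have := card_inv_mul_sum_char_mul_char_eq_finrank ρ σ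
  rw [Nat.cast_mul, ← this, mul_inv_cancel_left₀ h0]

lemma sum_orbit_dvd {G S : Type} [Group G] [Finite G] [Fintype S] [MulAction G S] (f : S → ℕ) (m : ℕ)
    (hf : ∀ s, Nat.card (MulAction.stabilizer G s) * m ∣ f s)
    (hc : ∀ (g : G) s, f (g • s) = f s) : Nat.card G * m ∣ ∑ s, f s := by
  classical
  rw [← Finset.sum_fiberwise Finset.univ (fun s => (Quotient.mk (MulAction.orbitRel G S) s))]
  apply Finset.dvd_sum
  intro o _
  induction o using Quotient.inductionOn with | _ s =>
  have h1 : ∀ t ∈ Finset.univ.filter (fun t => (Quotient.mk (MulAction.orbitRel G S) t) = Quotient.mk _ s),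
      f t = f s := by
    intro t ht
    have h2 := (Finset.mem_filter.1 ht).2
    obtain ⟨g, rfl⟩ := Quotient.exact h2
    exact hc g s
  rw [Finset.sum_congr rfl h1, Finset.sum_const, smul_eq_mul]
  have hcard : (Finset.univ.filter (fun t => (Quotient.mk (MulAction.orbitRel G S) t) = Quotient.mk _ s)).card
      = Nat.card (MulAction.orbit G s) := by
    rw [Nat.card_eq_fintype_card, Fintype.card_subtype]
    congr 1
    ext t
    simp only [Finset.mem_filter, Finset.mem_univ, true_and]
    exact Quotient.eq
  rw [hcard, ← Nat.card_congr (MulAction.orbitProdStabilizerEquivGroup G s), Nat.card_prod, mul_assoc]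
  exact Nat.mul_dvd_mul_left _ (hf s)

lemma int_dvd_of_integral {K : Type} [Field K] [CharZero K] (a n : ℤ) (ha : a ≠ 0) (z : K)
    (hz : IsIntegral ℤ z) (h : (n : K) = a * z) : a ∣ n := by
  have ha' : (a : K) ≠ 0 := by exact_mod_cast ha
  have hzq : z = algebraMap ℚ K ((n : ℚ) / a) := by
    rw [map_div₀]; simp [h]; field_simp
  rw [hzq, isIntegral_algebraMap_iff (FaithfulSMul.algebraMap_injective ℚ K),
    IsIntegrallyClosed.isIntegral_iff] at hz
  obtain ⟨b, hb⟩ := hz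
  refine ⟨b, ?_⟩
  have ha2 : (a : ℚ) ≠ 0 := by exact_mod_cast ha
  have hb' : (b : ℚ) = n / a := hb
  have : (n : ℚ) = a * b := by rw [hb']; field_simp
  exact_mod_cast this

theorem split_all {K : Type} [Field K] [CharZero K]
    (hK : ∀ n : ℕ, 0 < n → ∃ ζ : K, IsPrimitiveRoot ζ n) (G : Type) [Group G] [Finite G] :
    Split K G := by
  classical
  have : Fintype G := Fintype.ofFinite G
  intro V _ _ _ ρ hirr f hf
  have := hirr.isSimpleModule
  let D := Module.End (MonoidAlgebra K G) ρ.asModule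
  let eD : IntertwiningMap ρ ρ ≃ₐ[K] D := IntertwiningMap.equivAlgEnd (ρ := ρ)
  have : FiniteDimensional K (IntertwiningMap ρ ρ) :=
    FiniteDimensional.of_injective (IntertwiningMap.toLinearMapl ρ ρ)
      (IntertwiningMap.toLinearMap_injective ρ ρ)
  have : FiniteDimensional K D := Module.Finite.equiv eD.toLinearEquiv
  set q := Module.finrank K D with hq
  have hq' : Module.finrank K (IntertwiningMap ρ ρ) = q := eD.toLinearEquiv.finrank_eq
  have hqpos : 0 < q := Module.finrank_pos
  let χ := ρ.character
  have hone : q = 1 := by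
    by_contra hne
    obtain ⟨p, hp, hpq⟩ := Nat.exists_prime_and_dvd hne
    obtain ⟨S, _, _, hS, hfix⟩ := exists_gset hp G (Nat.card G * q)
    have : Fintype S := Fintype.ofFinite S
    let ρs : ∀ s : S, Representation K (MulAction.stabilizer G s) V :=
      fun s => ρ.comp (MulAction.stabilizer G s).subtype
    let φ : ∀ s : S, D →ₐ[K] IntertwiningMap (ρs s) (ρs s) := fun s =>
      ({ toFun := fun a => ⟨a.toLinearMap, fun g => a.isIntertwining' g⟩
         map_one' := rfl
         map_mul' := fun _ _ => rfl
         map_zero' := rfl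
         map_add' := fun _ _ => rfl
         commutes' := fun _ => rfl } : IntertwiningMap ρ ρ →ₐ[K] IntertwiningMap (ρs s) (ρs s)).comp
      eD.symm.toAlgHom
    have hsq : ∀ s, q ^ 2 ∣ Module.finrank K (IntertwiningMap (ρs s) (ρs s)) := fun s =>
      sq_dvd_finrank (split_of_pHyp hK hp _ _ rfl (hS s)) (ρs s) (φ s)
    let F : S → ℕ := fun s => Nat.card (MulAction.stabilizer G s) *
      Module.finrank K (IntertwiningMap (ρs s) (ρs s))
    have hF : ∀ s, (F s : K) = ∑ g : G, if g • s = s then χ g * χ g⁻¹ else 0 := by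
      intro s
      have := char_sum (ρs s) (ρs s)
      rw [← Finset.sum_filter]
      refine this.symm.trans ?_
      refine (Finset.sum_subtype _ (fun g => ?_) (fun g => χ g * χ g⁻¹)).symm
      simp [MulAction.mem_stabilizer_iff]
    have hFc : ∀ (h : G) s, F (h • s) = F s := by
      intro h s
      have : (F (h • s) : K) = F s := by
        rw [hF, hF]
        refine Fintype.sum_equiv (MulAut.conj h⁻¹).toEquiv _ _ (fun g => ?_)
        have e1 : χ (h⁻¹ * g * h) = χ g := by
          have := ρ.char_conj g h⁻¹
          simpa using this
        have e2 : χ (h⁻¹ * g * h)⁻¹ = χ g⁻¹ := by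
          have := ρ.char_conj g⁻¹ h⁻¹
          simpa [mul_assoc] using this
        have e3 : ((MulAut.conj h⁻¹).toEquiv g) = h⁻¹ * g * h := by simp
        rw [e3, e1, e2]
        have e4 : (h⁻¹ * g * h) • s = s ↔ g • h • s = h • s := by
          rw [mul_smul, mul_smul, inv_smul_eq_iff]
        simp only [e4]
      exact_mod_cast this
    have hdvd : Nat.card G * q ^ 2 ∣ ∑ s, F s :=
      sum_orbit_dvd F (q ^ 2) (fun s => Nat.mul_dvd_mul_left _ (hsq s)) hFc
    obtain ⟨t, ht⟩ := hdvd
    have hsum : ((∑ s, F s : ℕ) : K) = ∑ g : G, (Nat.card (MulAction.fixedBy S g) : K) * (χ g * χ g⁻¹) := by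
      push_cast
      simp_rw [hF]
      rw [Finset.sum_comm]
      refine Finset.sum_congr rfl fun g _ => ?_
      rw [← Finset.sum_filter, Finset.sum_const, nsmul_eq_mul, Nat.card_eq_fintype_card,
        Fintype.card_subtype]
      rfl
    have hG : ((Nat.card G * q : ℕ) : K) = ∑ g : G, χ g * χ g⁻¹ := by
      rw [← hq']; exact (char_sum ρ ρ).symm
    set k := Nat.card G * q with hk
    have hc : ∀ g : G, ∃ c : ℤ, (Nat.card (MulAction.fixedBy S g) : ℤ) - 1 = (p : ℤ) ^ k * c := by
      intro g
      have := (Nat.modEq_iff_dvd.1 (hfix g).symm)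
      exact_mod_cast this
    choose c hc using hc
    have hInt : ∀ g, IsIntegral ℤ (χ g) := by
      intro g
      refine trace_integral (ρ g) (Nat.card G) Nat.card_pos ?_
      rw [← map_pow, pow_card_eq_one', map_one]
    have hmain := int_dvd_of_integral (K := K) ((p : ℤ) ^ k) ((∑ s, F s : ℕ) - (k : ℕ))
      (pow_ne_zero _ (by exact_mod_cast hp.ne_zero)) (∑ g : G, (c g : K) * (χ g * χ g⁻¹))
      (IsIntegral.sum _ fun g _ => ((isIntegral_algebraMap (R := ℤ) (x := c g)).mul
        ((hInt g).mul (hInt g⁻¹)))) (by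
        rw [Int.cast_sub, Int.cast_natCast, Int.cast_natCast, hsum, hG, ← Finset.sum_sub_distrib,
          Finset.mul_sum]
        refine Finset.sum_congr rfl fun g _ => ?_
        have h1 : ((Nat.card (MulAction.fixedBy S g) : K) - 1) = (p : K) ^ k * c g := by
          exact_mod_cast congrArg (Int.cast : ℤ → K) (hc g)
        push_cast
        linear_combination (χ g * χ g⁻¹) * h1)
    rw [ht] at hmain
    have hfac : (((Nat.card G * q ^ 2 * t : ℕ) : ℤ) - (k : ℕ)) = (k : ℤ) * (q * t - 1) := by
      rw [hk]; push_cast; ring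
    rw [hfac] at hmain
    have hcop : IsCoprime ((p : ℤ) ^ k) (q * t - 1) := by
      apply IsCoprime.pow_left
      obtain ⟨r, hr⟩ := hpq
      refine ⟨r * t, -1, ?_⟩
      rw [hr]; push_cast; ring
    have h2 : (p : ℤ) ^ k ∣ k := hcop.dvd_of_dvd_mul_right hmain
    have h3 : p ^ k ∣ k := by exact_mod_cast h2
    have hkpos : 0 < k := Nat.mul_pos Nat.card_pos hqpos
    exact absurd (Nat.le_of_dvd hkpos h3) (not_le.2 (Nat.lt_pow_self hp.one_lt))
  rw [hone] at hq'
  let f' : IntertwiningMap ρ ρ := ⟨f, fun g => LinearMap.ext fun v => hf g v⟩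
  have h1 : (1 : IntertwiningMap ρ ρ) ≠ 0 := by
    intro h
    have := hirr.1
    obtain ⟨v, hv⟩ := exists_ne (0 : V)
    exact hv (congrArg (fun a : IntertwiningMap ρ ρ => a v) h)
  obtain ⟨c, hc⟩ := (finrank_eq_one_iff_of_nonzero' _ h1).1 hq' f'
  exact ⟨c, fun v => (congrArg (fun a : IntertwiningMap ρ ρ => a v) hc).symm⟩

end ExtSplit

namespace ExtSplit
open Representation CategoryTheory

section bridge
variable {K G : Type} [Field K] [Group G]

/-- Build a morphism of `FDRep` from an equivariant linear map. -/
def mkHom {V W : FDRep K G} (f : V →ₗ[K] W) (hf : ∀ g v, f (V.ρ g v) = W.ρ g (f v)) : V ⟶ W :=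
  ⟨InducedCategory.homMk (ModuleCat.ofHom f), fun g => by
    ext v
    exact hf g v⟩

/-- The underlying linear map of a morphism of `FDRep`. -/
def linHom' {V W : FDRep K G} (f : V ⟶ W) : V →ₗ[K] W := f.hom.hom.hom

lemma linHom'_comm {V W : FDRep K G} (f : V ⟶ W) (g : G) (v : V) :
    linHom' f (V.ρ g v) = W.ρ g (linHom' f v) :=
  ConcreteCategory.congr_hom ((forget (FGModuleCat K)).congr_map (f.comm g)) v

lemma linHom'_ext {V W : FDRep K G} {f g : V ⟶ W} (h : linHom' f = linHom' g) : f = g := by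
  ext v
  exact LinearMap.congr_fun h v

@[simp] lemma linHom'_comp {U V W : FDRep K G} (f : U ⟶ V) (g : V ⟶ W) :
    linHom' (f ≫ g) = (linHom' g).comp (linHom' f) := rfl
@[simp] lemma linHom'_id {V : FDRep K G} : linHom' (𝟙 V) = LinearMap.id := rfl
@[simp] lemma linHom'_zero {V W : FDRep K G} : linHom' (0 : V ⟶ W) = 0 := rfl
@[simp] lemma linHom'_mkHom {V W : FDRep K G} (f : V →ₗ[K] W) (hf) :
    linHom' (mkHom f hf) = f := rfl

/-- Invariant subspaces as representations. -/
def subRep {V : FDRep K G} (U : Submodule K V) (hU : ∀ g, ∀ u ∈ U, V.ρ g u ∈ U) :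
    Representation K G U where
  toFun g := (V.ρ g).restrict (hU g)
  map_one' := by ext; simp
  map_mul' a b := by ext; simp

/-- The inclusion of an invariant subspace. -/
def subHom {V : FDRep K G} (U : Submodule K V) (hU : ∀ g, ∀ u ∈ U, V.ρ g u ∈ U) :
    FDRep.of (subRep U hU) ⟶ V :=
  mkHom (V := FDRep.of (subRep U hU)) U.subtype (fun _ _ => rfl)

lemma irr_of_simple (V : FDRep K G) [hV : Simple V] : Irr V.ρ := by
  constructor
  · by_contra h
    rw [not_nontrivial_iff_subsingleton] at h
    refine id_nonzero V (linHom'_ext ?_)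
    ext v
    exact Subsingleton.elim _ _
  · intro U hU
    by_cases h0 : U = ⊥
    · exact Or.inl h0
    right
    have hm : Mono (subHom U hU) := by
      constructor
      intro Z a b hab
      refine linHom'_ext (LinearMap.ext fun v => ?_)
      have := LinearMap.congr_fun (congrArg linHom' hab) v
      exact Subtype.ext this
    have hne : subHom U hU ≠ 0 := by
      intro h
      apply h0
      rw [eq_bot_iff]
      intro u hu
      exact LinearMap.congr_fun (congrArg linHom' h) ⟨u, hu⟩
    have hiso : IsIso (subHom U hU) := (Simple.mono_isIso_iff_nonzero _).2 hne
    rw [eq_top_iff]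
    intro v _
    have := LinearMap.congr_fun (congrArg linHom' (IsIso.inv_hom_id (subHom U hU))) v
    have h2 : ((linHom' (inv (subHom U hU)) v : U) : V) = v := this
    rw [← h2]
    exact Subtype.property _

lemma simple_of_irr (V : FDRep K G) (h : Irr V.ρ) : Simple V := by
  constructor
  intro W f hf
  have hinj : Function.Injective (linHom' f) := by
    rw [← LinearMap.ker_eq_bot]
    have hinv : ∀ g, ∀ u ∈ LinearMap.ker (linHom' f), W.ρ g u ∈ LinearMap.ker (linHom' f) := by
      intro g u hu
      rw [LinearMap.mem_ker] at hu ⊢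
      rw [linHom'_comm, hu, map_zero]
    have hz : subHom (LinearMap.ker (linHom' f)) hinv ≫ f = 0 ≫ f := by
      refine linHom'_ext (LinearMap.ext fun v => ?_)
      exact (show linHom' f (v.1) = 0 from v.2).trans
        (show (0 : V) = linHom' f 0 from (map_zero _).symm)
    have h2 := (cancel_mono f).1 hz
    rw [eq_bot_iff]
    intro u hu
    exact LinearMap.congr_fun (congrArg linHom' h2) ⟨u, hu⟩
  constructor
  · intro hi h0
    have := h.1
    obtain ⟨v, hv⟩ := exists_ne (0 : V)
    apply hv
    have := LinearMap.congr_fun (congrArg linHom' (IsIso.inv_hom_id f)) v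
    have h2 : linHom' f (linHom' (inv f) v) = v := this
    have h3 : linHom' f = 0 := congrArg linHom' h0
    rw [← h2, h3]
    rfl
  · intro hne
    have hr : LinearMap.range (linHom' f) = ⊤ := by
      rcases h.2 (LinearMap.range (linHom' f)) (by
        rintro g _ ⟨w, rfl⟩
        exact ⟨W.ρ g w, linHom'_comm f g w⟩) with hb | ht
      · exact absurd (linHom'_ext (LinearMap.range_eq_bot.1 hb)) hne
      · exact ht
    let e := LinearEquiv.ofBijective (linHom' f) ⟨hinj, LinearMap.range_eq_top.1 hr⟩
    refine ⟨mkHom e.symm.toLinearMap (fun g v => ?_), ?_, ?_⟩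
    · apply e.injective
      change e (e.symm _) = linHom' f _
      rw [linHom'_comm, e.apply_symm_apply]
      congr 1
      exact (e.apply_symm_apply v).symm
    · exact linHom'_ext (LinearMap.ext fun v => e.symm_apply_apply v)
    · exact linHom'_ext (LinearMap.ext fun v => e.apply_symm_apply v)

end bridge

end ExtSplit

namespace ExtSplit
open Representation CategoryTheory

section mrep
variable {K G : Type} [Field K] [Group G] {d : ℕ}

/-- The representation attached to a matrix representation. -/
def toRep (r : G →* Matrix (Fin d) (Fin d) K) : Representation K G (Fin d → K) :=
  (Matrix.toLinAlgEquiv' (R := K) (n := Fin d)).toMulEquiv.toMonoidHom.comp r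

lemma toRep_apply (r : G →* Matrix (Fin d) (Fin d) K) (g : G) (v : Fin d → K) :
    toRep r g v = (r g).mulVec v := rfl

lemma toRep_char (r : G →* Matrix (Fin d) (Fin d) K) (g : G) :
    (toRep r).character g = (r g).trace :=
  Matrix.trace_toLin'_eq (r g)

/-- Irreducibility of matrix representations. -/
def MIrr (r : G →* Matrix (Fin d) (Fin d) K) : Prop := Irr (toRep r)

lemma MIrr.pos {r : G →* Matrix (Fin d) (Fin d) K} (h : MIrr r) : 0 < d := by
  rcases Nat.eq_zero_or_pos d with rfl | h0
  · have := h.1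
    exact absurd (inferInstance : Subsingleton (Fin 0 → K)) (not_subsingleton _)
  · exact h0

lemma MIrr.of_comp {H : Type} [Group H] {r : G →* Matrix (Fin d) (Fin d) K} (φ : H →* G)
    (h : MIrr (r.comp φ)) : MIrr r :=
  ⟨h.1, fun U hU => h.2 U fun g u hu => hU (φ g) u hu⟩

lemma exists_matrix_of_simple (V : FDRep K G) [Simple V] :
    ∃ r : G →* Matrix (Fin (Module.finrank K V)) (Fin (Module.finrank K V)) K, MIrr r ∧
      (∀ g, (r g).trace = V.character g) ∧ ∀ g, (r g).det = LinearMap.det (V.ρ g) := by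
  have hV := irr_of_simple V
  let b := Module.finBasis K V
  let r : G →* Matrix (Fin (Module.finrank K V)) (Fin (Module.finrank K V)) K :=
    (LinearMap.toMatrixAlgEquiv b).toMulEquiv.toMonoidHom.comp V.ρ
  have hr : ∀ g, r g = LinearMap.toMatrix b b (V.ρ g) := fun _ => rfl
  have hrv : ∀ g v, b.equivFun (V.ρ g v) = toRep r g (b.equivFun v) := by
    intro g v
    rw [toRep_apply, hr]
    exact (LinearMap.toMatrix_mulVec_repr b b (V.ρ g) v).symm
  refine ⟨r, ⟨?_, ?_⟩, ?_, ?_⟩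
  · have := hV.1
    exact b.equivFun.toEquiv.symm.nontrivial
  · intro U hU
    rcases hV.2 (U.comap b.equivFun.toLinearMap) (fun g u hu => by
      rw [Submodule.mem_comap] at hu ⊢
      change b.equivFun (V.ρ g u) ∈ U
      rw [hrv]
      exact hU g _ hu) with h | h
    · left
      rw [eq_bot_iff]
      intro u hu
      have : b.equivFun.symm u ∈ U.comap b.equivFun.toLinearMap := by
        rw [Submodule.mem_comap]
        change b.equivFun (b.equivFun.symm u) ∈ U
        rwa [LinearEquiv.apply_symm_apply]
      rw [h, Submodule.mem_bot] at this
      rw [Submodule.mem_bot]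
      exact (LinearEquiv.map_eq_zero_iff _).1 this
    · right
      rw [eq_top_iff]
      intro u _
      have : b.equivFun.symm u ∈ U.comap b.equivFun.toLinearMap := h ▸ Submodule.mem_top
      rw [Submodule.mem_comap] at this
      change b.equivFun (b.equivFun.symm u) ∈ U at this
      rwa [LinearEquiv.apply_symm_apply] at this
  · intro g
    rw [hr]
    exact (LinearMap.trace_eq_matrix_trace K b _).symm
  · intro g
    rw [hr, LinearMap.det_toMatrix]

lemma MIrr.schur (hs : Split K G) {r : G →* Matrix (Fin d) (Fin d) K} (h : MIrr r)
    (A : Matrix (Fin d) (Fin d) K) (hA : ∀ g, A * r g = r g * A) : ∃ c : K, A = c • 1 := by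
  obtain ⟨c, hc⟩ := hs _ _ h (Matrix.toLin' A) (fun g v => by
    rw [toRep_apply, toRep_apply, Matrix.toLin'_apply, Matrix.toLin'_apply, Matrix.mulVec_mulVec,
      Matrix.mulVec_mulVec, hA])
  refine ⟨c, ?_⟩
  apply Matrix.toLin'.injective
  ext1 v
  simp only [map_smul, Matrix.toLin'_one]
  ext i
  simp [hc]

lemma MIrr.iso [CharZero K] [Finite G] {r r' : G →* Matrix (Fin d) (Fin d) K} (h : MIrr r)
    (htr : ∀ g, (r' g).trace = (r g).trace) :
    ∃ M : (Matrix (Fin d) (Fin d) K)ˣ, ∀ g, r' g * M = M * r g := by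
  have : Fintype G := Fintype.ofFinite G
  have h1 := char_sum (toRep r) (toRep r')
  have h2 := char_sum (toRep r) (toRep r)
  simp only [toRep_char, htr] at h1 h2
  rw [h1] at h2
  have h3 : Nat.card G * Module.finrank K (IntertwiningMap (toRep r) (toRep r')) =
    Nat.card G * Module.finrank K (IntertwiningMap (toRep r) (toRep r)) := by exact_mod_cast h2
  have h4 := Nat.eq_of_mul_eq_mul_left Nat.card_pos h3
  have hfin : FiniteDimensional K (IntertwiningMap (toRep r) (toRep r)) :=
    FiniteDimensional.of_injective (IntertwiningMap.toLinearMapl (toRep r) (toRep r))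
      (IntertwiningMap.toLinearMap_injective _ _)
  have h5 : 0 < Module.finrank K (IntertwiningMap (toRep r) (toRep r)) := by
    rw [Module.finrank_pos_iff_exists_ne_zero]
    refine ⟨1, fun hh => ?_⟩
    have := h.1
    obtain ⟨v, hv⟩ := exists_ne (0 : Fin d → K)
    exact hv (congrArg (fun a : IntertwiningMap (toRep r) (toRep r) => a v) hh)
  rw [← h4] at h5
  have hnt : Nontrivial (IntertwiningMap (toRep r) (toRep r')) :=
    Module.nontrivial_of_finrank_pos h5
  obtain ⟨f, hf⟩ := exists_ne (0 : IntertwiningMap (toRep r) (toRep r'))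
  have hker : LinearMap.ker f.toLinearMap = ⊥ := by
    rcases h.2 (LinearMap.ker f.toLinearMap) (fun g u hu => by
      rw [LinearMap.mem_ker] at hu ⊢
      have := IntertwiningMap.isIntertwining _ _ f g u
      change f u = 0 at hu
      change f _ = 0
      rw [this, hu, map_zero]) with hb | ht
    · exact hb
    · exact absurd (IntertwiningMap.ext (LinearMap.ker_eq_top.1 ht)) hf
  let A := LinearMap.toMatrix' f.toLinearMap
  have hunit : IsUnit A := by
    have h6 : IsUnit f.toLinearMap := (LinearMap.isUnit_iff_ker_eq_bot _).2 hker
    exact h6.map (LinearMap.toMatrixAlgEquiv' (R := K) (n := Fin d))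
  obtain ⟨M, hM⟩ := hunit
  refine ⟨M, fun g => ?_⟩
  rw [hM]
  apply Matrix.toLin'.injective
  ext1 v
  rw [Matrix.toLin'_mul, Matrix.toLin'_mul]
  simp only [A, Matrix.toLin'_toMatrix']
  ext i
  have := IntertwiningMap.isIntertwining _ _ f g (Pi.single v 1)
  exact (congrFun this i).symm

/-- Twist by a linear character. -/
def twist (l : G →* Kˣ) (r : G →* Matrix (Fin d) (Fin d) K) : G →* Matrix (Fin d) (Fin d) K where
  toFun g := (l g : K) • r g
  map_one' := by simp
  map_mul' a b := by
    rw [map_mul, map_mul, Units.val_mul, smul_mul_assoc, mul_smul_comm, mul_smul]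

lemma twist_apply (l : G →* Kˣ) (r : G →* Matrix (Fin d) (Fin d) K) (g : G) :
    twist l r g = (l g : K) • r g := rfl

lemma isUnit_rep (r : G →* Matrix (Fin d) (Fin d) K) (g : G) : IsUnit (r g) :=
  (Group.isUnit g).map r

lemma smul_rep_inj (hd : 0 < d) (r : G →* Matrix (Fin d) (Fin d) K) (g : G) {a b : K}
    (h : a • r g = b • r g) : a = b := by
  have h1 : a • r g * r g⁻¹ = b • r g * r g⁻¹ := by rw [h]
  rw [smul_mul_assoc, smul_mul_assoc, ← map_mul, mul_inv_cancel, map_one] at h1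
  have := congrFun (congrFun h1 ⟨0, hd⟩) ⟨0, hd⟩
  simpa using this

lemma gallagher [CharZero K] [Finite G] (N : Subgroup G) [N.Normal] (hs : Split K N)
    (r r' : G →* Matrix (Fin d) (Fin d) K) (hirr : MIrr (r.comp N.subtype))
    (htr : ∀ n ∈ N, (r' n).trace = (r n).trace) :
    ∃ l : G →* Kˣ, (∀ n ∈ N, l n = 1) ∧ (∀ g, (r' g).trace = l g * (r g).trace) ∧
      ∀ g, (r' g).det = (l g : K) ^ d * (r g).det := by
  have hd := hirr.pos
  obtain ⟨M, hM⟩ := hirr.iso (r' := r'.comp N.subtype) (fun n => htr n n.2)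
  let s : G →* Matrix (Fin d) (Fin d) K :=
    { toFun := fun g => (M⁻¹ : (Matrix (Fin d) (Fin d) K)ˣ) * r' g * M
      map_one' := by simp
      map_mul' := fun a b => by simp [mul_assoc] }
  have hsdef : ∀ g, s g = (M⁻¹ : (Matrix (Fin d) (Fin d) K)ˣ) * r' g * M := fun _ => rfl
  have hsN : ∀ n ∈ N, s n = r n := by
    intro n hn
    have := hM ⟨n, hn⟩
    change r' n * M = M * r n at this
    rw [hsdef, mul_assoc, this, Units.inv_mul_cancel_left]
  have hsc : ∀ g, ∃ c : K, s g = c • r g := by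
    intro g
    obtain ⟨c, hc⟩ := hirr.schur hs (s g * r g⁻¹) (fun n => by
      change s g * r g⁻¹ * r n = r n * (s g * r g⁻¹)
      have hn' : g⁻¹ * n * g ∈ N := by
        simpa using Subgroup.Normal.conj_mem inferInstance (n : G) n.2 g⁻¹
      calc s g * r g⁻¹ * r n = s g * (r (g⁻¹ * n * g) * r g⁻¹) := by
            rw [mul_assoc, ← map_mul, ← map_mul]; congr 2; group
        _ = s (g * (g⁻¹ * n * g)) * r g⁻¹ := by rw [← hsN _ hn', map_mul s g, ← mul_assoc (s g)]
        _ = s (n * g) * r g⁻¹ := by congr 2; group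
        _ = r n * (s g * r g⁻¹) := by rw [map_mul, hsN n n.2, mul_assoc])
    refine ⟨c, ?_⟩
    have : s g * r g⁻¹ * r g = c • r g := by rw [hc]; simp
    rwa [mul_assoc, ← map_mul, inv_mul_cancel, map_one, mul_one] at this
  choose c hc using hsc
  let l0 : G →* K :=
    { toFun := c
      map_one' := by
        apply smul_rep_inj hd r 1
        rw [← hc, one_smul, map_one, map_one]
      map_mul' := fun a b => by
        apply smul_rep_inj hd r (a * b)
        rw [← hc, map_mul, map_mul, hc, hc]
        simp [smul_smul, mul_comm] }
  have hl : ∀ g, ((l0.toHomUnits g : Kˣ) : K) = c g := fun g => rfl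
  refine ⟨l0.toHomUnits, ?_, ?_, ?_⟩
  · intro n hn
    ext
    rw [hl]
    apply smul_rep_inj hd r n
    rw [← hc, hsN n hn, Units.val_one, one_smul]
  · intro g
    rw [hl]
    have : (s g).trace = (r' g).trace := by
      rw [hsdef, Matrix.trace_mul_comm, ← mul_assoc]; simp
    rw [← this, hc, Matrix.trace_smul, smul_eq_mul]
  · intro g
    rw [hl]
    have : (s g).det = (r' g).det := by
      rw [hsdef, Matrix.det_mul, Matrix.det_mul, mul_right_comm, ← Matrix.det_mul]; simp
    rw [← this, hc, Matrix.det_smul, Fintype.card_fin]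

lemma twist_unique [CharZero K] [Finite G] (N : Subgroup G) (hs : Split K N)
    (r : G →* Matrix (Fin d) (Fin d) K) (hirr : MIrr (r.comp N.subtype))
    (l : G →* Kˣ) (hl : ∀ n ∈ N, l n = 1) (htr : ∀ g, (l g : K) * (r g).trace = (r g).trace) :
    l = 1 := by
  have hd := hirr.pos
  obtain ⟨M, hM⟩ := (MIrr.of_comp _ hirr).iso (r' := twist l r) (fun g => by
    rw [twist_apply, Matrix.trace_smul, smul_eq_mul, htr])
  obtain ⟨c, hc⟩ := hirr.schur hs (M : Matrix (Fin d) (Fin d) K) (fun n => by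
    have := hM n
    rw [twist_apply, hl n n.2, Units.val_one, one_smul] at this
    exact this.symm)
  have hc0 : c ≠ 0 := by
    rintro rfl
    rw [zero_smul] at hc
    have : Nonempty (Fin d) := ⟨⟨0, hd⟩⟩
    exact M.ne_zero hc
  ext g
  have := hM g
  rw [hc, twist_apply] at this
  simp only [smul_mul_assoc, mul_smul_comm, mul_one, one_mul] at this
  have h2 := smul_right_injective _ hc0 this
  exact smul_rep_inj hd r g (by simpa using h2)

end mrep

end ExtSplit

namespace ExtSplit

section count
variable {K T : Type} [Field K] [CharZero K] [Group T] [Finite T] {d : ℕ}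

/-- The set of characters of extensions of `r₀|_N` whose determinant on `J` has order prime
to `ℓ`. -/
def ExtSet (ℓ : ℕ) (N J : Subgroup T) (r₀ : T →* Matrix (Fin d) (Fin d) K) : Set (T → K) :=
  {χ | ∃ r : T →* Matrix (Fin d) (Fin d) K, (∀ t, (r t).trace = χ t) ∧
    (∀ n ∈ N, (r n).trace = (r₀ n).trace) ∧
    ∃ m : ℕ, 0 < m ∧ Nat.Coprime m ℓ ∧ ∀ j ∈ J, (r j).det ^ m = 1}

/-- Determinant of a matrix representation. -/
def mdet (r : T →* Matrix (Fin d) (Fin d) K) : T →* Kˣ :=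
  ((Matrix.detMonoidHom : Matrix (Fin d) (Fin d) K →* K).comp r).toHomUnits

lemma mdet_apply (r : T →* Matrix (Fin d) (Fin d) K) (t : T) :
    ((mdet r t : Kˣ) : K) = (r t).det := rfl

/-- Linear characters of order prime to `ℓ` trivial on `N`. -/
def LinSub (K : Type) [Field K] (ℓ : ℕ) (N : Subgroup T) : Subgroup (T →* Kˣ) where
  carrier := {l | (∀ n ∈ N, l n = 1) ∧ ∃ m : ℕ, 0 < m ∧ Nat.Coprime m ℓ ∧ ∀ t, l t ^ m = 1}
  one_mem' := ⟨fun _ _ => rfl, 1, one_pos, Nat.coprime_one_left ℓ, fun _ => one_pow 1⟩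
  mul_mem' := by
    rintro a b ⟨ha, m, hm, hmc, ham⟩ ⟨hb, k, hk, hkc, hbk⟩
    refine ⟨fun n hn => by rw [MonoidHom.mul_apply, ha n hn, hb n hn, one_mul], m * k,
      Nat.mul_pos hm hk, hmc.mul_left hkc, fun t => ?_⟩
    rw [MonoidHom.mul_apply, mul_pow, pow_mul, ham, one_pow, mul_comm m k, pow_mul, hbk, one_pow, one_mul]
  inv_mem' := by
    rintro a ⟨ha, m, hm, hmc, ham⟩
    exact ⟨fun n hn => by rw [MonoidHom.inv_apply, ha n hn, inv_one], m, hm, hmc, fun t => by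
      rw [MonoidHom.inv_apply, inv_pow, ham, inv_one]⟩

lemma linSub_card {ℓ : ℕ} (hℓ : ℓ.Prime) (N : Subgroup T) :
    ¬ ℓ ∣ Nat.card (LinSub (T := T) K ℓ N) := by
  intro h
  have : Fact ℓ.Prime := ⟨hℓ⟩
  obtain ⟨x, hx⟩ := exists_prime_orderOf_dvd_card' ℓ h
  obtain ⟨_, m, hm, hmc, hxm⟩ := x.2
  have h1 : x ^ m = 1 := Subtype.ext (MonoidHom.ext hxm)
  have h2 := orderOf_dvd_of_pow_eq_one h1
  rw [hx] at h2
  exact (Nat.Prime.coprime_iff_not_dvd hℓ).1 hmc.symm h2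

lemma exists_neg_inv {ℓ : ℕ} (hℓ : ℓ.Prime) (a e : ℕ) (he : Nat.Coprime e ℓ) :
    ∃ k : ℕ, ℓ ^ a ∣ e * k + 1 := by
  have : NeZero (ℓ ^ a) := ⟨pow_ne_zero _ hℓ.ne_zero⟩
  let u := ZMod.unitOfCoprime e (he.pow_right a)
  refine ⟨(-((u⁻¹ : (ZMod (ℓ ^ a))ˣ) : ZMod (ℓ ^ a))).val, ?_⟩
  rw [← ZMod.natCast_eq_zero_iff]
  push_cast
  rw [ZMod.natCast_zmod_val]
  have : (e : ZMod (ℓ ^ a)) = u := (ZMod.coe_unitOfCoprime e _).symm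
  rw [this, mul_neg, Units.mul_inv, neg_add_cancel]

lemma exists_base {ℓ : ℕ} (hℓ : ℓ.Prime) (N J : Subgroup T) [N.Normal]
    (r₀ : T →* Matrix (Fin d) (Fin d) K) (hd : Nat.Coprime d ℓ)
    (hNJ : ∀ t : T, ∃ n ∈ N, ∃ j ∈ J, t = n * j)
    {m' : ℕ} (hm' : Nat.Coprime m' ℓ)
    (hdet : ∀ n ∈ N, n ∈ J → (r₀ n).det ^ m' = 1) :
    ∃ r₁ : T →* Matrix (Fin d) (Fin d) K, (∀ n ∈ N, r₁ n = r₀ n) ∧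
      ∃ m : ℕ, 0 < m ∧ Nat.Coprime m ℓ ∧ ∀ j ∈ J, (r₁ j).det ^ m = 1 := by
  obtain ⟨a, m, hm, hcard⟩ := Nat.exists_eq_pow_mul_and_not_dvd (n := Nat.card T)
    Nat.card_pos.ne' ℓ hℓ.ne_one
  obtain ⟨k, hk⟩ := exists_neg_inv hℓ a (d * m') (hd.mul_left hm')
  let f : J →* T ⧸ N := (QuotientGroup.mk' N).comp J.subtype
  have hf : Function.Surjective f := by
    intro q
    obtain ⟨t, rfl⟩ := QuotientGroup.mk_surjective q
    obtain ⟨n, hn, j, hj, rfl⟩ := hNJ t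
    refine ⟨⟨j, hj⟩, ?_⟩
    change (QuotientGroup.mk j : T ⧸ N) = QuotientGroup.mk (n * j)
    rw [QuotientGroup.mk_mul, (QuotientGroup.eq_one_iff n).2 hn, one_mul]
  let D : J →* Kˣ := ((mdet r₀) ^ (m' * k)).comp J.subtype
  have hker : f.ker ≤ D.ker := by
    intro j hj
    have hjN : (j : T) ∈ N := (QuotientGroup.eq_one_iff (j : T)).1 hj
    rw [MonoidHom.mem_ker]
    ext
    change ((mdet r₀ j : Kˣ) ^ (m' * k) : Kˣ) = (1 : K)
    rw [Units.val_pow_eq_pow_val, mdet_apply, pow_mul, hdet _ hjN j.2, one_pow]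
  let l : T →* Kˣ := (f.liftOfSurjective hf ⟨D, hker⟩).comp (QuotientGroup.mk' N)
  have hlN : ∀ n ∈ N, l n = 1 := by
    intro n hn
    change (f.liftOfSurjective hf ⟨D, hker⟩) (QuotientGroup.mk n) = 1
    rw [(QuotientGroup.eq_one_iff n).2 hn, map_one]
  have hlJ : ∀ j (hj : j ∈ J), l j = (mdet r₀ j) ^ (m' * k) := by
    intro j hj
    exact f.liftOfRightInverse_comp_apply _ (Function.rightInverse_surjInv hf) ⟨D, hker⟩ ⟨j, hj⟩
  refine ⟨twist l r₀, fun n hn => ?_, m, ?_, ?_, fun j hj => ?_⟩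
  · rw [twist_apply, hlN n hn, Units.val_one, one_smul]
  · rcases Nat.eq_zero_or_pos m with rfl | h
    · exact absurd (dvd_zero ℓ) hm
    · exact h
  · exact ((Nat.Prime.coprime_iff_not_dvd hℓ).2 hm).symm
  · rw [twist_apply, Matrix.det_smul, Fintype.card_fin, hlJ j hj, ← mdet_apply]
    obtain ⟨q, hq⟩ := hk
    have h1 : ((mdet r₀ j ^ (m' * k)) ^ d * mdet r₀ j) ^ m = 1 := by
      rw [← pow_mul, ← pow_succ, ← pow_mul]
      have : (m' * k * d + 1) * m = Nat.card T * q := by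
        rw [hcard, show m' * k * d = d * m' * k by ring, hq]; ring
      rw [this, pow_mul, ← map_pow, pow_card_eq_one', map_one, one_pow]
    simpa only [Units.val_pow_eq_pow_val, Units.val_mul, Units.val_one] using congrArg Units.val h1

theorem extSet_card {ℓ : ℕ} (hℓ : ℓ.Prime) (N J : Subgroup T) [N.Normal] (hs : Split K N)
    (r₀ : T →* Matrix (Fin d) (Fin d) K) (hirr : MIrr (r₀.comp N.subtype)) (hd : Nat.Coprime d ℓ)
    (hNJ : ∀ t : T, ∃ n ∈ N, ∃ j ∈ J, t = n * j)
    {m' : ℕ} (hm' : Nat.Coprime m' ℓ)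
    (hdet : ∀ n ∈ N, n ∈ J → (r₀ n).det ^ m' = 1) :
    Finite (ExtSet ℓ N J r₀) ∧ ¬ ℓ ∣ Nat.card (ExtSet ℓ N J r₀) := by
  obtain ⟨r₁, h10, m, hm, hmc, h1d⟩ := exists_base hℓ N J r₀ hd hNJ hm' hdet
  have hcomp : r₁.comp N.subtype = r₀.comp N.subtype := by
    ext1 n
    exact h10 n n.2
  have hirr1 : MIrr (r₁.comp N.subtype) := hcomp ▸ hirr
  have hdpos := hirr.pos
  let F : LinSub (T := T) K ℓ N → ExtSet ℓ N J r₀ := fun l =>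
    ⟨fun t => ((l.1 t : Kˣ) : K) * (r₁ t).trace, twist l.1 r₁, fun t => by
      rw [twist_apply, Matrix.trace_smul, smul_eq_mul], fun n hn => by
      rw [twist_apply, l.2.1 n hn, Units.val_one, one_smul, h10 n hn], by
      obtain ⟨_, k, hk, hkc, hlk⟩ := l.2
      refine ⟨m * k, Nat.mul_pos hm hk, hmc.mul_left hkc, fun j hj => ?_⟩
      have h4 : ((l.1 j : Kˣ) : K) ^ k = 1 := by
        simpa only [Units.val_pow_eq_pow_val, Units.val_one] using congrArg Units.val (hlk j)
      rw [twist_apply, Matrix.det_smul, Fintype.card_fin, mul_pow, pow_mul (r₁ j).det, h1d j hj,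
        one_pow, mul_one, ← pow_mul, show d * (m * k) = k * (d * m) by ring, pow_mul, h4, one_pow]⟩
  have hF : Function.Bijective F := by
    constructor
    · intro l l' h
      have h1 : ∀ t, ((l.1 t : Kˣ) : K) * (r₁ t).trace = ((l'.1 t : Kˣ) : K) * (r₁ t).trace :=
        fun t => congrFun (congrArg Subtype.val h) t
      have h2 := twist_unique N hs r₁ hirr1 (l'.1⁻¹ * l.1) (fun n hn => by
        rw [MonoidHom.mul_apply, MonoidHom.inv_apply, l.2.1 n hn, l'.2.1 n hn]; simp) (fun t => by
        rw [MonoidHom.mul_apply, MonoidHom.inv_apply, Units.val_mul, mul_assoc, h1,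
          Units.inv_mul_cancel_left])
      exact Subtype.ext (inv_mul_eq_one.1 h2).symm
    · rintro ⟨χ, r, hrχ, hrN, k, hk, hkc, hrd⟩
      obtain ⟨l, hlN, hltr, hldet⟩ := gallagher N hs r₁ r hirr1 (fun n hn => by
        rw [hrN n hn, h10 n hn])
      refine ⟨⟨l, hlN, d * (m * k), Nat.mul_pos hdpos (Nat.mul_pos hm hk),
        hd.mul_left (hmc.mul_left hkc), ?_⟩, ?_⟩
      · intro t
        ext
        obtain ⟨n, hn, j, hj, rfl⟩ := hNJ t
        rw [map_mul, hlN n hn, one_mul]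
        have h5 := congrArg (· ^ (m * k)) (hldet j)
        simp only [mul_pow] at h5
        rw [pow_mul (r₁ j).det, h1d j hj, mul_comm m k, pow_mul (r j).det, hrd j hj, one_pow,
          one_pow, mul_one, ← pow_mul] at h5
        rw [mul_comm m k, Units.val_pow_eq_pow_val, ← h5, Units.val_one]
      · refine Subtype.ext (funext fun t => ?_)
        change ((l t : Kˣ) : K) * (r₁ t).trace = χ t
        rw [← hltr, hrχ]
  exact ⟨Finite.of_surjective F hF.2, by
    rw [← Nat.card_congr (Equiv.ofBijective F hF)]
    exact linSub_card hℓ N⟩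

end count

end ExtSplit

namespace ExtSplit

section galois

lemma qab_prim (n : ℕ) (hn : 0 < n) : ∃ ζ : ↥Qab, IsPrimitiveRoot ζ n := by
  have h := Complex.isPrimitiveRoot_exp n hn.ne'
  refine ⟨⟨_, IntermediateField.subset_adjoin ℚ _ ⟨n, hn, h.pow_eq_one⟩⟩, ?_⟩
  exact IsPrimitiveRoot.of_map_of_injective (f := Qab.val) h Qab.val.injective

lemma qab_split (G : Type) [Group G] [Finite G] : Split (↥Qab) G := split_all qab_prim G

lemma qab_root_pow (σ : ↥Qab ≃ₐ[ℚ] ↥Qab) (ζ : ↥Qab) (n : ℕ) (hn : 0 < n) (h : ζ ^ n = 1) :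
    ∃ m : ℕ, σ ζ = ζ ^ m := by
  have : NeZero n := ⟨hn.ne'⟩
  exact map_rootsOfUnity_eq_pow_self σ (rootsOfUnity.mkOfPowEq ζ h)

lemma qab_comm (σ τ : ↥Qab ≃ₐ[ℚ] ↥Qab) : σ * τ = τ * σ := by
  have h : ((σ * τ : ↥Qab ≃ₐ[ℚ] ↥Qab) : ↥Qab →ₐ[ℚ] ↥Qab) =
      ((τ * σ : ↥Qab ≃ₐ[ℚ] ↥Qab) : ↥Qab →ₐ[ℚ] ↥Qab) := by
    refine IntermediateField.algHom_ext_of_eq_adjoin ℚ (S := Qab) rfl ?_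
    rintro x ⟨n, hn, hx⟩
    set z : ↥Qab := ⟨x, _⟩ with hz
    have hz1 : z ^ n = 1 := Subtype.ext hx
    obtain ⟨a, ha⟩ := qab_root_pow σ z n hn hz1
    obtain ⟨b, hb⟩ := qab_root_pow τ z n hn hz1
    change σ (τ z) = τ (σ z)
    rw [ha, hb, map_pow, map_pow, ha, hb, ← pow_mul, ← pow_mul, mul_comm]
  exact AlgEquiv.ext fun x => DFunLike.congr_fun h x

lemma memH0_one (ℓ : ℕ) : MemH0 ℓ 1 := ⟨⟨0, by simp⟩, fun _ _ _ _ _ => rfl⟩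

lemma memH0_mul {ℓ : ℕ} (hℓ : ℓ.Prime) {σ τ : ↥Qab ≃ₐ[ℚ] ↥Qab} (hσ : MemH0 ℓ σ)
    (hτ : MemH0 ℓ τ) : MemH0 ℓ (σ * τ) := by
  obtain ⟨⟨a, ha⟩, hσ2⟩ := hσ
  obtain ⟨⟨b, hb⟩, hτ2⟩ := hτ
  constructor
  · have h : (σ * τ) ^ (ℓ ^ (a + b)) = 1 := by
      rw [Commute.mul_pow (qab_comm σ τ), pow_add, pow_mul, ← ha, pow_orderOf_eq_one, one_pow,
        mul_comm, pow_mul, ← hb, pow_orderOf_eq_one, one_pow, one_mul]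
    obtain ⟨k, _, hk⟩ := (Nat.dvd_prime_pow hℓ).1 (orderOf_dvd_of_pow_eq_one h)
    exact ⟨k, hk⟩
  · intro ζ n hn hc h
    change σ (τ ζ) = ζ
    rw [hτ2 ζ n hn hc h, hσ2 ζ n hn hc h]

lemma memH0_inv {ℓ : ℕ} {σ : ↥Qab ≃ₐ[ℚ] ↥Qab} (hσ : MemH0 ℓ σ) : MemH0 ℓ σ⁻¹ := by
  obtain ⟨⟨a, ha⟩, hσ2⟩ := hσ
  refine ⟨⟨a, by rw [orderOf_inv, ha]⟩, fun ζ n hn hc h => ?_⟩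
  apply σ.injective
  rw [hσ2 ζ n hn hc h]
  exact σ.apply_symm_apply ζ

end galois

section fixed

lemma abs_fixed {A E : Type} [Group A] [MulAction A E] {ℓ : ℕ} (hℓ : ℓ.Prime) [Finite E]
    (hE : ¬ ℓ ∣ Nat.card E) (h : ∀ a : A, ∃ n : ℕ, ∀ e : E, a ^ (ℓ ^ n) • e = e) :
    ∃ e : E, ∀ a : A, a • e = e := by
  have : Fact ℓ.Prime := ⟨hℓ⟩
  let P := (MulAction.toPermHom A E).range
  have hP : IsPGroup ℓ P := by
    rintro ⟨_, a, rfl⟩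
    obtain ⟨n, hn⟩ := h a
    refine ⟨n, Subtype.ext ?_⟩
    change (MulAction.toPermHom A E a) ^ (ℓ ^ n) = 1
    rw [← map_pow]
    exact Equiv.ext hn
  obtain ⟨e, he⟩ := hP.nonempty_fixed_point_of_prime_not_dvd_card E hE
  exact ⟨e, fun a => he ⟨_, a, rfl⟩⟩

variable {Γ : Type} [Group Γ] {X : Subgroup Γ}

/-- The stabilizer of `ψ` in `Γ × ℋ₀`. -/
def Adm {ℓ : ℕ} (hℓ : ℓ.Prime) (hX : X.Normal) (ψ : ↥X → ↥Qab) :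
    Subgroup (Γ × (↥Qab ≃ₐ[ℚ] ↥Qab)) where
  carrier := {p | MemH0 ℓ p.2 ∧ ∀ x, p.2 (conjChar hX p.1⁻¹ ψ x) = ψ x}
  one_mem' := ⟨memH0_one ℓ, fun x => by
    change conjChar hX (1 : Γ)⁻¹ ψ x = ψ x
    rw [inv_one, conjChar_one]⟩
  mul_mem' := by
    rintro ⟨a, σ⟩ ⟨b, τ⟩ ⟨h1, h2⟩ ⟨h3, h4⟩
    refine ⟨memH0_mul hℓ h1 h3, fun x => ?_⟩
    change σ (τ (conjChar hX (a * b)⁻¹ ψ x)) = ψ x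
    rw [mul_inv_rev, conjChar_mul]
    exact (congrArg σ (h4 _)).trans (h2 x)
  inv_mem' := by
    rintro ⟨a, σ⟩ ⟨h1, h2⟩
    refine ⟨memH0_inv h1, fun x => ?_⟩
    apply σ.injective
    change σ (σ.symm (conjChar hX (a⁻¹)⁻¹ ψ x)) = _
    rw [σ.apply_symm_apply, inv_inv]
    have := h2 ⟨a * x * a⁻¹, hX.conj_mem _ x.2 a⟩
    refine this.symm.trans (congrArg σ (congrArg ψ (Subtype.ext ?_)))
    change a⁻¹ * (a * x * a⁻¹) * (a⁻¹)⁻¹ = x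
    group

lemma mem_charStab_iff (hX : X.Normal) (ψ : ↥X → ↥Qab) (y : Γ) :
    y ∈ charStab hX ψ ↔ conjChar hX y ψ = ψ := Iff.rfl

lemma adm_conj_stab {ℓ : ℕ} (hℓ : ℓ.Prime) (hX : X.Normal) (ψ : ↥X → ↥Qab)
    {p : Γ × (↥Qab ≃ₐ[ℚ] ↥Qab)} (hp : p ∈ Adm hℓ hX ψ) {t : Γ} (ht : t ∈ charStab hX ψ) :
    p.1⁻¹ * t * p.1 ∈ charStab hX ψ := by
  rw [mem_charStab_iff] at ht ⊢
  funext x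
  apply p.2.injective
  have h1 := hp.2 ⟨p.1 * x * p.1⁻¹, hX.conj_mem _ x.2 _⟩
  have h2 := hp.2 ⟨t * (p.1 * x * p.1⁻¹) * t⁻¹, hX.conj_mem _ (hX.conj_mem _ x.2 _) _⟩
  have h3 := congrFun ht ⟨p.1 * x * p.1⁻¹, hX.conj_mem _ x.2 _⟩
  have h4 := h2.trans (h3.trans h1.symm)
  refine Eq.trans (congrArg p.2 (congrArg ψ (Subtype.ext ?_))) (h4.trans
    (congrArg p.2 (congrArg ψ (Subtype.ext ?_))))
  · change p.1⁻¹ * t * p.1 * x * (p.1⁻¹ * t * p.1)⁻¹ =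
      p.1⁻¹ * (t * (p.1 * x * p.1⁻¹) * t⁻¹) * (p.1⁻¹)⁻¹
    group
  · change p.1⁻¹ * (p.1 * x * p.1⁻¹) * (p.1⁻¹)⁻¹ = x
    group

/-- Conjugation as a homomorphism of `T`, for `y` normalizing `T`. -/
def conjHom (T : Subgroup Γ) (y : Γ) (hy : ∀ t ∈ T, y⁻¹ * t * y ∈ T) : ↥T →* ↥T where
  toFun t := ⟨y⁻¹ * t * y, hy t t.2⟩
  map_one' := Subtype.ext (by simp)
  map_mul' a b := Subtype.ext (by
    change y⁻¹ * (a * b : Γ) * y = y⁻¹ * a * y * (y⁻¹ * b * y)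
    group)

lemma extSet_invariant [Finite Γ] {ℓ d : ℕ} (T Kh : Subgroup Γ) (hXT : X ≤ T) (hX : X.Normal)
    (hK : ∀ g : Γ, ∃ x ∈ X, ∃ k ∈ Kh, g = x * k)
    (r₀ : ↥T →* Matrix (Fin d) (Fin d) ↥Qab) (y : Γ) (σ : ↥Qab ≃ₐ[ℚ] ↥Qab)
    (hy : ∀ t ∈ T, y⁻¹ * t * y ∈ T)
    (hst : ∀ n ∈ X.subgroupOf T, σ (r₀ (conjHom T y hy n)).trace = (r₀ n).trace)
    (χ : ↥T → ↥Qab) (hχ : χ ∈ ExtSet ℓ (X.subgroupOf T) (Kh.subgroupOf T) r₀) :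
    (fun t => σ (χ (conjHom T y hy t))) ∈
      ExtSet ℓ (X.subgroupOf T) (Kh.subgroupOf T) r₀ := by
  obtain ⟨r, hr, hrN, m, hm, hmc, hdet⟩ := hχ
  let s : ↥T →* Matrix (Fin d) (Fin d) ↥Qab :=
    ((σ : ↥Qab →+* ↥Qab).mapMatrix : Matrix (Fin d) (Fin d) ↥Qab →+* _).toMonoidHom.comp
      (r.comp (conjHom T y hy))
  have hs : ∀ t, s t = (r (conjHom T y hy t)).map σ := fun _ => rfl
  have hstr : ∀ t, (s t).trace = σ (r (conjHom T y hy t)).trace := fun t => by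
    rw [hs]
    exact (AddMonoidHom.map_trace (σ : ↥Qab →+* ↥Qab).toAddMonoidHom _).symm
  have hsdet : ∀ t, (s t).det = σ (r (conjHom T y hy t)).det := fun t =>
    ((σ : ↥Qab →+* ↥Qab).map_det _).symm
  refine ⟨s, fun t => ?_, fun n hn => ?_, m, hm, hmc, fun j hj => ?_⟩
  · rw [hstr, hr]
  · rw [hstr, hrN, hst n hn]
    have := hX.conj_mem n hn y⁻¹
    rw [inv_inv] at this
    exact this
  · rw [hsdet, ← map_pow]
    obtain ⟨x, hx, k, hk, hxk⟩ := hK y⁻¹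
    have hyy : y = k⁻¹ * x⁻¹ := by rw [← inv_inv y, hxk, mul_inv_rev]
    have hkj : k * j * k⁻¹ ∈ T := by
      have : k * j * k⁻¹ = x⁻¹ * (y⁻¹ * j * y) * x := by rw [hxk, hyy]; group
      rw [this]
      exact T.mul_mem (T.mul_mem (T.inv_mem (hXT hx)) (hy j j.2)) (hXT hx)
    have hj' : (⟨k * j * k⁻¹, hkj⟩ : ↥T) ∈ Kh.subgroupOf T :=
      Kh.mul_mem (Kh.mul_mem hk hj) (Kh.inv_mem hk)
    have he : conjHom T y hy j = ⟨x, hXT hx⟩ * ⟨k * j * k⁻¹, hkj⟩ * ⟨x, hXT hx⟩⁻¹ := by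
      apply Subtype.ext
      change y⁻¹ * j * y = x * (k * j * k⁻¹) * x⁻¹
      rw [hxk, hyy]; group
    have h1 : (r (conjHom T y hy j)).det = (r ⟨k * j * k⁻¹, hkj⟩).det := by
      rw [he, ← mdet_apply, map_mul, map_mul, map_inv, mul_right_comm, mul_inv_cancel, one_mul,
        mdet_apply]
    rw [h1, hdet _ hj', map_one]

end fixed

section irr
variable {K G : Type} [Field K] [Group G] {d : ℕ}

lemma MIrr.conj {s r : G →* Matrix (Fin d) (Fin d) K} (h : MIrr s)
    (M : (Matrix (Fin d) (Fin d) K)ˣ) (hM : ∀ g, r g * M = M * s g) : MIrr r := by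
  refine ⟨h.1, fun U hU => ?_⟩
  have hMM : ∀ v, (M : Matrix (Fin d) (Fin d) K).mulVec
      ((M⁻¹ : (Matrix (Fin d) (Fin d) K)ˣ).1.mulVec v) = v := fun v => by
    rw [Matrix.mulVec_mulVec, Units.mul_inv, Matrix.one_mulVec]
  have hMM' : ∀ v, (M⁻¹ : (Matrix (Fin d) (Fin d) K)ˣ).1.mulVec
      ((M : Matrix (Fin d) (Fin d) K).mulVec v) = v := fun v => by
    rw [Matrix.mulVec_mulVec, Units.inv_mul, Matrix.one_mulVec]
  have hmem : ∀ v, v ∈ U → ((M⁻¹ : (Matrix (Fin d) (Fin d) K)ˣ).1.mulVec v) ∈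
      U.comap (Matrix.toLin' (M : Matrix (Fin d) (Fin d) K)) := fun v hv => by
    rw [Submodule.mem_comap, Matrix.toLin'_apply, hMM]
    exact hv
  rcases h.2 (U.comap (Matrix.toLin' (M : Matrix (Fin d) (Fin d) K))) (fun g u hu => by
    rw [Submodule.mem_comap, Matrix.toLin'_apply] at hu ⊢
    rw [toRep_apply, Matrix.mulVec_mulVec, ← hM, ← Matrix.mulVec_mulVec]
    exact hU g _ hu) with hb | ht
  · left
    rw [eq_bot_iff]
    intro v hv
    have h1 := hmem v hv
    rw [hb, Submodule.mem_bot] at h1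
    rw [Submodule.mem_bot, ← hMM v, h1, Matrix.mulVec_zero]
  · right
    rw [eq_top_iff]
    intro v _
    have h1 : ((M⁻¹ : (Matrix (Fin d) (Fin d) K)ˣ).1.mulVec v) ∈
      U.comap (Matrix.toLin' (M : Matrix (Fin d) (Fin d) K)) := ht ▸ Submodule.mem_top
    rwa [Submodule.mem_comap, Matrix.toLin'_apply, hMM] at h1

lemma det_of_conj {s r : G →* Matrix (Fin d) (Fin d) K}
    (M : (Matrix (Fin d) (Fin d) K)ˣ) (hM : ∀ g, r g * M = M * s g) (g : G) :
    (r g).det = (s g).det := by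
  have h := congrArg Matrix.det (hM g)
  rw [Matrix.det_mul, Matrix.det_mul, mul_comm] at h
  have hu : IsUnit (M : Matrix (Fin d) (Fin d) K).det :=
    (Matrix.isUnit_iff_isUnit_det _).1 M.isUnit
  exact hu.mul_left_cancel h

lemma isIrrChar_of_mirr {r : G →* Matrix (Fin d) (Fin d) ↥Qab} (h : MIrr r) :
    IsIrrChar G (fun g => (r g).trace) := by
  refine ⟨FDRep.of (toRep r), simple_of_irr _ h, funext fun g => toRep_char r g⟩

end irr

end ExtSplit

namespace ExtSplit

/-- Core statement, with the two cases unified. -/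
theorem core {ℓ d : ℕ} (hℓ : ℓ.Prime) {Γ : Type} [Group Γ] [Finite Γ]
    (X Y Kh : Subgroup Γ) [hXn : X.Normal] [hYn : Y.Normal]
    (hq : IsPGroup ℓ (Γ ⧸ Y)) (ψ : ↥X → ↥Qab) (T : Subgroup Γ) (hT : T = charStab hXn ψ ⊓ Y)
    (hXT : X ≤ T) (hd : Nat.Coprime d ℓ)
    (r₀ : ↥T →* Matrix (Fin d) (Fin d) ↥Qab)
    (hr₀ : ∀ x (hx : x ∈ X) (hx' : x ∈ T), (r₀ ⟨x, hx'⟩).trace = ψ ⟨x, hx⟩)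
    (hirr : MIrr (r₀.comp (X.subgroupOf T).subtype))
    (hK : ∀ g : Γ, ∃ x ∈ X, ∃ k ∈ Kh, g = x * k)
    {m' : ℕ} (hm' : Nat.Coprime m' ℓ)
    (hdet : ∀ x (hx : x ∈ X) (_ : x ∈ Kh), (r₀ ⟨x, hXT hx⟩).det ^ m' = 1) :
    ∃ χ : ↥T → ↥Qab, IsIrrChar (↥T) χ ∧
      (∀ x (hx : x ∈ X) (hx' : x ∈ T), χ ⟨x, hx'⟩ = ψ ⟨x, hx⟩) ∧
      ∀ (y : Γ) (σ : ↥Qab ≃ₐ[ℚ] ↥Qab), MemH0 ℓ σ →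
        (fun x => σ (conjChar hXn y ψ x)) = ψ →
          ∀ (a : Γ) (ha : a ∈ T) (ha' : y * a * y⁻¹ ∈ T),
            σ (χ ⟨y * a * y⁻¹, ha'⟩) = χ ⟨a, ha⟩ := by
  obtain ⟨hfin, hcard⟩ := extSet_card hℓ (X.subgroupOf T) (Kh.subgroupOf T) (qab_split _) r₀ hirr hd
    (fun t => by
      obtain ⟨x, hx, k, hk, h⟩ := hK t
      have hkT : k ∈ T := by
        have : k = x⁻¹ * t := by rw [h]; group
        rw [this]
        exact T.mul_mem (T.inv_mem (hXT hx)) t.2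
      exact ⟨⟨x, hXT hx⟩, hx, ⟨k, hkT⟩, hk, Subtype.ext h⟩) hm'
    (fun n hn hnK => hdet n hn hnK)
  have hnorm : ∀ p : Adm hℓ hXn ψ, ∀ t ∈ T, p.1.1⁻¹ * t * p.1.1 ∈ T := by
    intro p t ht
    rw [hT] at ht ⊢
    refine ⟨adm_conj_stab hℓ hXn ψ p.2 ht.1, ?_⟩
    have := hYn.conj_mem t ht.2 p.1.1⁻¹
    rwa [inv_inv] at this
  let act : MulAction (Adm hℓ hXn ψ) (ExtSet ℓ (X.subgroupOf T) (Kh.subgroupOf T) r₀) :=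
    { smul := fun p χ => ⟨fun t => p.1.2 (χ.1 (conjHom T p.1.1 (hnorm p) t)),
        extSet_invariant T Kh hXT hXn hK r₀ p.1.1 p.1.2 (hnorm p) (fun n hn => by
          have h1 := p.2.2 ⟨n, hn⟩
          rw [← hr₀ n hn n.2] at h1
          rw [← h1]
          congr 1
          refine (hr₀ _ ?_ _).trans (congrArg ψ (Subtype.ext ?_))
          · have := hXn.conj_mem n hn p.1.1⁻¹
            rwa [inv_inv] at this
          · change p.1.1⁻¹ * n * p.1.1 = p.1.1⁻¹ * n * (p.1.1⁻¹)⁻¹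
            rw [inv_inv]) χ.1 χ.2⟩
      one_smul := fun χ => Subtype.ext (funext fun t => by
        change χ.1 (conjHom T 1 _ t) = χ.1 t
        refine congrArg χ.1 (Subtype.ext ?_)
        change 1⁻¹ * (t : Γ) * 1 = t
        simp)
      mul_smul := fun p q χ => Subtype.ext (funext fun t => by
        change p.1.2 (q.1.2 (χ.1 (conjHom T (p.1.1 * q.1.1) _ t))) =
          p.1.2 (q.1.2 (χ.1 (conjHom T q.1.1 _ (conjHom T p.1.1 _ t))))
        refine congrArg p.1.2 (congrArg q.1.2 (congrArg χ.1 (Subtype.ext ?_)))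
        change (p.1.1 * q.1.1)⁻¹ * (t : Γ) * (p.1.1 * q.1.1) =
          q.1.1⁻¹ * (p.1.1⁻¹ * t * p.1.1) * q.1.1
        group) }
  have hsmul : ∀ (p : Adm hℓ hXn ψ) (χ : ExtSet ℓ (X.subgroupOf T) (Kh.subgroupOf T) r₀) (t : T),
      (p • χ).1 t = p.1.2 (χ.1 (conjHom T p.1.1 (hnorm p) t)) := fun _ _ _ => rfl
  obtain ⟨χ, hχ⟩ := abs_fixed (A := Adm hℓ hXn ψ)
    (E := ExtSet ℓ (X.subgroupOf T) (Kh.subgroupOf T) r₀) hℓ hcard (fun p => by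
      obtain ⟨a, ha⟩ := hq (QuotientGroup.mk p.1.1)
      obtain ⟨⟨b, hb⟩, _⟩ := p.2.1
      refine ⟨a + b, fun χ => Subtype.ext (funext fun t => ?_)⟩
      rw [hsmul]
      have h1 : (p ^ (ℓ ^ (a + b))).1.1 = p.1.1 ^ (ℓ ^ (a + b)) := rfl
      have h2 : (p ^ (ℓ ^ (a + b))).1.2 = 1 := by
        change p.1.2 ^ (ℓ ^ (a + b)) = 1
        rw [pow_add, mul_comm, pow_mul, ← hb, pow_orderOf_eq_one, one_pow]
      have h3 : (p ^ (ℓ ^ (a + b))).1.1 ∈ T := by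
        rw [hT]
        refine Subgroup.mem_inf.2 ⟨?_, ?_⟩
        · have h4 := (p ^ (ℓ ^ (a + b))).2.2
          rw [h2] at h4
          rw [← inv_mem_iff]
          exact funext h4
        · rw [h1, ← QuotientGroup.eq_one_iff, QuotientGroup.mk_pow, pow_add, pow_mul, ha, one_pow]
      rw [h2]
      obtain ⟨r, hr, _⟩ := χ.2
      change χ.1 _ = χ.1 t
      rw [← hr, ← hr]
      have h5 : conjHom T (p ^ (ℓ ^ (a + b))).1.1 (hnorm (p ^ (ℓ ^ (a + b)))) t =
        (⟨_, h3⟩ : T)⁻¹ * t * ⟨_, h3⟩ := rfl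
      rw [h5, map_mul, map_mul, Matrix.trace_mul_comm, ← mul_assoc, ← map_mul, mul_inv_cancel,
        map_one, one_mul])
  obtain ⟨r, hr, hrN, _⟩ := χ.2
  have hχX : ∀ x (hx : x ∈ X) (hx' : x ∈ T), χ.1 ⟨x, hx'⟩ = ψ ⟨x, hx⟩ := fun x hx hx' => by
    rw [← hr, hrN _ hx, hr₀ x hx hx']
  refine ⟨χ.1, ?_, hχX, ?_⟩
  · have hi : MIrr (r.comp (X.subgroupOf T).subtype) := by
      obtain ⟨M, hM⟩ := hirr.iso (r' := r.comp (X.subgroupOf T).subtype) (fun n => hrN n n.2)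
      exact hirr.conj M hM
    have := isIrrChar_of_mirr (MIrr.of_comp _ hi)
    rwa [show (fun g => (r g).trace) = χ.1 from funext hr] at this
  · intro y σ hσ hyσ a ha ha'
    have hp : (y⁻¹, σ) ∈ Adm hℓ hXn ψ := ⟨hσ, fun x => by
      change σ (conjChar hXn (y⁻¹)⁻¹ ψ x) = ψ x
      rw [inv_inv]
      exact congrFun hyσ x⟩
    have h1 := congrFun (congrArg Subtype.val (hχ ⟨_, hp⟩)) ⟨a, ha⟩
    rw [hsmul] at h1
    rw [← h1]
    refine congrArg σ (congrArg χ.1 (Subtype.ext ?_))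
    change y * a * y⁻¹ = (y⁻¹)⁻¹ * a * y⁻¹
    rw [inv_inv]

lemma exists_matrix_of_irrChar {G : Type} [Group G] {χ : G → ↥Qab} (h : IsIrrChar G χ) :
    ∃ (d : ℕ) (r : G →* Matrix (Fin d) (Fin d) ↥Qab), MIrr r ∧ ∀ g, (r g).trace = χ g := by
  obtain ⟨V, hV, rfl⟩ := h
  obtain ⟨r, h1, h2, _⟩ := exists_matrix_of_simple V
  exact ⟨_, r, h1, h2⟩

end ExtSplit

open ExtSplit

/-- **Lemma 3.2.** Let `X ⊴ Y ⊴ Yhat` with `X ⊴ Yhat`, where `Y/X` has a normal Sylow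
`ℓ`-subgroup and `Yhat/Y` is an `ℓ`-group. Let `ψ ∈ Irr_{ℓ'}(X)` extend to its
stabilizer `Y_ψ`, and suppose that (i) `ℓ ∤ o(ψ)` (the order of the determinantal
character of `ψ`), or (ii) there is `Khat ≤ Yhat` with `Yhat = X Khat` and `Khat ∩ X` an
`ℓ'`-group. Then `ψ` has an extension `χ ∈ Irr(Y_ψ)` with
`(Yhat × ℋ₀)_χ = (Yhat × ℋ₀)_ψ`: for all `y ∈ Yhat` and `σ ∈ ℋ₀`, `(ψ^y)^σ = ψ` holds if
and only if `(χ^y)^σ = χ` holds. -/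
theorem extension_with_same_stabilizer
    (ℓ : ℕ) (hℓ : ℓ.Prime) (Yhat : Type) [Group Yhat] [Fintype Yhat]
    (X Y : Subgroup Yhat) (hXY : X ≤ Y) [hXn : X.Normal] [hYn : Y.Normal]
    (hsyl : ∃ P : Sylow ℓ (↥Y ⧸ X.subgroupOf Y),
      (P : Subgroup (↥Y ⧸ X.subgroupOf Y)).Normal)
    (hq : IsPGroup ℓ (Yhat ⧸ Y))
    (ψ : ↥X → ↥Qab) (hψ : IsIrrCharL' ℓ (↥X) ψ)
    (hext : ∃ χ₀ : ↥(charStab hXn ψ ⊓ Y) → ↥Qab, IsIrrChar (↥(charStab hXn ψ ⊓ Y)) χ₀ ∧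
      ∀ (x : Yhat) (hx : x ∈ X) (hx' : x ∈ charStab hXn ψ ⊓ Y),
        χ₀ ⟨x, hx'⟩ = ψ ⟨x, hx⟩)
    (hcase :
      (∃ V : FDRep (↥Qab) (↥X), CategoryTheory.Simple V ∧ FDRep.character V = ψ ∧
        ¬ ℓ ∣ orderOf (fun x : ↥X => LinearMap.det (FDRep.ρ V x))) ∨
      (∃ Khat : Subgroup Yhat, (X : Set Yhat) * (Khat : Set Yhat) = Set.univ ∧
        Nat.Coprime (Nat.card ↥(Khat ⊓ X)) ℓ)) :
    ∃ χ : ↥(charStab hXn ψ ⊓ Y) → ↥Qab, IsIrrChar (↥(charStab hXn ψ ⊓ Y)) χ ∧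
      (∀ (x : Yhat) (hx : x ∈ X) (hx' : x ∈ charStab hXn ψ ⊓ Y),
        χ ⟨x, hx'⟩ = ψ ⟨x, hx⟩) ∧
      ∀ (y : Yhat) (σ : ↥Qab ≃ₐ[ℚ] ↥Qab), MemH0 ℓ σ →
        (((fun x => σ (conjChar hXn y ψ x)) = ψ) ↔
          (∀ (a : Yhat) (ha : a ∈ charStab hXn ψ ⊓ Y)
              (ha' : y * a * y⁻¹ ∈ charStab hXn ψ ⊓ Y),
            σ (χ ⟨y * a * y⁻¹, ha'⟩) = χ ⟨a, ha⟩)) := by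
  have hXT : X ≤ charStab hXn ψ ⊓ Y := by
    intro x hx
    refine Subgroup.mem_inf.2 ⟨?_, hXY hx⟩
    obtain ⟨V, _, hV, _⟩ := hψ
    rw [mem_charStab_iff, ← hV]
    funext z
    exact FDRep.char_conj V z ⟨x, hx⟩
  obtain ⟨χ₀, hχ₀, hχ₀ψ⟩ := hext
  obtain ⟨d, r₀, hr₀irr, hr₀⟩ := exists_matrix_of_irrChar hχ₀
  let φ : ↥X →* ↥(charStab hXn ψ ⊓ Y) := Subgroup.inclusion hXT
  have hφ : ∀ x, ((r₀.comp φ) x).trace = ψ x := fun x =>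
    (hr₀ _).trans (hχ₀ψ x x.2 (hXT x.2))
  have hdim : ∀ (e : ℕ) (s : ↥X →* Matrix (Fin e) (Fin e) ↥Qab), (∀ x, (s x).trace = ψ x) →
      e = d := by
    intro e s hs
    have h1 := (hs 1).trans (hφ 1).symm
    rw [map_one, map_one, Matrix.trace_one, Matrix.trace_one, Fintype.card_fin,
      Fintype.card_fin] at h1
    exact_mod_cast h1
  have hd : Nat.Coprime d ℓ := by
    obtain ⟨V, hV, hVψ, hVc⟩ := hψ
    obtain ⟨s, _, hs, _⟩ := exists_matrix_of_simple V
    rw [← hdim _ s (fun x => by rw [hs, hVψ])]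
    exact hVc
  have hirr : MIrr (r₀.comp (X.subgroupOf (charStab hXn ψ ⊓ Y)).subtype) := by
    obtain ⟨V, hV, hVψ, _⟩ := hψ
    obtain ⟨e, s, hsi, hs⟩ := exists_matrix_of_irrChar (⟨V, hV, hVψ⟩ : IsIrrChar (↥X) ψ)
    obtain rfl := hdim e s hs
    obtain ⟨M, hM⟩ := hsi.iso (r' := r₀.comp φ) (fun x => by rw [hφ, hs])
    let φ' : ↥X →* ↥(X.subgroupOf (charStab hXn ψ ⊓ Y)) :=
      { toFun := fun x => ⟨φ x, x.2⟩
        map_one' := rfl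
        map_mul' := fun _ _ => rfl }
    exact MIrr.of_comp φ' (hsi.conj M hM)
  have hr₀ψ : ∀ x (hx : x ∈ X) (hx' : x ∈ charStab hXn ψ ⊓ Y),
      (r₀ ⟨x, hx'⟩).trace = ψ ⟨x, hx⟩ := fun x hx hx' => (hr₀ _).trans (hχ₀ψ x hx hx')
  have key : ∃ (Kh : Subgroup Yhat) (m' : ℕ), (∀ g : Yhat, ∃ x ∈ X, ∃ k ∈ Kh, g = x * k) ∧
      Nat.Coprime m' ℓ ∧
      ∀ x (hx : x ∈ X) (_ : x ∈ Kh), (r₀ ⟨x, hXT hx⟩).det ^ m' = 1 := by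
    rcases hcase with ⟨V, hV, hVψ, hVd⟩ | ⟨Kh, hKh, hKc⟩
    · refine ⟨⊤, _, fun g => ⟨1, X.one_mem, g, Subgroup.mem_top g, (one_mul g).symm⟩,
        ((Nat.Prime.coprime_iff_not_dvd hℓ).2 hVd).symm, fun x hx _ => ?_⟩
      obtain ⟨s, hsi, hs, hsd⟩ := exists_matrix_of_simple V
      have hs' : ∀ x, (s x).trace = ψ x := fun x => by rw [hs, hVψ]
      have hdet : (r₀ ⟨x, hXT hx⟩).det = LinearMap.det (FDRep.ρ V ⟨x, hx⟩) := by
        rw [← hsd]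
        have he := hdim _ s hs'
        clear hsd hs
        revert s
        rw [he]
        intro s hsi hs'
        obtain ⟨M, hM⟩ := hsi.iso (r' := r₀.comp φ) (fun x => by rw [hφ, hs'])
        exact det_of_conj M hM ⟨x, hx⟩
      rw [hdet]
      exact congrFun (pow_orderOf_eq_one (fun x : ↥X => LinearMap.det (FDRep.ρ V x))) ⟨x, hx⟩
    · refine ⟨Kh, _, fun g => ?_, hKc, fun x hx hxK => ?_⟩
      · have hg : g ∈ (X : Set Yhat) * (Kh : Set Yhat) := hKh ▸ Set.mem_univ g
        obtain ⟨x, hx, k, hk, h⟩ := hg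
        exact ⟨x, hx, k, hk, h.symm⟩
      · have h1 : (⟨x, hxK, hx⟩ : ↥(Kh ⊓ X)) ^ Nat.card ↥(Kh ⊓ X) = 1 := pow_card_eq_one'
        have h2 : x ^ Nat.card ↥(Kh ⊓ X) = 1 := congrArg Subtype.val h1
        rw [← Matrix.det_pow, ← map_pow]
        have h3 : (⟨x, hXT hx⟩ : ↥(charStab hXn ψ ⊓ Y)) ^ Nat.card ↥(Kh ⊓ X) = 1 :=
          Subtype.ext h2
        rw [h3, map_one, Matrix.det_one]
  obtain ⟨Kh, m', hK, hm', hdet⟩ := key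
  obtain ⟨χ, hχ, hχψ, hfix⟩ := core hℓ X Y Kh hq ψ _ rfl hXT hd r₀ hr₀ψ hirr hK hm' hdet
  refine ⟨χ, hχ, hχψ, fun y σ hσ => ⟨hfix y σ hσ, fun h => funext fun x => ?_⟩⟩
  have hy : y * x * y⁻¹ ∈ X := hXn.conj_mem _ x.2 y
  have h1 := h x (hXT x.2) (hXT hy)
  rw [hχψ _ hy, hχψ _ x.2] at h1
  exact h1
end
end

section
/- Let ℓ be a prime, let X ⊴ Y be finite groups, and suppose there exists a subgroup K ≤ Y such that KX/X is a Sylow ℓ-subgroup of Y/X and K ∩ X is an ℓ'-group (i.e. has order coprime to ℓ). Then there exist a Sylow ℓ-subgroup D̂ of Y and a subgroup E₀ ≤ K with E₀ a Sylow ℓ-subgroup of K such that, setting D := D̂ ∩ X, one has: D is a Sylow ℓ-subgroup of X, D ⊴ D̂, D ∩ E₀ = 1, and D̂ = D E₀; that is, D̂ = D ⋊ E₀. -/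
open scoped Pointwise

noncomputable section

/-- **Remark 3.3** (split Sylow subgroup). Let `X ⊴ Y` and `K ≤ Y` with
`KX/X ∈ Syl_ℓ(Y/X)` and `K ∩ X` an `ℓ'`-group. Then there are a Sylow
`ℓ`-subgroup `D̂` of `Y` and a subgroup `E₀ ≤ K` which is a Sylow `ℓ`-subgroup
of `K`, such that for `D := D̂ ∩ X`: `D` is a Sylow `ℓ`-subgroup of `X`,
`D ⊴ D̂`, `D ∩ E₀ = 1` and `D̂ = D E₀`; that is, `D̂ = D ⋊ E₀`. -/
theorem split_sylow (ℓ : ℕ) (hℓ : ℓ.Prime) (Y : Type) [Group Y] [Fintype Y]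
    (X K : Subgroup Y) [hX : X.Normal]
    (hKX : ∃ S : Sylow ℓ (Y ⧸ X),
      (S : Subgroup (Y ⧸ X)) = K.map (QuotientGroup.mk' X))
    (hKint : Nat.Coprime (Nat.card ↥(K ⊓ X)) ℓ) :
    ∃ Dhat E₀ : Subgroup Y,
      (∃ S : Sylow ℓ Y, (S : Subgroup Y) = Dhat) ∧
      E₀ ≤ K ∧
      (∃ T : Sylow ℓ ↥K, (T : Subgroup ↥K) = E₀.subgroupOf K) ∧
      (∃ S' : Sylow ℓ ↥X, (S' : Subgroup ↥X) = (Dhat ⊓ X).subgroupOf X) ∧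
      ((Dhat ⊓ X).subgroupOf Dhat).Normal ∧
      (Dhat ⊓ X) ⊓ E₀ = ⊥ ∧
      ((Dhat ⊓ X : Subgroup Y) : Set Y) * (E₀ : Set Y) = (Dhat : Set Y) := by
  have : Fact ℓ.Prime := ⟨hℓ⟩
  obtain ⟨S, hS⟩ := hKX
  obtain ⟨T⟩ : Nonempty (Sylow ℓ ↥K) := inferInstance
  set E : Subgroup Y := (T : Subgroup ↥K).map K.subtype with hE
  have hEp : IsPGroup ℓ E := T.isPGroup'.map _
  have hEK : E ≤ K := Subgroup.map_subtype_le _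
  have hET : E.subgroupOf K = T := by
    rw [hE, Subgroup.subgroupOf]
    exact Subgroup.comap_map_eq_self_of_injective K.subtype_injective _
  obtain ⟨P, hP⟩ := hEp.exists_le_sylow
  let f : ↥K →* ↥(K.map (QuotientGroup.mk' X)) := (QuotientGroup.mk' X).subgroupMap K
  have hf : Function.Surjective f := (QuotientGroup.mk' X).subgroupMap_surjective K
  have hKp : IsPGroup ℓ ↥(K.map (QuotientGroup.mk' X)) := by
    rw [← hS]; exact S.isPGroup'
  have htop : ((T.mapSurjective hf : Sylow ℓ _) : Subgroup ↥(K.map (QuotientGroup.mk' X))) = ⊤ :=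
    ((T.mapSurjective hf).is_maximal' (hKp.to_subgroup ⊤) le_top).symm
  have hEmap : ∀ k ∈ K, ∃ e ∈ E, (QuotientGroup.mk' X) e = (QuotientGroup.mk' X) k := by
    intro k hk
    have h1 : f ⟨k, hk⟩ ∈ ((T.mapSurjective hf : Sylow ℓ _) : Subgroup ↥(K.map (QuotientGroup.mk' X))) := by
      rw [htop]; trivial
    rw [Sylow.coe_mapSurjective] at h1
    obtain ⟨t, ht, hte⟩ := h1
    exact ⟨t, ⟨t, ht, rfl⟩, congrArg Subtype.val hte⟩
  have hPS : (P : Subgroup Y).map (QuotientGroup.mk' X) = S := by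
    apply S.is_maximal' (P.isPGroup'.map _)
    rw [hS]
    rintro _ ⟨k, hk, rfl⟩
    obtain ⟨e, he, hek⟩ := hEmap k hk
    exact ⟨e, hP he, hek⟩
  have hidx : ¬ ℓ ∣ (((P : Subgroup Y) ⊓ X).subgroupOf X).index := by
    rw [Subgroup.inf_subgroupOf_right]
    change ¬ ℓ ∣ (P : Subgroup Y).relIndex X
    have h1 := Subgroup.relIndex_mul_relIndex ((P : Subgroup Y) ⊓ X) P ((P : Subgroup Y) ⊔ X)
      inf_le_left le_sup_left
    have h2 := Subgroup.relIndex_mul_relIndex ((P : Subgroup Y) ⊓ X) X ((P : Subgroup Y) ⊔ X)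
      inf_le_right le_sup_right
    rw [Subgroup.inf_relIndex_left] at h1
    rw [Subgroup.inf_relIndex_right, Subgroup.relIndex_sup_right, mul_comm] at h2
    have h0 : X.relIndex (P : Subgroup Y) ≠ 0 := Subgroup.FiniteIndex.index_ne_zero
    have h3 := Nat.eq_of_mul_eq_mul_left (Nat.pos_of_ne_zero h0) (h2.trans h1.symm)
    rw [h3]
    exact fun h => P.not_dvd_index (h.trans (Subgroup.relIndex_dvd_index_of_le le_sup_left))
  refine ⟨P, E, ⟨P, rfl⟩, hEK, ⟨T, hET.symm⟩, ?_, ?_, ?_, ?_⟩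
  · have hp : IsPGroup ℓ (((P : Subgroup Y) ⊓ X).subgroupOf X) := by
      rw [Subgroup.inf_subgroupOf_right]
      exact P.isPGroup'.comap_subtype
    exact ⟨hp.toSylow hidx, rfl⟩
  · rw [Subgroup.inf_subgroupOf_left]
    exact hX.subgroupOf _
  · have hle : (P : Subgroup Y) ⊓ X ⊓ E ≤ K ⊓ X :=
      fun y hy => ⟨hEK hy.2, hy.1.2⟩
    have hp : IsPGroup ℓ ↥((P : Subgroup Y) ⊓ X ⊓ E) := hEp.to_le inf_le_right
    obtain ⟨n, hn⟩ := IsPGroup.iff_card.mp hp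
    have hc := Nat.Coprime.coprime_dvd_left (Subgroup.card_dvd_of_le hle) hKint
    have hc' := Nat.Coprime.pow_right n hc
    rw [← hn, Nat.coprime_self] at hc'
    exact Subgroup.card_eq_one.mp hc'
  · ext y
    constructor
    · rintro ⟨d, hd, e, he, rfl⟩
      exact mul_mem hd.1 (hP he)
    · intro hy
      have h1 : (QuotientGroup.mk' X) y ∈ K.map (QuotientGroup.mk' X) := by
        rw [← hS, ← hPS]; exact ⟨y, hy, rfl⟩
      obtain ⟨k, hk, hky⟩ := h1
      obtain ⟨e, he, hek⟩ := hEmap k hk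
      refine ⟨y * e⁻¹, ⟨(P : Subgroup Y).mul_mem hy ((P : Subgroup Y).inv_mem (hP he)), ?_⟩, e, he, by simp⟩
      have : (QuotientGroup.mk' X) (y * e⁻¹) = 1 := by
        rw [map_mul, map_inv, hek, hky, mul_inv_cancel]
      exact (QuotientGroup.eq_one_iff _).mp this
end
end
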